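/- Every simple graph that contains no K_5 minor and no K_{3,3} minor is planar (Wagner's theorem, one direction of the excluded-minor characterization of planarity). -/

import Mathlib

/-!
A plane embedding is read off from three rankings of the vertices, in the spirit of Schnyder's
theorem on order dimension. A triple of rankings is *valid* (`Wagner.ValidOn`) if for each edge
`uv` every other vertex is above both `u` and `v` in some ranking. Take the three ranks of a vertex
as its coordinates in `ℝ³`, draw `uv` as the path that runs from `u` to the join `u ∨ v` (the
coordinatewise maximum) and from there to `v`, and project along `(1, 1, 1)`. Two points of the
drawing with the same image that are not equal differ by a positive amount in all coordinates, so
that a vertex would lie strictly below the join of an edge, which validity forbids. Hence the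
projected paths do not cross (`ValidOn.isPlanar`).

Valid rankings of a graph without `K₅` and `K₃,₃` minors are constructed by induction on the number
of vertices, with a stronger claim: two adjacent vertices, or the vertices of a triangle whose
removal leaves a connected graph, can be prescribed as the top vertices of different rankings
(`Inst`, `Solved`). There are two induction steps.

* If a side `K` of a separation of order at most three contains no root (`Red`), both sides are
  completed by a clique on the boundary. This does not create a forbidden minor, since the
  boundary of a separation of least order is attached to a connected set on either side
  (`Good.torso`). The rankings of `K`, with the boundary vertices as roots, are inserted as blocks
  into the rankings of the outer side (`glue`, `Red.solved`).

* Otherwise some neighbour `x` of the root `a = e 0` is contracted into `a`. In the rankings of the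
  contracted graph, the neighbours of `a` and of `x` lie on the outer boundary of the graph without
  `a` and `x`, which is ordered by the ranking `1`. If no neighbour of `a` lies strictly between two
  neighbours of `x`, then `x` can be inserted (`split`). Otherwise neighbours of `a` and of `x`
  alternate along the boundary, or `a` and `x` have three common neighbours, or the graph falls
  apart when the roots are removed. The last case is excluded by the assumption on the roots, and
  the second one gives a `K₅` minor (`no_three_common`). In the first case, the 2-connectedness of
  the graph without `a` and `x` yields either a `K₃,₃` minor or two disjoint connected sets which
  join alternating pairs of boundary vertices (`TwoConn.four`), and the latter is impossible in a
  graph with valid rankings (`ValidOn.no_cross`). The whole step is `expand`.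
-/

/-- `H` is a minor of `G`: there are pairwise disjoint nonempty connected
branch sets in `G`, one for each vertex of `H`, with an edge of `G` between
the branch sets of any two adjacent vertices of `H`. -/
def SimpleGraph.IsMinor {W V : Type} (H : SimpleGraph W) (G : SimpleGraph V) : Prop :=
  ∃ f : W → Set V,
    (∀ w, (f w).Nonempty) ∧
    (∀ w, ((G.induce (f w)).Connected)) ∧
    (Pairwise fun w₁ w₂ => Disjoint (f w₁) (f w₂)) ∧
    (∀ ⦃w₁ w₂⦄, H.Adj w₁ w₂ → ∃ u ∈ f w₁, ∃ v ∈ f w₂, G.Adj u v)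

/-- A plane embedding of a simple graph. -/
def IsPlanar {V : Type} (G : SimpleGraph V) : Prop :=
  ∃ (p : V → ℝ × ℝ) (γ : G.edgeSet → (Set.Icc (0:ℝ) 1) → ℝ × ℝ),
    Function.Injective p ∧
    (∀ e, Continuous (γ e)) ∧
    (∀ e, Function.Injective (γ e)) ∧
    (∀ e : G.edgeSet, ∃ u v : V, (e : Sym2 V) = s(u, v) ∧
      γ e ⟨0, by norm_num⟩ = p u ∧ γ e ⟨1, by norm_num⟩ = p v) ∧
    (∀ e f : G.edgeSet, e ≠ f → ∀ s t, γ e s = γ f t → γ e s ∈ Set.range p) ∧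
    (∀ e : G.edgeSet, ∀ s, γ e s ∈ Set.range p →
      s = (⟨0, by norm_num⟩ : Set.Icc (0:ℝ) 1) ∨ s = (⟨1, by norm_num⟩ : Set.Icc (0:ℝ) 1))

namespace Wagner

/-! ### Connected sets -/

/-- Preconnectedness of a vertex set in cut form: no nonempty part of `S` is closed under
adjacency inside `S`, other than `S` itself. -/
def Pre {V : Type} (G : SimpleGraph V) (S : Set V) : Prop :=
  ∀ A ⊆ S, A.Nonempty → (∀ u ∈ A, ∀ v ∈ S, G.Adj u v → v ∈ A) → S ⊆ A

/-- Connectedness of a vertex set, in cut form. -/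
def SConn {V : Type} (G : SimpleGraph V) (S : Set V) : Prop := S.Nonempty ∧ Pre G S

/-- The vertex boundary of `K`: the vertices outside `K` with a neighbour in `K`. -/
def bd {V : Type} (G : SimpleGraph V) (K : Set V) : Set V := {t | t ∉ K ∧ ∃ s ∈ K, G.Adj s t}

/-- Two vertices are linked in `S` if a walk that stays inside `S` joins them. -/
def Linked {V : Type} (G : SimpleGraph V) (S : Set V) : V → V → Prop :=
  Relation.ReflTransGen (fun a b => G.Adj a b ∧ a ∈ S ∧ b ∈ S)

section Connectivity
variable {V : Type} {G : SimpleGraph V}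

lemma Linked.symm {S : Set V} {a b : V} (h : Linked G S a b) : Linked G S b a := by
  induction h with
  | refl => exact .refl
  | tail _ h ih => exact .head ⟨h.1.symm, h.2.2, h.2.1⟩ ih

lemma Linked.closed {S A : Set V} {a b : V} (h : Linked G S a b) (ha : a ∈ A)
    (hA : ∀ u ∈ A, ∀ v ∈ S, G.Adj u v → v ∈ A) : b ∈ A := by
  induction h with
  | refl => exact ha
  | tail _ h ih => exact hA _ ih _ h.2.2 h.1

lemma SConn.linked {S : Set V} (h : SConn G S) {a b : V} (ha : a ∈ S) (hb : b ∈ S) :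
    Linked G S a b := by
  have := h.2 {v | v ∈ S ∧ Linked G S a v} (fun v hv => hv.1) ⟨a, ha, .refl⟩
    (fun u hu v hv huv => ⟨hv, hu.2.tail ⟨huv, hu.1, hv⟩⟩)
  exact (this hb).2

lemma sconn_of_linked {S : Set V} {z : V} (hz : z ∈ S) (h : ∀ v ∈ S, Linked G S z v) :
    SConn G S := by
  refine ⟨⟨z, hz⟩, fun A hAS ⟨a, ha⟩ hcl v hv => ?_⟩
  exact Linked.closed ((h a (hAS ha)).symm.trans (h v hv)) ha hcl

/-- The connected component of `z` inside `S`. -/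
lemma exists_comp (G : SimpleGraph V) {S : Set V} {z : V} (hz : z ∈ S) :
    ∃ C ⊆ S, z ∈ C ∧ SConn G C ∧ ∀ u ∈ C, ∀ v ∈ S, G.Adj u v → v ∈ C := by
  refine ⟨{v | v ∈ S ∧ Linked G S z v}, fun v hv => hv.1, ⟨hz, .refl⟩, ?_, ?_⟩
  · refine sconn_of_linked (z := z) ⟨hz, .refl⟩ ?_
    rintro v ⟨hv, hl⟩
    clear hv
    induction hl with
    | refl => exact .refl
    | tail h1 h2 ih => exact ih.tail ⟨h2.1, ⟨h2.2.1, h1⟩, ⟨h2.2.2, h1.tail h2⟩⟩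
  · rintro u ⟨hu, hl⟩ v hv huv
    exact ⟨hv, hl.tail ⟨huv, hu, hv⟩⟩

lemma sconn_iff {S : Set V} : SConn G S ↔ (G.induce S).Connected := by
  constructor
  · intro h
    have : Nonempty S := h.1.to_subtype
    refine ⟨fun u v => ?_⟩
    have key : ∀ w, Linked G S u w → ∃ hw : w ∈ S, (G.induce S).Reachable u ⟨w, hw⟩ := by
      intro w hw
      induction hw with
      | refl => exact ⟨u.2, .refl _⟩
      | tail _ h2 ih =>
        obtain ⟨hb, hr⟩ := ih
        refine ⟨h2.2.2, hr.trans (SimpleGraph.Adj.reachable ?_)⟩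
        exact h2.1
    obtain ⟨_, hr⟩ := key v (h.linked u.2 v.2)
    exact hr
  · intro h
    obtain ⟨z⟩ := h.nonempty
    refine sconn_of_linked z.2 fun v hv => ?_
    obtain ⟨p⟩ := h.preconnected z ⟨v, hv⟩
    have : ∀ (a b : S), (G.induce S).Walk a b → Linked G S a b := by
      intro a b p
      induction p with
      | nil => exact .refl
      | cons h _ ih => exact .head ⟨h, Subtype.property _, Subtype.property _⟩ ih
    exact this _ _ p

lemma sconn_singleton (G : SimpleGraph V) (v : V) : SConn G {v} :=
  sconn_of_linked (z := v) rfl (by rintro w rfl; exact .refl)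

lemma Linked.mono {S T : Set V} (h : S ⊆ T) {a b : V} (hl : Linked G S a b) : Linked G T a b := by
  induction hl with
  | refl => exact .refl
  | tail _ h' ih => exact ih.tail ⟨h'.1, h h'.2.1, h h'.2.2⟩

lemma SConn.union {S T : Set V} (hS : SConn G S) (hT : SConn G T) {u v : V} (hu : u ∈ S)
    (hv : v ∈ T) (huv : G.Adj u v) : SConn G (S ∪ T) := by
  refine sconn_of_linked (z := u) (.inl hu) ?_
  rintro w (hw | hw)
  · exact (hS.linked hu hw).mono Set.subset_union_left
  · exact .head ⟨huv, .inl hu, .inr hv⟩ ((hT.linked hv hw).mono Set.subset_union_right)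

lemma SConn.mono {G' : SimpleGraph V} {S : Set V} (h : SConn G S)
    (hG : ∀ u ∈ S, ∀ v ∈ S, G.Adj u v → G'.Adj u v) : SConn G' S :=
  ⟨h.1, fun A hA hne hcl => h.2 A hA hne fun u hu v hv huv =>
    hcl u hu v hv (hG u (hA hu) v hv huv)⟩

lemma sconn_induce {S : Set V} {A : Set S} (h : SConn (G.induce S) A) :
    SConn G (Subtype.val '' A) := by
  obtain ⟨⟨z, hz'⟩, hz⟩ := h.1
  refine sconn_of_linked (z := z) ⟨⟨z, hz'⟩, hz, rfl⟩ ?_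
  rintro _ ⟨v, hv, rfl⟩
  have key : ∀ w, Linked (G.induce S) A ⟨z, hz'⟩ w → Linked G (Subtype.val '' A) z w := by
    intro w hw
    induction hw with
    | refl => exact .refl
    | tail _ h ih => exact ih.tail ⟨h.1, ⟨_, h.2.1, rfl⟩, ⟨_, h.2.2, rfl⟩⟩
  exact key _ (h.linked hz hv)

end Connectivity

/-! ### Minors -/

section Minors
variable {V : Type} {G : SimpleGraph V}

/-- `G` has neither a `K₅` minor nor a `K₃,₃` minor. -/
def Good (G : SimpleGraph V) : Prop :=
  ¬ (⊤ : SimpleGraph (Fin 5)).IsMinor G ∧ ¬ (completeBipartiteGraph (Fin 3) (Fin 3)).IsMinor G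

lemma isMinor_iff {W : Type} {H : SimpleGraph W} : H.IsMinor G ↔ ∃ f : W → Set V,
    (∀ w, SConn G (f w)) ∧ (∀ w₁ w₂, w₁ ≠ w₂ → Disjoint (f w₁) (f w₂)) ∧
    (∀ w₁ w₂, H.Adj w₁ w₂ → ∃ u ∈ f w₁, ∃ v ∈ f w₂, G.Adj u v) := by
  constructor
  · rintro ⟨f, _, h2, h3, h4⟩
    exact ⟨f, fun w => sconn_iff.2 (h2 w), fun a b h => h3 h, fun a b h => h4 h⟩
  · rintro ⟨f, h2, h3, h4⟩
    exact ⟨f, fun w => (h2 w).1, fun w => sconn_iff.1 (h2 w), fun a b h => h3 a b h,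
      fun a b h => h4 a b h⟩

lemma k33_of (hG : Good G) (L R : Fin 3 → Set V) (hL : ∀ i, SConn G (L i))
    (hR : ∀ i, SConn G (R i)) (hLL : ∀ i j, i ≠ j → Disjoint (L i) (L j))
    (hRR : ∀ i j, i ≠ j → Disjoint (R i) (R j)) (hLR : ∀ i j, Disjoint (L i) (R j))
    (hadj : ∀ i j, ∃ u ∈ L i, ∃ v ∈ R j, G.Adj u v) : False := by
  refine hG.2 (isMinor_iff.2 ⟨Sum.elim L R, ?_, ?_, ?_⟩)
  · rintro (i | i)
    exacts [hL i, hR i]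
  · rintro (i | i) (j | j) h
    · exact hLL i j (by simpa using h)
    · exact hLR i j
    · exact (hLR j i).symm
    · exact hRR i j (by simpa using h)
  · rintro (i | i) (j | j) h
    · simp at h
    · exact hadj i j
    · obtain ⟨u, hu, v, hv, huv⟩ := hadj j i
      exact ⟨v, hv, u, hu, huv.symm⟩
    · simp at h

lemma k5_of (hG : Good G) (A : Fin 3 → Set V) (B C : Set V) (hA : ∀ i, SConn G (A i))
    (hB : SConn G B) (hC : SConn G C) (hAA : ∀ i j, i ≠ j → Disjoint (A i) (A j))
    (hAB : ∀ i, Disjoint (A i) B) (hAC : ∀ i, Disjoint (A i) C) (hBC : Disjoint B C)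
    (aAA : ∀ i j, i ≠ j → ∃ u ∈ A i, ∃ v ∈ A j, G.Adj u v)
    (aAB : ∀ i, ∃ u ∈ A i, ∃ v ∈ B, G.Adj u v) (aAC : ∀ i, ∃ u ∈ A i, ∃ v ∈ C, G.Adj u v)
    (aBC : ∃ u ∈ B, ∃ v ∈ C, G.Adj u v) : False := by
  have sw : ∀ {S T : Set V}, (∃ u ∈ S, ∃ v ∈ T, G.Adj u v) → ∃ u ∈ T, ∃ v ∈ S, G.Adj u v := by
    rintro S T ⟨u, hu, v, hv, huv⟩
    exact ⟨v, hv, u, hu, huv.symm⟩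
  refine hG.1 (isMinor_iff.2 ⟨![A 0, A 1, A 2, B, C], ?_, ?_, ?_⟩)
  · intro w
    fin_cases w
    exacts [hA 0, hA 1, hA 2, hB, hC]
  · intro i j h
    fin_cases i <;> fin_cases j <;> first
      | exact absurd rfl h
      | exact hAA _ _ (by decide)
      | exact hAB _
      | exact hAC _
      | exact hBC
      | exact (hAB _).symm
      | exact (hAC _).symm
      | exact hBC.symm
  · intro i j h
    have h := h.ne
    fin_cases i <;> fin_cases j <;> first
      | exact absurd rfl h
      | exact aAA _ _ (by decide)
      | exact aAB _
      | exact aAC _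
      | exact aBC
      | exact sw (aAB _)
      | exact sw (aAC _)
      | exact sw aBC

/-- The quotient of `G` by `π`: two classes are adjacent when an edge of `G` joins them. If the
fibres of `π` are connected this is a contraction of `G`. -/
def quo {U : Type} (G : SimpleGraph V) (π : V → U) : SimpleGraph U where
  Adj a b := a ≠ b ∧ ∃ u v, π u = a ∧ π v = b ∧ G.Adj u v
  symm := ⟨fun _ _ ⟨h, u, v, hu, hv, huv⟩ => ⟨h.symm, v, u, hv, hu, huv.symm⟩⟩
  loopless := ⟨fun _ h => h.1 rfl⟩

lemma quo_quo {U W : Type} (G : SimpleGraph V) (π : V → U) (ρ : U → W) :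
    quo (quo G π) ρ = quo G (ρ ∘ π) := by
  ext a b
  constructor
  · rintro ⟨h, u, v, rfl, rfl, _, u', v', rfl, rfl, h'⟩
    exact ⟨h, u', v', rfl, rfl, h'⟩
  · rintro ⟨h, u, v, rfl, rfl, h'⟩
    refine ⟨h, π u, π v, rfl, rfl, ?_, u, v, rfl, rfl, h'⟩
    intro h2
    exact h (congrArg ρ h2)

lemma sconn_preimage {U : Type} {π : V → U} (hπ : ∀ u, SConn G (π ⁻¹' {u})) {A : Set U}
    (hA : SConn (quo G π) A) : SConn G (π ⁻¹' A) := by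
  have hlift : ∀ a b, π a = π b → π a ∈ A → Linked G (π ⁻¹' A) a b := by
    intro a b hab ha
    refine ((hπ (π a)).linked rfl hab.symm).mono ?_
    rintro w hw
    have : π w = π a := hw
    rw [Set.mem_preimage, this]; exact ha
  obtain ⟨u0, hu0⟩ := hA.1
  obtain ⟨v0, hv0⟩ := (hπ u0).1
  have hv0 : π v0 = u0 := hv0
  refine sconn_of_linked (z := v0) (by simpa [hv0] using hu0) ?_
  have key : ∀ u, Linked (quo G π) A u0 u → ∀ v, π v = u → Linked G (π ⁻¹' A) v0 v := by
    intro u hu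
    induction hu with
    | refl => intro v hv; exact hlift _ _ (hv0.trans hv.symm) (by rw [hv0]; exact hu0)
    | tail _ h2 ih =>
      intro v hv
      obtain ⟨⟨_, p, q, hp, hq, hpq⟩, h3, h4⟩ := h2
      refine ((ih p hp).tail ⟨hpq, ?_, ?_⟩).trans (hlift q v (hq.trans hv.symm) ?_)
      · rw [Set.mem_preimage, hp]; exact h3
      · rw [Set.mem_preimage, hq]; exact h4
      · rw [hq]; exact h4
  intro v hv
  exact key (π v) (hA.linked hu0 hv) v rfl

lemma Good.quo {U : Type} {π : V → U} (hG : Good G) (hπ : ∀ u, SConn G (π ⁻¹' {u})) :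
    Good (quo G π) := by
  have : ∀ {W : Type} (H : SimpleGraph W), H.IsMinor (Wagner.quo G π) → H.IsMinor G := by
    intro W H h
    obtain ⟨f, h1, h2, h3⟩ := isMinor_iff.1 h
    refine isMinor_iff.2 ⟨fun w => π ⁻¹' (f w), fun w => sconn_preimage hπ (h1 w),
      fun a b hab => (h2 a b hab).preimage π, fun a b hab => ?_⟩
    obtain ⟨_, hu, _, hv, _, u, v, rfl, rfl, huv⟩ := h3 a b hab
    exact ⟨u, hu, v, hv, huv⟩
  exact ⟨fun h => hG.1 (this _ h), fun h => hG.2 (this _ h)⟩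

end Minors

/-! ### Torsos -/

/-- The graph induced on `S` together with all edges inside `N`. -/
def torso {V : Type} (G : SimpleGraph V) (S N : Set V) : SimpleGraph S where
  Adj u v := u ≠ v ∧ (G.Adj u v ∨ (u : V) ∈ N ∧ (v : V) ∈ N)
  symm := ⟨fun _ _ h => ⟨h.1.symm, h.2.imp (fun h => h.symm) (fun h => ⟨h.2, h.1⟩)⟩⟩
  loopless := ⟨fun _ h => h.1 rfl⟩

section Torso
variable {V : Type} {G : SimpleGraph V} {S N W : Set V}

/-- A connected set of the torso which uses no virtual edge is connected in `G`. -/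
lemma sconn_of_torso {A : Set S} (hA : SConn (torso G S N) A)
    (h : ∀ p ∈ A, ∀ q ∈ A, (p : V) ∈ N → (q : V) ∈ N → p = q) : SConn G (Subtype.val '' A) := by
  refine sconn_induce (hA.mono ?_)
  rintro u hu v hv ⟨h1, h2 | h2⟩
  · exact h2
  · exact absurd (h u hu v hv h2.1 h2.2) h1

/-- If one branch set `w₀` of a model in the torso is incident with every virtual edge that the
model may use, then adding `W` to this branch set makes it a model in `G`. -/
lemma star_minor {I : Type} {H : SimpleGraph I} (hW : SConn G W) (hWS : Disjoint W S)
    (hNW : ∀ p ∈ N, ∃ w ∈ W, G.Adj p w) (f : I → Set S)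
    (h1 : ∀ w, SConn (torso G S N) (f w)) (h2 : ∀ w₁ w₂, w₁ ≠ w₂ → Disjoint (f w₁) (f w₂))
    (h3 : ∀ w₁ w₂, H.Adj w₁ w₂ → ∃ u ∈ f w₁, ∃ v ∈ f w₂, (torso G S N).Adj u v)
    (w₀ : I) (hs : ∀ w₁ w₂, ∀ p ∈ f w₁, ∀ q ∈ f w₂, (p : V) ∈ N → (q : V) ∈ N → p ≠ q →
      (w₁ = w₂ ∨ H.Adj w₁ w₂) → w₁ = w₀ ∨ w₂ = w₀) : H.IsMinor G := by
  classical
  have hdis : ∀ w₁ w₂, w₁ ≠ w₂ → Disjoint (Subtype.val '' f w₁) (Subtype.val '' f w₂) :=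
    fun a b hab => (Set.disjoint_image_iff Subtype.val_injective).2 (h2 a b hab)
  have hdW : ∀ w, Disjoint (Subtype.val '' f w) W := by
    intro w
    rw [Set.disjoint_left]
    rintro _ ⟨x, _, rfl⟩ hx
    exact Set.disjoint_left.1 hWS hx x.2
  have hc : ∀ w, w ≠ w₀ → SConn G (Subtype.val '' f w) := by
    intro w hw
    refine sconn_of_torso (h1 w) fun p hp q hq hpN hqN => ?_
    by_contra hne
    exact hw ((hs w w p hp q hq hpN hqN hne (.inl rfl)).elim id id)
  by_cases hN : ∃ p ∈ f w₀, (p : V) ∈ N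
  · obtain ⟨p₀, hp₀, hp₀N⟩ := hN
    obtain ⟨x₀, hx₀, hpx₀⟩ := hNW _ hp₀N
    have hc0 : SConn G (Subtype.val '' f w₀ ∪ W) := by
      refine sconn_of_linked (z := (p₀ : V)) (.inl ⟨p₀, hp₀, rfl⟩) ?_
      have hWl : ∀ w ∈ W, Linked G (Subtype.val '' f w₀ ∪ W) (p₀ : V) w := fun w hw =>
        .head ⟨hpx₀, .inl ⟨p₀, hp₀, rfl⟩, .inr hx₀⟩
          ((hW.linked hx₀ hw).mono Set.subset_union_right)
      rintro _ (⟨w, hw, rfl⟩ | hw)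
      · have key : ∀ w, Linked (torso G S N) (f w₀) p₀ w →
            Linked G (Subtype.val '' f w₀ ∪ W) (p₀ : V) w := by
          intro w hw
          induction hw with
          | refl => exact .refl
          | tail _ h ih =>
            rename_i b c _
            obtain ⟨⟨_, h | h⟩, hb, hc⟩ := h
            · exact ih.tail ⟨h, .inl ⟨_, hb, rfl⟩, .inl ⟨_, hc, rfl⟩⟩
            · obtain ⟨y, hy, hcy⟩ := hNW _ h.2
              exact (hWl y hy).tail ⟨hcy.symm, .inr hy, .inl ⟨_, hc, rfl⟩⟩
        exact key w ((h1 w₀).linked hp₀ hw)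
      · exact hWl _ hw
    refine isMinor_iff.2 ⟨fun w => if w = w₀ then Subtype.val '' f w₀ ∪ W else Subtype.val '' f w,
      ?_, ?_, ?_⟩
    · intro w
      dsimp only
      split_ifs with h
      exacts [hc0, hc w h]
    · intro a b hab
      dsimp only
      split_ifs with ha hb hb
      · exact absurd (ha.trans hb.symm) hab
      · subst ha
        exact Set.disjoint_union_left.2 ⟨hdis _ _ hab, (hdW b).symm⟩
      · subst hb
        exact Set.disjoint_union_right.2 ⟨hdis _ _ hab, hdW a⟩
      · exact hdis _ _ hab
    · intro a b hab
      have hsub : ∀ w, Subtype.val '' f w ⊆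
          if w = w₀ then Subtype.val '' f w₀ ∪ W else Subtype.val '' f w := by
        intro w
        split_ifs with h
        · subst h; exact Set.subset_union_left
        · exact subset_rfl
      have hWsub : W ⊆ if w₀ = w₀ then Subtype.val '' f w₀ ∪ W else Subtype.val '' f w₀ := by
        rw [if_pos rfl]; exact Set.subset_union_right
      obtain ⟨u, hu, v, hv, hne, h | h⟩ := h3 a b hab
      · exact ⟨u, hsub a ⟨u, hu, rfl⟩, v, hsub b ⟨v, hv, rfl⟩, h⟩
      · rcases hs a b u hu v hv h.1 h.2 hne (.inr hab) with rfl | rfl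
        · obtain ⟨y, hy, hvy⟩ := hNW _ h.2
          exact ⟨y, hWsub hy, v, hsub b ⟨v, hv, rfl⟩, hvy.symm⟩
        · obtain ⟨y, hy, huy⟩ := hNW _ h.1
          exact ⟨u, hsub a ⟨u, hu, rfl⟩, y, hWsub hy, huy⟩
  · push Not at hN
    refine isMinor_iff.2 ⟨fun w => Subtype.val '' f w, ?_, hdis, ?_⟩
    · intro w
      by_cases h : w = w₀
      · subst h
        exact sconn_of_torso (h1 w) fun p hp q hq hpN hqN => absurd hpN (hN p hp)
      · exact hc w h
    · intro a b hab
      obtain ⟨u, hu, v, hv, hne, h | h⟩ := h3 a b hab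
      · exact ⟨u, ⟨u, hu, rfl⟩, v, ⟨v, hv, rfl⟩, h⟩
      · rcases hs a b u hu v hv h.1 h.2 hne (.inr hab) with rfl | rfl
        · exact absurd h.1 (hN u hu)
        · exact absurd h.2 (hN v hv)

/-- Among three (possibly undefined) vertices of `H` that do not form a triangle, one meets all
pairs of equal or adjacent ones. -/
lemma exists_star {I : Type} [Nonempty I] (H : SimpleGraph I) (a b c : Option I)
    (h : ¬ ∃ x y z, a = some x ∧ b = some y ∧ c = some z ∧ H.Adj x y ∧ H.Adj y z ∧ H.Adj x z) :
    ∃ w₀, ∀ x y, (x = y ∨ H.Adj x y) →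
      (a = some x ∧ b = some y ∨ a = some x ∧ c = some y ∨ b = some x ∧ c = some y) →
      x = w₀ ∨ y = w₀ := by
  have i0 : I := Classical.arbitrary I
  by_contra hno
  push Not at hno
  have k0 := hno i0
  rcases a with _ | x <;> rcases b with _ | y <;> rcases c with _ | z <;> simp at h hno k0
  · have := hno y
    grind
  · have := hno x
    grind
  · have := hno x
    grind
  · have h1 := hno x
    have h2 := hno y
    have h3 := hno z
    have := H.adj_comm x y
    have := H.adj_comm x z
    have := H.adj_comm z y
    grind

/-- With at most three attachments, a minor of the torso is a minor of `G` unless the attachments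
lie in three pairwise adjacent branch sets. -/
lemma torso_minor {I : Type} [Nonempty I] {H : SimpleGraph I} (hW : SConn G W)
    (hWS : Disjoint W S) (hNW : ∀ p ∈ N, ∃ w ∈ W, G.Adj p w) {a b c : V}
    (hN : ∀ p ∈ N, p = a ∨ p = b ∨ p = c) (f : I → Set S)
    (h1 : ∀ w, SConn (torso G S N) (f w)) (h2 : ∀ w₁ w₂, w₁ ≠ w₂ → Disjoint (f w₁) (f w₂))
    (h3 : ∀ w₁ w₂, H.Adj w₁ w₂ → ∃ u ∈ f w₁, ∃ v ∈ f w₂, (torso G S N).Adj u v)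
    (hno : ∀ x y z, a ∈ Subtype.val '' f x → b ∈ Subtype.val '' f y → c ∈ Subtype.val '' f z →
      H.Adj x y → H.Adj y z → H.Adj x z → False) : H.IsMinor G := by
  classical
  have huniq : ∀ p x y, p ∈ f x → p ∈ f y → x = y := by
    intro p x y hx hy
    by_contra hne
    exact Set.disjoint_left.1 (h2 x y hne) hx hy
  obtain ⟨g, hg, hg2⟩ : ∃ g : V → Option I, (∀ v x, g v = some x → v ∈ Subtype.val '' f x) ∧
      ∀ (p : S) x, p ∈ f x → g p = some x := by
    refine ⟨fun v => if h : ∃ x, v ∈ Subtype.val '' f x then some h.choose else none, ?_, ?_⟩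
    · intro v x h
      by_cases h' : ∃ x, v ∈ Subtype.val '' f x
      · simp only [dif_pos h'] at h
        obtain rfl := Option.some.inj h
        exact h'.choose_spec
      · simp only [dif_neg h'] at h
        exact absurd h (by simp)
    · intro p x hp
      have h' : ∃ x, (p : V) ∈ Subtype.val '' f x := ⟨x, p, hp, rfl⟩
      simp only [dif_pos h']
      obtain ⟨q, hq, hqp⟩ := h'.choose_spec
      rw [Subtype.ext hqp] at hq
      rw [huniq p _ _ hq hp]
  obtain ⟨w₀, hw₀⟩ := exists_star H (g a) (g b) (g c) (by
    rintro ⟨x, y, z, hx, hy, hz, h⟩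
    exact hno x y z (hg _ _ hx) (hg _ _ hy) (hg _ _ hz) h.1 h.2.1 h.2.2)
  refine star_minor hW hWS hNW f h1 h2 h3 w₀ ?_
  intro x y p hp q hq hpN hqN hne hxy
  have gp := hg2 p x hp
  have gq := hg2 q y hq
  have hne' : (p : V) ≠ q := fun h => hne (Subtype.ext h)
  have hyx : y = x ∨ H.Adj y x := hxy.imp Eq.symm fun h => h.symm
  have k1 := hw₀ x y hxy
  have k2 := hw₀ y x hyx
  rcases hN _ hpN with h | h | h <;> rcases hN _ hqN with h' | h' | h' <;> rw [h] at gp hne' <;>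
    rw [h'] at gq hne' <;> first
      | exact absurd rfl hne'
      | exact k1 (.inl ⟨gp, gq⟩)
      | exact k1 (.inr (.inl ⟨gp, gq⟩))
      | exact k1 (.inr (.inr ⟨gp, gq⟩))
      | exact (k2 (.inl ⟨gq, gp⟩)).symm
      | exact (k2 (.inr (.inl ⟨gq, gp⟩))).symm
      | exact (k2 (.inr (.inr ⟨gq, gp⟩))).symm

/-- A torso on at most three attachment vertices has no new `K₅` or `K₃,₃` minor. Since `K₃,₃` has
no triangle, `torso_minor` applies to it. In a model of `K₅` three branch sets may contain the
attachments, but these and the remaining two branch sets, together with `W`, form a model of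
`K₃,₃`. -/
lemma Good.torso (hG : Good G) (hW : SConn G W) (hWS : Disjoint W S)
    (hNW : ∀ p ∈ N, ∃ w ∈ W, G.Adj p w) {a b c : V}
    (hN : ∀ p ∈ N, p = a ∨ p = b ∨ p = c) : Good (torso G S N) := by
  constructor
  · intro h
    obtain ⟨f, h1, h2, h3⟩ := isMinor_iff.1 h
    refine hG.1 (torso_minor hW hWS hNW hN f h1 h2 h3 ?_)
    intro x y z hx hy hz hxy hyz hxz
    obtain ⟨a', ha, rfl⟩ := hx
    obtain ⟨b', hb, rfl⟩ := hy
    obtain ⟨c', hc, rfl⟩ := hz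
    have hex : ∀ x y z : Fin 5, x ≠ y → y ≠ z → x ≠ z → ∃ s t : Fin 5, s ≠ t ∧ s ≠ x ∧ s ≠ y ∧
        s ≠ z ∧ t ≠ x ∧ t ≠ y ∧ t ≠ z := by decide
    have hxy := hxy.ne
    have hyz := hyz.ne
    have hxz := hxz.ne
    obtain ⟨s, t, hst, hsx, hsy, hsz, htx, hty, htz⟩ := hex x y z hxy hyz hxz
    have huniq : ∀ p x y, p ∈ f x → p ∈ f y → x = y := by
      intro p x y hx hy
      by_contra hne
      exact Set.disjoint_left.1 (h2 x y hne) hx hy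
    by_cases hall : (a' : V) ∈ N ∧ (b' : V) ∈ N ∧ (c' : V) ∈ N
    swap
    -- one of the three points is not in `N`, so `N` meets at most two branch sets
    · refine hG.1 ?_
      by_cases hA : (a' : V) ∈ N
      · refine star_minor hW hWS hNW f h1 h2 h3 x ?_
        intro w₁ w₂ p hp q hq hpN hqN hne _
        have e1 := hN p hpN
        have e2 := hN q hqN
        have i1 : (p : V) ≠ q := fun h => hne (Subtype.ext h)
        have j1 : p = a' → w₁ = x := fun h => huniq p _ _ hp (h ▸ ha)
        have j2 : q = a' → w₂ = x := fun h => huniq q _ _ hq (h ▸ ha)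
        simp only [← Subtype.ext_iff] at e1 e2
        grind
      · refine star_minor hW hWS hNW f h1 h2 h3 y ?_
        intro w₁ w₂ p hp q hq hpN hqN hne _
        have e1 := hN p hpN
        have e2 := hN q hqN
        have i1 : (p : V) ≠ q := fun h => hne (Subtype.ext h)
        have j1 : p = b' → w₁ = y := fun h => huniq p _ _ hp (h ▸ hb)
        have j2 : q = b' → w₂ = y := fun h => huniq q _ _ hq (h ▸ hb)
        simp only [← Subtype.ext_iff] at e1 e2
        grind
    · obtain ⟨haN, hbN, hcN⟩ := hall
      have hNf : ∀ p : S, (p : V) ∈ N → p = a' ∨ p = b' ∨ p = c' := by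
        intro p hp
        simpa only [← Subtype.ext_iff] using hN p hp
      have hfs : ∀ w, w ≠ x → w ≠ y → w ≠ z → ∀ p ∈ f w, (p : V) ∉ N := by
        intro w h1 h2 h3 p hp hpN
        rcases hNf p hpN with rfl | rfl | rfl
        · exact h1 (huniq _ _ _ hp ha)
        · exact h2 (huniq _ _ _ hp hb)
        · exact h3 (huniq _ _ _ hp hc)
      have hc1 : ∀ w, SConn G (Subtype.val '' f w) := by
        intro w
        refine sconn_of_torso (h1 w) fun p hp q hq hpN hqN => ?_
        have u1 := huniq a' w x
        have u2 := huniq b' w y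
        have u3 := huniq c' w z
        rcases hNf p hpN with rfl | rfl | rfl <;> rcases hNf q hqN with rfl | rfl | rfl <;> grind
      have hdis : ∀ w₁ w₂, w₁ ≠ w₂ → Disjoint (Subtype.val '' f w₁) (Subtype.val '' f w₂) :=
        fun a b hab => (Set.disjoint_image_iff Subtype.val_injective).2 (h2 a b hab)
      have hdW : ∀ w, Disjoint W (Subtype.val '' f w) := by
        intro w
        rw [Set.disjoint_right]
        rintro _ ⟨x, _, rfl⟩ hx
        exact Set.disjoint_left.1 hWS hx x.2
      have had : ∀ w w', w ≠ w' → w ≠ x → w ≠ y → w ≠ z → ∃ u ∈ Subtype.val '' f w,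
          ∃ v ∈ Subtype.val '' f w', G.Adj u v := by
        intro w w' hne e1 e2 e3
        obtain ⟨u, hu, v, hv, _, h | h⟩ := h3 w w' hne
        · exact ⟨u, ⟨u, hu, rfl⟩, v, ⟨v, hv, rfl⟩, h⟩
        · exact absurd h.1 (hfs w e1 e2 e3 u hu)
      have haW : ∀ (p : S) w, (p : V) ∈ N → p ∈ f w →
          ∃ u ∈ W, ∃ v ∈ Subtype.val '' f w, G.Adj u v := by
        intro p w hpN hpw
        obtain ⟨y, hy, h⟩ := hNW p hpN
        exact ⟨y, hy, p, ⟨p, hpw, rfl⟩, h.symm⟩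
      refine k33_of hG ![Subtype.val '' f s, Subtype.val '' f t, W]
        ![Subtype.val '' f x, Subtype.val '' f y, Subtype.val '' f z] ?_ ?_ ?_ ?_ ?_ ?_
      · intro i; fin_cases i
        exacts [hc1 _, hc1 _, hW]
      · intro i; fin_cases i
        exacts [hc1 _, hc1 _, hc1 _]
      · intro i j h
        fin_cases i <;> fin_cases j <;> first
          | exact absurd rfl h
          | exact hdis _ _ hst
          | exact hdis _ _ hst.symm
          | exact hdW _
          | exact (hdW _).symm
      · intro i j h
        fin_cases i <;> fin_cases j <;> first
          | exact absurd rfl h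
          | exact hdis _ _ (by assumption)
          | exact hdis _ _ (Ne.symm (by assumption))
      · intro i j
        fin_cases i <;> fin_cases j <;> first
          | exact hdis _ _ (by assumption)
          | exact hdW _
      · intro i j
        fin_cases i <;> fin_cases j <;> first
          | exact had _ _ (by assumption) (by assumption) (by assumption) (by assumption)
          | exact haW a' _ haN ha
          | exact haW b' _ hbN hb
          | exact haW c' _ hcN hc
  · intro h
    obtain ⟨f, h1, h2, h3⟩ := isMinor_iff.1 h
    refine hG.2 (torso_minor hW hWS hNW hN f h1 h2 h3 ?_)
    rintro (x | x) (y | y) (z | z) _ _ _ hxy hyz hxz <;> simp at hxy hyz hxz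

end Torso

/-! ### Contractions and 2-connected graphs -/

section Contract
variable {V : Type} {G : SimpleGraph V}

open Classical in
/-- The map that merges the vertex `x` into the vertex `a`. -/
noncomputable def contr {x a : V} (h : a ≠ x) (v : V) : {v : V // v ≠ x} :=
  if hv : v = x then ⟨a, h⟩ else ⟨v, hv⟩

lemma contr_self {x a : V} (h : a ≠ x) : contr h x = ⟨a, h⟩ := by simp [contr]

lemma contr_of_ne {x a v : V} (h : a ≠ x) (hv : v ≠ x) : contr h v = ⟨v, hv⟩ := by
  simp [contr, hv]

lemma contr_fibre {x a : V} (h : a ≠ x) : contr h ⁻¹' {⟨a, h⟩} = {a, x} := by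
  ext v
  by_cases hv : v = x
  · subst hv; simp [contr_self]
  · simp [contr_of_ne h hv, hv]

lemma contr_fibre_of_ne {x a c : V} (h : a ≠ x) (hc : c ≠ x) (hca : c ≠ a) :
    contr h ⁻¹' {⟨c, hc⟩} = {c} := by
  ext v
  by_cases hv : v = x
  · subst hv; simp [contr_self, hca.symm, hc.symm]
  · simp [contr_of_ne h hv]

lemma contr_surj {x a : V} (h : a ≠ x) : Function.Surjective (contr h) :=
  fun c => ⟨c.1, contr_of_ne h c.2⟩

lemma sconn_pair {a x : V} (h : G.Adj a x) : SConn G {a, x} := by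
  have := (sconn_singleton G a).union (sconn_singleton G x) rfl rfl h
  rwa [Set.singleton_union] at this

lemma contr_sconn {x a : V} (h : a ≠ x) (hax : G.Adj a x) (c : {v : V // v ≠ x}) :
    SConn G (contr h ⁻¹' {c}) := by
  obtain ⟨c, hc⟩ := c
  by_cases hca : c = a
  · subst hca
    rw [contr_fibre]
    exact sconn_pair hax
  · rw [contr_fibre_of_ne h hc hca]
    exact sconn_singleton _ _

lemma quo_pre {U : Type} {π : V → U} (hπ : Function.Surjective π) {S : Set U}
    (h : Pre G (π ⁻¹' S)) : Pre (quo G π) S := by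
  rintro A hA ⟨a, ha⟩ hcl
  obtain ⟨v, rfl⟩ := hπ a
  have := h (π ⁻¹' A) (Set.preimage_mono hA) ⟨v, ha⟩ (by
    intro u hu v hv huv
    by_cases he : π u = π v
    · have hu : π u ∈ A := hu
      rw [he] at hu
      exact hu
    · exact hcl _ hu _ hv ⟨he, u, v, rfl, rfl, huv⟩)
  intro u hu
  obtain ⟨v, rfl⟩ := hπ u
  exact this hu

end Contract

/-- No single vertex separates `D`. -/
def TwoConn {V : Type} (D : SimpleGraph V) : Prop := ∀ c, Pre D {c}ᶜ

section TwoConn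
variable {V : Type} {D : SimpleGraph V}

lemma TwoConn.exists_adj (hD : TwoConn D) {i c z : V} (hic : i ≠ c) (hzi : z ≠ i) (hzc : z ≠ c) :
    ∃ j, j ≠ c ∧ D.Adj i j := by
  by_contra hno
  push Not at hno
  have := hD c {i} (by simpa using hic.symm) ⟨i, rfl⟩ (by
    rintro u rfl v hv huv
    exact absurd huv (hno v hv))
  exact hzi (this hzc)

/-- A vertex `w` of a 2-connected graph has a neighbour `y` such that `{w, y}` does not separate the
graph: if a set `K` is as small as possible among the sides of separations by pairs `{w, c}`, then
any neighbour of `w` in `K` will do. -/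
lemma TwoConn.exists_contractible [Fintype V] (hD : TwoConn D) (w : V)
    (h3 : ∃ z z', z ≠ w ∧ z' ≠ w ∧ z ≠ z') : ∃ y, D.Adj w y ∧ Pre D {w, y}ᶜ := by
  classical
  obtain ⟨z, z', hz, hz', hzz⟩ := h3
  obtain ⟨y₀, _, hy₀⟩ := hD.exists_adj hz.symm hz' hzz.symm
  by_cases hp : Pre D {w, y₀}ᶜ
  · exact ⟨y₀, hy₀, hp⟩
  let P : ℕ → Prop := fun n => ∃ (c : V) (K : Set V), K.ncard = n ∧ K.Nonempty ∧ c ≠ w ∧ c ∉ K ∧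
    w ∉ K ∧ (∀ u ∈ K, ∀ v, D.Adj u v → v ≠ w → v ≠ c → v ∈ K) ∧ ∃ z, z ∉ K ∧ z ≠ w ∧ z ≠ c
  have hP : ∃ n, P n := by
    unfold Pre at hp
    push Not at hp
    obtain ⟨A, hA, hne, hcl, hns⟩ := hp
    obtain ⟨z, hz, hzA⟩ := Set.not_subset.1 hns
    refine ⟨_, y₀, A, rfl, hne, hy₀.ne', fun h => hA h (by simp), fun h => hA h (by simp),
      fun u hu v huv h1 h2 => hcl u hu v (by simp [h1, h2]) huv, z, hzA, ?_, ?_⟩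
    · rintro rfl; exact hz (by simp)
    · rintro rfl; exact hz (by simp)
  obtain ⟨c, K, hKn, hKne, hcw, hcK, hwK, hcl, z₀, hz₀K, hz₀w, hz₀c⟩ := Nat.find_spec hP
  have hmin : ∀ m < K.ncard, ¬ P m := fun m hm => Nat.find_min hP (hKn ▸ hm)
  obtain ⟨y, hyK, hwy⟩ : ∃ y ∈ K, D.Adj w y := by
    by_contra hno
    push Not at hno
    have := hD c K (fun v hv hvc => hcK (by rwa [← (hvc : v = c)])) hKne (by
      intro u hu v hv huv
      by_cases hvw : v = w
      · subst hvw; exact absurd huv.symm (hno u hu)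
      · exact hcl u hu v huv hvw hv)
    exact hwK (this (show w ∈ ({c} : Set V)ᶜ from hcw.symm))
  have hyc : y ≠ c := fun h => hcK (h ▸ hyK)
  refine ⟨y, hwy, ?_⟩
  -- a side `Z` of a separation by `{w, y}` that misses `c`
  have key : ∀ Z : Set V, Z.Nonempty → w ∉ Z → y ∉ Z → c ∉ Z →
      (∀ u ∈ Z, ∀ v, D.Adj u v → v ≠ w → v ≠ y → v ∈ Z) → False := by
    intro Z hZ hwZ hyZ hcZ hZcl
    by_cases hZK : (Z ∩ K).Nonempty
    · refine hmin (Z ∩ K).ncard ?_ ⟨y, Z ∩ K, rfl, hZK, hwy.ne', fun h => hyZ h.1,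
        fun h => hwZ h.1, ?_, c, fun h => hcZ h.1, hcw, hyc.symm⟩
      · exact Set.ncard_lt_ncard ⟨Set.inter_subset_right, fun h => hyZ (h hyK).1⟩ (Set.toFinite _)
      · rintro u ⟨huZ, huK⟩ v huv hvw hvy
        have hvZ := hZcl u huZ v huv hvw hvy
        exact ⟨hvZ, hcl u huK v huv hvw (fun h => hcZ (h ▸ hvZ))⟩
    · have hdis : ∀ u ∈ Z, u ∉ K := fun u hu hK => hZK ⟨u, hu, hK⟩
      have := hD w Z (fun v hv hvw => hwZ (by rwa [← (hvw : v = w)])) hZ (by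
        intro u hu v hv huv
        by_cases hvy : v = y
        · subst hvy
          refine absurd (hcl v hyK u huv.symm ?_ ?_) (hdis u hu)
          · rintro rfl; exact hwZ hu
          · rintro rfl; exact hcZ hu
        · exact hZcl u hu v huv hv hvy)
      exact hyZ (this (show y ∈ ({w} : Set V)ᶜ from hwy.ne'))
  intro Z hZ hZne hZcl
  have hZw : w ∉ Z := fun h => hZ h (by simp)
  have hZy : y ∉ Z := fun h => hZ h (by simp)
  have hZcl' : ∀ u ∈ Z, ∀ v, D.Adj u v → v ≠ w → v ≠ y → v ∈ Z := fun u hu v huv h1 h2 =>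
    hZcl u hu v (by simp [h1, h2]) huv
  by_cases hcZ : c ∈ Z
  · intro v hv
    by_contra hvZ
    have hv' : v ≠ w ∧ v ≠ y := by simpa using hv
    refine key {v | v ∉ Z ∧ v ≠ w ∧ v ≠ y} ⟨v, hvZ, hv'⟩ (fun h => h.2.1 rfl) (fun h => h.2.2 rfl)
      (fun h => h.1 hcZ) ?_
    rintro u ⟨huZ, hu⟩ v' huv h1 h2
    exact ⟨fun h => huZ (hZcl' v' h u huv.symm hu.1 hu.2), h1, h2⟩
  · exact (key Z hZne hZw hZy hcZ hZcl').elim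

/-- A 2-connected graph can be contracted onto any `k ≥ 3` prescribed vertices in such a way that
it remains 2-connected. -/
lemma TwoConn.rooted_minor {k : ℕ} (hk : 3 ≤ k) : ∀ (n : ℕ) (V : Type) [Fintype V]
    (D : SimpleGraph V) (s : Fin k → V), Fintype.card V = n → TwoConn D → Function.Injective s →
    ∃ π : V → Fin k, (∀ i, π (s i) = i) ∧ (∀ i, SConn D (π ⁻¹' {i})) ∧ TwoConn (quo D π) := by
  classical
  intro n
  induction n with
  | zero =>
    intro V _ D s hn
    have := Fintype.card_eq_zero_iff.1 hn
    exact (this.false (s ⟨0, by omega⟩)).elim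
  | succ n ih =>
    intro V _ D s hn hD hs
    by_cases hsur : Function.Surjective s
    · let e := Equiv.ofBijective s ⟨hs, hsur⟩
      have hf : ∀ i, e.symm ⁻¹' {i} = {s i} := by
        intro i
        ext v
        rw [Set.mem_preimage, Set.mem_singleton_iff, Equiv.symm_apply_eq]
        rfl
      refine ⟨e.symm, fun i => e.symm_apply_apply i, fun i => ?_, fun c => ?_⟩
      · rw [hf]; exact sconn_singleton _ _
      · refine quo_pre e.symm.surjective ?_
        rw [Set.preimage_compl, hf]
        exact hD _
    · unfold Function.Surjective at hsur
      push Not at hsur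
      obtain ⟨w, hw⟩ := hsur
      obtain ⟨y, hwy, hy⟩ := hD.exists_contractible w
        ⟨s ⟨0, by omega⟩, s ⟨1, by omega⟩, hw _, hw _, fun h => by simpa using hs h⟩
      have hyw : y ≠ w := hwy.ne'
      have hf := contr_sconn hyw hwy.symm
      obtain ⟨π, h1, h2, h3⟩ := ih {v // v ≠ w} (quo D (contr hyw)) (fun i => ⟨s i, hw i⟩)
        (by rw [Fintype.card_subtype_compl, hn, Fintype.card_subtype_eq]; rfl)
        (by
          rintro ⟨c, hc⟩
          refine quo_pre (contr_surj hyw) ?_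
          rw [Set.preimage_compl]
          by_cases hcy : c = y
          · subst hcy
            rw [contr_fibre, Set.pair_comm]
            exact hy
          · rw [contr_fibre_of_ne hyw hc hcy]
            exact hD _)
        (fun i j h => hs (congrArg Subtype.val h))
      refine ⟨π ∘ contr hyw, fun i => ?_, fun i => ?_, ?_⟩
      · rw [Function.comp_apply, contr_of_ne hyw (hw i), h1]
      · rw [Set.preimage_comp]
        exact sconn_preimage hf (h2 i)
      · rw [← quo_quo]
        exact h3

/-- Three vertices of a 2-connected graph lie in pairwise adjacent disjoint connected sets. -/
lemma TwoConn.three [Fintype V] (hD : TwoConn D) {s : Fin 3 → V} (hs : Function.Injective s) :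
    ∃ F : Fin 3 → Set V, (∀ i, s i ∈ F i) ∧ (∀ i, SConn D (F i)) ∧
      (∀ i j, i ≠ j → Disjoint (F i) (F j)) ∧
      ∀ i j, i ≠ j → ∃ u ∈ F i, ∃ v ∈ F j, D.Adj u v := by
  obtain ⟨π, h1, h2, h3⟩ := TwoConn.rooted_minor le_rfl _ V D s rfl hD hs
  refine ⟨fun i => π ⁻¹' {i}, h1, h2, fun i j hij => ?_, fun i j hij => ?_⟩
  · exact (Set.disjoint_singleton.2 hij).preimage π
  · obtain ⟨c, hci, hcj, hc⟩ : ∃ c, c ≠ i ∧ c ≠ j ∧ ∀ z, z = i ∨ z = j ∨ z = c := by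
      revert i j; decide
    obtain ⟨z, hzc, hz, u, v, hu, hv, huv⟩ := h3.exists_adj hci.symm hij.symm hcj.symm
    rcases hc z with rfl | rfl | rfl
    · exact absurd rfl hz
    · exact ⟨u, hu, v, hv, huv⟩
    · exact absurd rfl hzc

/-- Four vertices of a 2-connected graph lie in disjoint connected sets which are adjacent in
cyclic order, unless the sets of both opposite pairs are adjacent. -/
lemma TwoConn.four [Fintype V] (hD : TwoConn D) {s : Fin 4 → V} (hs : Function.Injective s) :
    ∃ F : Fin 4 → Set V, (∀ i, s i ∈ F i) ∧ (∀ i, SConn D (F i)) ∧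
      (∀ i j, i ≠ j → Disjoint (F i) (F j)) ∧
      (((∃ u ∈ F 0, ∃ v ∈ F 2, D.Adj u v) ∧ (∃ u ∈ F 1, ∃ v ∈ F 3, D.Adj u v)) ∨
       ((∃ u ∈ F 0, ∃ v ∈ F 1, D.Adj u v) ∧ (∃ u ∈ F 1, ∃ v ∈ F 2, D.Adj u v) ∧
        (∃ u ∈ F 2, ∃ v ∈ F 3, D.Adj u v) ∧ (∃ u ∈ F 3, ∃ v ∈ F 0, D.Adj u v))) := by
  obtain ⟨π, h1, h2, h3⟩ := TwoConn.rooted_minor (by norm_num) _ V D s rfl hD hs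
  have hadj : ∀ i j, (quo D π).Adj i j → ∃ u ∈ π ⁻¹' {i}, ∃ v ∈ π ⁻¹' {j}, D.Adj u v := by
    rintro i j ⟨_, u, v, hu, hv, huv⟩
    exact ⟨u, hu, v, hv, huv⟩
  refine ⟨fun i => π ⁻¹' {i}, h1, h2, fun i j hij => ?_, ?_⟩
  · exact (Set.disjoint_singleton.2 hij).preimage π
  generalize quo D π = Q at h3 hadj
  have hnb : ∀ i c z : Fin 4, i ≠ c → z ≠ i → z ≠ c → ∃ j, j ≠ c ∧ Q.Adj i j :=
    fun i c z h1 h2 h3' => h3.exists_adj h1 h2 h3'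
  have hs := fun i j => Q.adj_comm i j
  have hl := fun i => Q.loopless.irrefl i
  have two : ∀ i a b c : Fin 4, (i ≠ a ∧ i ≠ b ∧ i ≠ c ∧ a ≠ b ∧ a ≠ c ∧ b ≠ c) →
      ¬ Q.Adj i c → Q.Adj i a := by
    rintro i a b c ⟨h1, h2, h3, h4, h5, h6⟩ hic
    obtain ⟨j, hj, hij⟩ := hnb i b c h2 h3.symm h6.symm
    have : ∀ i a b c j : Fin 4, (i ≠ a ∧ i ≠ b ∧ i ≠ c ∧ a ≠ b ∧ a ≠ c ∧ b ≠ c) →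
      j = i ∨ j = a ∨ j = b ∨ j = c := by decide
    rcases this i a b c j ⟨h1, h2, h3, h4, h5, h6⟩ with rfl | rfl | rfl | rfl
    · exact absurd hij (hl _)
    · exact hij
    · exact absurd rfl hj
    · exact absurd hij hic
  by_cases h02 : Q.Adj 0 2
  · by_cases h13 : Q.Adj 1 3
    · exact .inl ⟨hadj _ _ h02, hadj _ _ h13⟩
    · have h31 : ¬ Q.Adj 3 1 := fun h => h13 h.symm
      exact .inr ⟨hadj _ _ (two 1 0 2 3 (by decide) h13).symm,
        hadj _ _ (two 1 2 0 3 (by decide) h13), hadj _ _ (two 3 2 0 1 (by decide) h31).symm,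
        hadj _ _ (two 3 0 2 1 (by decide) h31)⟩
  · have h20 : ¬ Q.Adj 2 0 := fun h => h02 h.symm
    exact .inr ⟨hadj _ _ (two 0 1 3 2 (by decide) h02),
      hadj _ _ (two 2 1 3 0 (by decide) h20).symm, hadj _ _ (two 2 3 1 0 (by decide) h20),
      hadj _ _ (two 0 3 1 2 (by decide) h02).symm⟩

end TwoConn

/-! ### Triples of orders and plane drawings -/

/-- Three rankings of the set `S` such that every vertex outside an edge `uv` of `E` is above both
`u` and `v` in some ranking, and no vertex is below another one in all rankings. -/
structure ValidOn {V : Type} (S : Set V) (E : V → V → Prop) (r : Fin 3 → V → ℕ) : Prop where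
  inj : ∀ i, ∀ u ∈ S, ∀ v ∈ S, r i u = r i v → u = v
  edge : ∀ u ∈ S, ∀ v ∈ S, E u v → ∀ z ∈ S, z ≠ u → z ≠ v → ∃ i, r i u < r i z ∧ r i v < r i z
  anti : ∀ u ∈ S, ∀ z ∈ S, z ≠ u → ∃ i, r i u < r i z

section Drawing
variable {V : Type} {G : SimpleGraph V} {r : Fin 3 → V → ℕ}

/-- The point at parameter `l` on the segment from `u` to the join `u ∨ v` in `ℝ³`. -/
noncomputable def half (r : Fin 3 → V → ℕ) (u v : V) (l : ℝ) (i : Fin 3) : ℝ :=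
  r i u + l * max ((r i v : ℝ) - r i u) 0

lemma le_half (u v : V) {l : ℝ} (h0 : 0 ≤ l) (i : Fin 3) : (r i u : ℝ) ≤ half r u v l i := by
  have := mul_nonneg h0 (le_max_right ((r i v : ℝ) - r i u) 0)
  unfold half; linarith

lemma half_le (u v : V) {l : ℝ} (h1 : l ≤ 1) (i : Fin 3) :
    half r u v l i ≤ max (r i u : ℝ) (r i v) := by
  unfold half
  rcases le_total (r i u : ℝ) (r i v) with h | h
  · rw [max_eq_left (by linarith), max_eq_right h]; nlinarith
  · rw [max_eq_right (by linarith), max_eq_left h]; linarith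

/-- No vertex lies strictly below a vertex, or below the join of an edge, in all coordinates. -/
lemma ValidOn.not_strict (hr : ValidOn Set.univ G.Adj r) {u v w : V} (h : G.Adj u v ∨ u = v)
    (hlt : ∀ i, (r i w : ℝ) < max (r i u : ℝ) (r i v)) : False := by
  have hlt' : ∀ i, r i w < max (r i u) (r i v) := fun i => by exact_mod_cast hlt i
  rcases h with h | rfl
  · by_cases hwu : w = u
    · subst hwu
      obtain ⟨i, hi⟩ := hr.anti v trivial w trivial h.ne
      have := hlt' i
      omega
    · by_cases hwv : w = v
      · subst hwv
        obtain ⟨i, hi⟩ := hr.anti u trivial w trivial hwu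
        have := hlt' i
        omega
      · obtain ⟨i, hi⟩ := hr.edge u trivial v trivial h w trivial hwu hwv
        have := hlt' i
        omega
  · by_cases hwu : w = u
    · subst hwu
      simpa using hlt' 0
    · obtain ⟨i, hi⟩ := hr.anti u trivial w trivial hwu
      have := hlt' i
      simp at this
      omega

lemma ValidOn.eq_or (hr : ValidOn Set.univ G.Adj r) {u v w : V} (h : G.Adj u v)
    (hlt : ∀ i, (r i w : ℝ) ≤ max (r i u : ℝ) (r i v)) : w = u ∨ w = v := by
  have hlt' : ∀ i, r i w ≤ max (r i u) (r i v) := fun i => by exact_mod_cast hlt i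
  by_contra hne
  push Not at hne
  obtain ⟨i, hi⟩ := hr.edge u trivial v trivial h w trivial hne.1 hne.2
  have := hlt' i
  omega

/-- The projection of `ℝ³` along the direction `(1, 1, 1)`. -/
def proj (x : Fin 3 → ℝ) : ℝ × ℝ := (x 0 - x 2, x 1 - x 2)

lemma proj_eq {x y : Fin 3 → ℝ} (h : proj x = proj y) : ∃ t, ∀ i, x i = y i + t := by
  have h1 : x 0 - x 2 = y 0 - y 2 := congrArg Prod.fst h
  have h2 : x 1 - x 2 = y 1 - y 2 := congrArg Prod.snd h
  refine ⟨x 2 - y 2, fun i => ?_⟩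
  fin_cases i <;> simp <;> linarith

/-- The projection is injective on the union of all half-edges. -/
lemma ValidOn.half_eq (hr : ValidOn Set.univ G.Adj r) {u v u' v' : V} {l l' : ℝ}
    (h : G.Adj u v ∨ u = v) (h' : G.Adj u' v' ∨ u' = v') (h0 : 0 ≤ l) (h1 : l ≤ 1) (h0' : 0 ≤ l')
    (h1' : l' ≤ 1) (heq : proj (half r u v l) = proj (half r u' v' l')) (i : Fin 3) :
    half r u v l i = half r u' v' l' i := by
  obtain ⟨t, ht⟩ := proj_eq heq
  rcases lt_trichotomy t 0 with h2 | h2 | h2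
  · refine (hr.not_strict (w := u) h' fun i => ?_).elim
    have := le_half (r := r) u v h0 i
    have := half_le (r := r) u' v' h1' i
    have := ht i
    linarith
  · rw [ht i, h2, add_zero]
  · refine (hr.not_strict (w := u') h fun i => ?_).elim
    have := le_half (r := r) u' v' h0' i
    have := half_le (r := r) u v h1 i
    have := ht i
    linarith

lemma ValidOn.exists_gt (hr : ValidOn Set.univ G.Adj r) {u v : V} (h : u ≠ v) :
    ∃ i, (r i u : ℝ) < r i v := by
  obtain ⟨i, hi⟩ := hr.anti u trivial v trivial h.symm
  exact ⟨i, by exact_mod_cast hi⟩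

lemma half_of_lt {u v : V} {i : Fin 3} (h : (r i u : ℝ) < r i v) (l : ℝ) :
    half r u v l i = r i u + l * ((r i v : ℝ) - r i u) := by
  rw [half, max_eq_left (by linarith)]

lemma half_of_ge {u v : V} {i : Fin 3} (h : (r i v : ℝ) ≤ r i u) (l : ℝ) :
    half r u v l i = r i u := by
  rw [half, max_eq_right (by linarith)]; ring

/-- Two half-edges meet only as they should: in a common endpoint, along the same half-edge, or in
the join in which two halves of an edge meet. -/
lemma ValidOn.cross (hr : ValidOn Set.univ G.Adj r) {u v u' v' : V} {l l' : ℝ}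
    (h : G.Adj u v) (h' : G.Adj u' v') (h0 : 0 ≤ l) (h1 : l ≤ 1) (h0' : 0 ≤ l')
    (h1' : l' ≤ 1) (heq : proj (half r u v l) = proj (half r u' v' l')) :
    (u = u' ∧ l = 0 ∧ l' = 0) ∨ (u = u' ∧ v = v' ∧ l = l') ∨
      (u = v' ∧ v = u' ∧ l = 1 ∧ l' = 1) := by
  have he := hr.half_eq (.inl h) (.inl h') h0 h1 h0' h1' heq
  have e1 : u' = u ∨ u' = v := hr.eq_or h fun i =>
    ((le_half u' v' h0' i).trans (he i).ge).trans (half_le u v h1 i)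
  have e2 : u = u' ∨ u = v' := hr.eq_or h' fun i =>
    ((le_half u v h0 i).trans (he i).le).trans (half_le u' v' h1' i)
  by_cases hu : u = u'
  · subst hu
    obtain ⟨i, hi⟩ := hr.exists_gt h.ne
    obtain ⟨j, hj⟩ := hr.exists_gt h'.ne
    by_cases hv : v = v'
    · subst hv
      refine .inr (.inl ⟨rfl, rfl, ?_⟩)
      have := he i
      rw [half_of_lt hi, half_of_lt hi] at this
      exact mul_right_cancel₀ (sub_pos.2 hi).ne' (add_left_cancel this)
    · refine .inl ⟨rfl, ?_⟩
      have pos : ∀ {v v' : V} {l l' : ℝ}, G.Adj u v' → (∀ i, half r u v l i = half r u v' l' i) →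
          l = 0 → l' = 0 := by
        rintro v v' l l' h' he rfl
        obtain ⟨j, hj⟩ := hr.exists_gt h'.ne
        have := he j
        rw [half_of_lt hj] at this
        simp only [half, zero_mul, add_zero] at this
        have h3 : l' * ((r j v' : ℝ) - r j u) = 0 := by linarith
        exact (mul_eq_zero.1 h3).resolve_right (sub_pos.2 hj).ne'
      by_cases hl : l = 0
      · exact ⟨hl, pos h' he hl⟩
      by_cases hl' : l' = 0
      · exact ⟨pos h (fun i => (he i).symm) hl', hl'⟩
      exfalso
      -- of two distinct neighbours, neither lies below the join of `u` and the other one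
      have lt : ∀ {v v' : V} {l l' : ℝ}, G.Adj u v → G.Adj u v' → v ≠ v' → 0 < l → 0 < l' →
          (∀ i, half r u v l i = half r u v' l' i) → l' < l := by
        intro v v' l l' h h' hv hl hl' he
        obtain ⟨i, hi1, hi2⟩ := hr.edge u trivial v trivial h v' trivial h'.ne' (Ne.symm hv)
        have hi1 : (r i u : ℝ) < r i v' := by exact_mod_cast hi1
        have hi2 : (r i v : ℝ) < r i v' := by exact_mod_cast hi2
        have h3 := he i
        rw [half_of_lt hi1] at h3
        have h4 := mul_pos hl' (sub_pos.2 hi1)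
        rcases lt_or_ge (r i u : ℝ) (r i v) with h5 | h5
        · rw [half_of_lt h5] at h3
          nlinarith
        · rw [half_of_ge h5] at h3
          linarith
      have a1 := lt h h' hv (lt_of_le_of_ne h0 (Ne.symm hl)) (lt_of_le_of_ne h0' (Ne.symm hl')) he
      have a2 := lt h' h (Ne.symm hv) (lt_of_le_of_ne h0' (Ne.symm hl'))
        (lt_of_le_of_ne h0 (Ne.symm hl)) (fun i => (he i).symm)
      linarith
  · obtain rfl := e1.resolve_left (Ne.symm hu)
    obtain rfl := e2.resolve_left hu
    refine .inr (.inr ⟨rfl, rfl, ?_, ?_⟩)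
    · obtain ⟨i, hi⟩ := hr.exists_gt h.ne
      have := he i
      rw [half_of_lt hi, half_of_ge hi.le] at this
      have h3 : l * ((r i u' : ℝ) - r i u) = 1 * ((r i u' : ℝ) - r i u) := by linarith
      exact mul_right_cancel₀ (sub_pos.2 hi).ne' h3
    · obtain ⟨i, hi⟩ := hr.exists_gt h.ne'
      have := he i
      rw [half_of_lt hi, half_of_ge hi.le] at this
      have hscaled : l' * ((r i u : ℝ) - r i u') = 1 * ((r i u : ℝ) - r i u') := by linarith
      exact mul_right_cancel₀ (sub_pos.2 hi).ne' hscaled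

/-- The vertex `v` as a point of the plane. -/
noncomputable def pt (r : Fin 3 → V → ℕ) (v : V) : ℝ × ℝ := proj fun i => r i v

lemma half_zero (u v : V) : half r u v 0 = fun i => (r i u : ℝ) := by
  funext i; simp [half]

/-- The edge `uv` as a curve: the projection of the polygonal path from `u` over `u ∨ v` to `v`. -/
noncomputable def arc (r : Fin 3 → V → ℕ) (u v : V) (t : ℝ) : ℝ × ℝ :=
  proj fun i => (r i u : ℝ) + min (2 * t) 1 * (max (r i u : ℝ) (r i v) - r i u)
    + max (2 * t - 1) 0 * ((r i v : ℝ) - max (r i u : ℝ) (r i v))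

lemma arc_continuous (u v : V) : Continuous (arc r u v) := by
  unfold arc proj
  fun_prop

lemma arc_eq (u v : V) {t : ℝ} (h0 : 0 ≤ t) (h1 : t ≤ 1) : ∃ a b l, 0 ≤ l ∧ l ≤ 1 ∧
    arc r u v t = proj (half r a b l) ∧ ((a = u ∧ b = v ∧ l = 2 * t ∧ t ≤ 1 / 2) ∨
      (a = v ∧ b = u ∧ l = 2 - 2 * t ∧ 1 / 2 ≤ t)) := by
  rcases le_total t (1 / 2) with h | h
  · refine ⟨u, v, 2 * t, by linarith, by linarith, ?_, .inl ⟨rfl, rfl, rfl, h⟩⟩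
    unfold arc half
    congr 1
    funext i
    rw [min_eq_left (by linarith), max_eq_right (a := 2 * t - 1) (by linarith), ← max_sub_sub_right,
      sub_self, max_comm]
    ring
  · refine ⟨v, u, 2 - 2 * t, by linarith, by linarith, ?_, .inr ⟨rfl, rfl, rfl, h⟩⟩
    unfold arc half
    congr 1
    funext i
    rw [min_eq_right (by linarith), max_eq_left (a := 2 * t - 1) (by linarith)]
    have : max ((r i u : ℝ) - r i v) 0 = max (r i u : ℝ) (r i v) - r i v := by
      rw [← max_sub_sub_right, sub_self]
    rw [this]
    ring

theorem ValidOn.isPlanar (hr : ValidOn Set.univ G.Adj r) : IsPlanar G := by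
  have hout : ∀ e : G.edgeSet, G.Adj (Quot.out (e : Sym2 V)).1 (Quot.out (e : Sym2 V)).2 := by
    intro e
    have := e.2
    rw [← Quot.out_eq (e : Sym2 V)] at this
    exact this
  have hs : ∀ e : G.edgeSet, (e : Sym2 V) =
      s((Quot.out (e : Sym2 V)).1, (Quot.out (e : Sym2 V)).2) := fun e =>
    (Quot.out_eq (e : Sym2 V)).symm
  choose U W hUW hE using fun e : G.edgeSet =>
    (⟨_, _, hout e, hs e⟩ : ∃ u v, G.Adj u v ∧ (e : Sym2 V) = s(u, v))
  refine ⟨pt r, fun e t => arc r (U e) (W e) t, ?_, ?_, ?_, ?_, ?_, ?_⟩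
  · intro u v huv
    unfold pt at huv
    rw [← half_zero u u, ← half_zero v v] at huv
    have := hr.half_eq (.inr rfl) (.inr rfl) le_rfl zero_le_one le_rfl zero_le_one huv 0
    simp only [half, zero_mul, add_zero] at this
    exact hr.inj 0 u trivial v trivial (by exact_mod_cast this)
  · exact fun e => (arc_continuous _ _).comp continuous_subtype_val
  · rintro e ⟨s, hs⟩ ⟨t, ht⟩ hst
    have hst : arc r (U e) (W e) s = arc r (U e) (W e) t := hst
    obtain ⟨a, b, l, h0, h1, h2, h3⟩ := arc_eq (r := r) (U e) (W e) hs.1 hs.2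
    obtain ⟨a', b', l', h0', h1', h2', h3'⟩ := arc_eq (r := r) (U e) (W e) ht.1 ht.2
    rw [h2, h2'] at hst
    have hne := (hUW e).ne
    have hab : G.Adj a b := by
      rcases h3 with ⟨rfl, rfl, _⟩ | ⟨rfl, rfl, _⟩
      exacts [hUW e, (hUW e).symm]
    have hab' : G.Adj a' b' := by
      rcases h3' with ⟨rfl, rfl, _⟩ | ⟨rfl, rfl, _⟩
      exacts [hUW e, (hUW e).symm]
    have hc := hr.cross hab hab' h0 h1 h0' h1' hst
    rw [Subtype.mk.injEq]
    rcases h3 with ⟨rfl, rfl, h4, h5⟩ | ⟨rfl, rfl, h4, h5⟩ <;>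
      rcases h3' with ⟨rfl, rfl, h4', h5'⟩ | ⟨rfl, rfl, h4', h5'⟩ <;>
      rcases hc with ⟨h6, h7, h8⟩ | ⟨h6, h7, h8⟩ | ⟨h6, h7, h8, h9⟩ <;> first
        | linarith
        | exact absurd h6 hne
        | exact absurd h6.symm hne
  · intro e
    refine ⟨U e, W e, hE e, ?_, ?_⟩
    · show arc r (U e) (W e) 0 = _
      simp [arc, pt]
    · show arc r (U e) (W e) 1 = _
      unfold arc pt
      congr 1
      funext i
      norm_num
  · rintro e f hef ⟨s, hs⟩ ⟨t, ht⟩ hst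
    have hst : arc r (U e) (W e) s = arc r (U f) (W f) t := hst
    show arc r (U e) (W e) s ∈ _
    obtain ⟨a, b, l, h0, h1, h2, h3⟩ := arc_eq (r := r) (U e) (W e) hs.1 hs.2
    obtain ⟨a', b', l', h0', h1', h2', h3'⟩ := arc_eq (r := r) (U f) (W f) ht.1 ht.2
    rw [h2, h2'] at hst
    rw [h2]
    have hab : G.Adj a b ∧ (e : Sym2 V) = s(a, b) := by
      rcases h3 with ⟨rfl, rfl, _⟩ | ⟨rfl, rfl, _⟩
      exacts [⟨hUW e, hE e⟩, ⟨(hUW e).symm, (hE e).trans Sym2.eq_swap⟩]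
    have hab' : G.Adj a' b' ∧ (f : Sym2 V) = s(a', b') := by
      rcases h3' with ⟨rfl, rfl, _⟩ | ⟨rfl, rfl, _⟩
      exacts [⟨hUW f, hE f⟩, ⟨(hUW f).symm, (hE f).trans Sym2.eq_swap⟩]
    rcases hr.cross hab.1 hab'.1 h0 h1 h0' h1' hst with ⟨_, rfl, _⟩ | ⟨rfl, rfl, _⟩ | ⟨rfl, rfl, _⟩
    · rw [half_zero]
      exact ⟨a, rfl⟩
    · exact absurd (Subtype.ext (hab.2.trans hab'.2.symm)) hef
    · exact absurd (Subtype.ext (hab.2.trans (Sym2.eq_swap.trans hab'.2.symm))) hef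
  · rintro e ⟨s, hs⟩ ⟨w, hw⟩
    have hw : pt r w = arc r (U e) (W e) s := hw
    obtain ⟨a, b, l, h0, h1, h2, h3⟩ := arc_eq (r := r) (U e) (W e) hs.1 hs.2
    rw [h2] at hw
    unfold pt at hw
    rw [← half_zero w w] at hw
    have hab : G.Adj a b := by
      rcases h3 with ⟨rfl, rfl, _⟩ | ⟨rfl, rfl, _⟩
      exacts [hUW e, (hUW e).symm]
    have he := hr.half_eq (.inr rfl) (.inl hab) le_rfl zero_le_one h0 h1 hw
    rw [half_zero] at he
    obtain ⟨i, hi⟩ := hr.exists_gt hab.ne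
    have hi' := he i
    rw [half_of_lt hi] at hi'
    have hl : l = 0 := by
      rcases hr.eq_or hab fun i => (he i).le.trans (half_le a b h1 i) with rfl | rfl
      · have h3 : l * ((r i b : ℝ) - r i w) = 0 := by linarith
        exact (mul_eq_zero.1 h3).resolve_right (sub_pos.2 hi).ne'
      · obtain ⟨j, hj⟩ := hr.exists_gt hab.ne'
        have := le_half (r := r) a w h0 j
        rw [← he j] at this
        linarith
    rw [Subtype.mk.injEq, Subtype.mk.injEq]
    rcases h3 with ⟨_, _, h4, _⟩ | ⟨_, _, h4, _⟩
    · left; linarith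
    · right; linarith

end Drawing

/-! ### Disjoint connected sets do not cross -/

section Crossing
variable {V : Type} {D : SimpleGraph V} {r : Fin 3 → V → ℕ}

/-- `s` is visible at time `k`: it is not covered, in the rankings `1` and `2`, by a vertex which
has rank less than `k` in the ranking `0`. -/
def Vis (r : Fin 3 → V → ℕ) (k : ℕ) (s : V) : Prop :=
  r 0 s < k ∧ ∀ w, r 0 w < k → w ≠ s → r 1 s < r 1 w ∨ r 2 s < r 2 w

/-- A walk to `b ≠ z` avoids `z`, or its part after the last visit of `z` does. -/
lemma Linked.last_exit {T : Set V} {a b z : V} (hb : b ≠ z) (h : Linked D T a b) :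
    (a ≠ z ∧ Linked D (T \ {z}) a b) ∨
      ∃ n ∈ T, n ≠ z ∧ D.Adj z n ∧ Linked D (T \ {z}) n b := by
  induction h using Relation.ReflTransGen.head_induction_on with
  | refl => exact .inl ⟨hb, .refl⟩
  | head hac _ ih =>
    rename_i a c _
    rcases ih with ⟨hc, hl⟩ | h
    · by_cases ha : a = z
      · subst ha
        exact .inr ⟨c, hac.2.2, hc, hac.1, hl⟩
      · exact .inl ⟨ha, .head ⟨hac.1, ⟨hac.2.1, ha⟩, ⟨hac.2.2, hc⟩⟩ hl⟩
    · exact .inr h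

/-- Two disjoint connected sets do not alternate along the visible boundary, which is ordered by
the ranking `1`. Proved by adding the vertices in the order given by the ranking `0`. -/
lemma ValidOn.no_cross_aux (hr : ValidOn Set.univ D.Adj r) (k : ℕ) :
    ∀ P Q : Set V, Disjoint P Q → ∀ s ∈ P, ∀ s' ∈ P, ∀ t ∈ Q, ∀ t' ∈ Q, Vis r k s → Vis r k s' →
      Vis r k t → Vis r k t' → Linked D (P ∩ {v | r 0 v < k}) s s' →
      Linked D (Q ∩ {v | r 0 v < k}) t t' →
      ((r 1 t < r 1 s ↔ r 1 t' < r 1 s) ↔ (r 1 t < r 1 s' ↔ r 1 t' < r 1 s')) := by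
  induction k with
  | zero => intro P Q _ s _ s' _ t _ t' _ hs; exact absurd hs.1 (by omega)
  | succ k ih =>
    have hne1 : ∀ {u v : V}, u ≠ v → r 1 u ≠ r 1 v := fun h h' =>
      h (hr.inj 1 _ trivial _ trivial h')
    by_cases hz : ∃ z, r 0 z = k
    swap
    · have hlt : ∀ v, r 0 v < k + 1 ↔ r 0 v < k := by
        intro v
        have : r 0 v ≠ k := fun h => hz ⟨v, h⟩
        omega
      simp only [Vis, hlt]
      exact ih
    obtain ⟨z, hz⟩ := hz
    have hlt : ∀ v, r 0 v < k + 1 → v ≠ z → r 0 v < k := by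
      intro v hv hvz
      have : r 0 v ≠ k := fun h => hvz (hr.inj 0 _ trivial _ trivial (h.trans hz.symm))
      omega
    have hvis : ∀ s, s ≠ z → Vis r (k + 1) s → Vis r k s := fun s hsz hs =>
      ⟨hlt s hs.1 hsz, fun w hw => hs.2 w (by omega)⟩
    have hsub : ∀ T : Set V, (T ∩ {v | r 0 v < k + 1}) \ {z} ⊆ T ∩ {v | r 0 v < k} :=
      fun T v hv => ⟨hv.1.1, hlt v hv.1.2 hv.2⟩
    have hnvis : ∀ n, D.Adj z n → r 0 n < k → Vis r k n := by
      intro n hzn hn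
      refine ⟨hn, fun w hw hwn => ?_⟩
      obtain ⟨i, h1, h2⟩ := hr.edge z trivial n trivial hzn w trivial
        (fun h => by rw [h] at hw; omega) hwn
      fin_cases i
      · simp only [Fin.zero_eta] at h1; omega
      · exact .inl h2
      · exact .inr h2
    -- no other visible vertex separates `z` from a lower neighbour `n` in the ranking `1`, so that
    -- `n` may replace `z` in the comparisons
    have hcmp : ∀ n t, D.Adj z n → r 0 n < k → t ≠ n → t ≠ z → Vis r (k + 1) t →
        (r 1 t < r 1 n ↔ r 1 t < r 1 z) := by
      intro n t hzn hn htn htz ht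
      have a1 := ht.2 z (by omega) htz.symm
      have a2 := ht.2 n (by omega) htn.symm
      have a3 := hlt t ht.1 htz
      obtain ⟨i, h1, h2⟩ := hr.edge z trivial n trivial hzn t trivial htz htn
      fin_cases i
      · simp only [Fin.zero_eta] at h1; omega
      · simp only [Fin.mk_one] at h1 h2; omega
      · simp only [Fin.reduceFinMk] at h1 h2; omega
    -- it suffices to consider the case that `z` is outside `Q`
    have main : ∀ P Q : Set V, z ∉ Q → Disjoint P Q → ∀ s ∈ P, ∀ s' ∈ P, ∀ t ∈ Q, ∀ t' ∈ Q,
        Vis r (k + 1) s → Vis r (k + 1) s' → Vis r (k + 1) t → Vis r (k + 1) t' →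
        Linked D (P ∩ {v | r 0 v < k + 1}) s s' → Linked D (Q ∩ {v | r 0 v < k + 1}) t t' →
        ((r 1 t < r 1 s ↔ r 1 t' < r 1 s) ↔ (r 1 t < r 1 s' ↔ r 1 t' < r 1 s')) := by
      intro P Q hzQ hPQ s hs s' hs' t ht t' ht' vs vs' vt vt' ls lt
      have htz : t ≠ z := fun h => hzQ (h ▸ ht)
      have htz' : t' ≠ z := fun h => hzQ (h ▸ ht')
      have lt' : Linked D (Q ∩ {v | r 0 v < k}) t t' :=
        Linked.mono (S := Q ∩ {v | r 0 v < k + 1}) (T := Q ∩ {v | r 0 v < k})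
          (fun v hv => ⟨hv.1, hlt v hv.2 (fun h => hzQ (h ▸ hv.1))⟩) lt
      have step : ∀ s₁ ∈ P, ∀ s₂ ∈ P, Vis r k s₁ → Vis r k s₂ →
          Linked D (P ∩ {v | r 0 v < k}) s₁ s₂ →
          ((r 1 t < r 1 s₁ ↔ r 1 t' < r 1 s₁) ↔ (r 1 t < r 1 s₂ ↔ r 1 t' < r 1 s₂)) :=
        fun s₁ h1 s₂ h2 v1 v2 l => ih P Q hPQ s₁ h1 s₂ h2 t ht t' ht' v1 v2
          (hvis t htz vt) (hvis t' htz' vt') l lt'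
      have toz : ∀ s ∈ P, s ≠ z → Vis r (k + 1) s → ∀ n ∈ P ∩ {v | r 0 v < k + 1}, n ≠ z →
          D.Adj z n → Linked D ((P ∩ {v | r 0 v < k + 1}) \ {z}) n s →
          ((r 1 t < r 1 z ↔ r 1 t' < r 1 z) ↔ (r 1 t < r 1 s ↔ r 1 t' < r 1 s)) := by
        intro s hs hsz vs n hn hnz hzn l
        have hn' := hlt n hn.2 hnz
        have := step n hn.1 s hs (hnvis n hzn hn') (hvis s hsz vs) (l.mono (hsub P))
        rw [hcmp n t hzn hn' (fun h => Set.disjoint_left.1 hPQ hn.1 (h ▸ ht)) htz vt,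
          hcmp n t' hzn hn' (fun h => Set.disjoint_left.1 hPQ hn.1 (h ▸ ht')) htz' vt'] at this
        exact this
      by_cases hsz : s = z <;> by_cases hsz' : s' = z
      · rw [hsz, hsz']
      · rcases ls.last_exit hsz' with ⟨h, _⟩ | ⟨n, hn, hnz, hzn, l⟩
        · exact absurd hsz h
        · rw [hsz]
          exact toz s' hs' hsz' vs' n hn hnz hzn l
      · rcases ls.symm.last_exit hsz with ⟨h, _⟩ | ⟨n, hn, hnz, hzn, l⟩
        · exact absurd hsz' h
        · rw [hsz']
          exact (toz s hs hsz vs n hn hnz hzn l).symm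
      · rcases ls.last_exit hsz' with ⟨_, h⟩ | ⟨n, hn, hnz, hzn, l⟩
        · exact step s hs s' hs' (hvis s hsz vs) (hvis s' hsz' vs') (h.mono (hsub P))
        · rcases ls.symm.last_exit hsz with ⟨_, h⟩ | ⟨n', hn', hnz', hzn', l'⟩
          · exact (step s' hs' s hs (hvis s' hsz' vs') (hvis s hsz vs) (h.mono (hsub P))).symm
          · exact (toz s hs hsz vs n' hn' hnz' hzn' l').symm.trans
              (toz s' hs' hsz' vs' n hn hnz hzn l)
    intro P Q hPQ s hs s' hs' t ht t' ht' vs vs' vt vt' ls lt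
    by_cases hzQ : z ∈ Q
    · have hzP : z ∉ P := fun h => Set.disjoint_left.1 hPQ h hzQ
      have := main Q P hzP hPQ.symm t ht t' ht' s hs s' hs' vt vt' vs vs' lt ls
      have d : ∀ {s t : V}, s ∈ P → t ∈ Q → r 1 t ≠ r 1 s := fun {s t} hs ht =>
        hne1 fun h => Set.disjoint_left.1 hPQ hs (h ▸ ht)
      have d1 := d hs ht
      have d2 := d hs ht'
      have d3 := d hs' ht
      have d4 := d hs' ht'
      omega
    · exact main P Q hzQ hPQ s hs s' hs' t ht t' ht' vs vs' vt vt' ls lt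

/-- Vertices `s < t < s' < t'` of the boundary of `D` cannot be joined, `s` to `s'` and `t` to
`t'`, by disjoint connected sets. -/
lemma ValidOn.no_cross (hr : ValidOn Set.univ D.Adj r) [Finite V] {P Q : Set V} (hP : SConn D P)
    (hQ : SConn D Q) (hPQ : Disjoint P Q) {s s' t t' : V} (hs : s ∈ P) (hs' : s' ∈ P) (ht : t ∈ Q)
    (ht' : t' ∈ Q) (hB : ∀ v ∈ ({s, s', t, t'} : Set V), ∀ w, w ≠ v → r 1 v < r 1 w ∨ r 2 v < r 2 w)
    (h1 : r 1 s < r 1 t) (h2 : r 1 t < r 1 s') (h3 : r 1 s' < r 1 t') : False := by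
  obtain ⟨M, hM⟩ := (Set.finite_range (r 0)).bddAbove
  have hM' : ∀ v, r 0 v < M + 1 := fun v => Nat.lt_succ_of_le (hM ⟨v, rfl⟩)
  have hv : ∀ v ∈ ({s, s', t, t'} : Set V), Vis r (M + 1) v := fun v hv =>
    ⟨hM' v, fun w _ hw => hB v hv w hw⟩
  have hsub : ∀ T : Set V, T ⊆ T ∩ {v | r 0 v < M + 1} := fun T v hv => ⟨hv, hM' v⟩
  have := hr.no_cross_aux (M + 1) P Q hPQ s hs s' hs' t ht t' ht' (hv _ (by simp))
    (hv _ (by simp)) (hv _ (by simp)) (hv _ (by simp)) ((hP.linked hs hs').mono (hsub P))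
    ((hQ.linked ht ht').mono (hsub Q))
  omega

end Crossing

/-! ### Uncontracting an edge -/

section Split
variable {V : Type} {G : SimpleGraph V} {r : Fin 3 → V → ℕ}

lemma exists_three {p : Fin 3 → Prop} : (∃ i, p i) ↔ p 0 ∨ p 1 ∨ p 2 := by
  constructor
  · rintro ⟨i, hi⟩
    fin_cases i
    exacts [.inl hi, .inr (.inl hi), .inr (.inr hi)]
  · rintro (h | h | h)
    exacts [⟨_, h⟩, ⟨_, h⟩, ⟨_, h⟩]

/-- Suppose that `x` has been contracted into `a`, the top vertex of the ranking `0` of the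
contracted graph. If the neighbours of `x` and of `a` are separated as described by `l` and `ρ`
along the rankings `1` and `2`, then the rankings lift to `G`: the vertex `a` goes to the bottom
of the rankings `1` and `2`, and `x` is inserted just above `l`, just above `ρ` and just
below `a` in the rankings `1`, `2` and `0`. -/
lemma split {a x l ρ : V} (hax : a ≠ x)
    (hr : ValidOn {x}ᶜ (fun u v => G.Adj u v ∨ (u = a ∧ G.Adj x v) ∨ (v = a ∧ G.Adj u x)) r)
    (ha : ∀ v, v ≠ a → v ≠ x → r 0 v < r 0 a)
    (hl : l ≠ a ∧ l ≠ x ∧ (G.Adj a l ∨ G.Adj x l)) (hρ : ρ ≠ a ∧ ρ ≠ x ∧ (G.Adj a ρ ∨ G.Adj x ρ))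
    (h1 : r 1 l < r 1 ρ) (h2 : r 2 ρ < r 2 l)
    (hB : ∀ b, b ≠ a → G.Adj x b → r 1 l ≤ r 1 b ∧ r 2 ρ ≤ r 2 b)
    (hA : ∀ b, b ≠ x → G.Adj a b → r 1 b ≤ r 1 l ∨ r 2 b ≤ r 2 ρ) :
    ∃ R : Fin 3 → V → ℕ, ValidOn Set.univ G.Adj R ∧ (∀ v, v ≠ a → R 0 v < R 0 a) ∧
      ∀ i, i ≠ 0 → ∀ e, e ≠ x → e ≠ a → (∀ v, v ≠ e → v ≠ x → r i v < r i e) →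
        ∀ v, v ≠ e → R i v < R i e := by
  classical
  -- since `a` is on top of the ranking `0`, the neighbours of `a` in the contracted graph are
  -- minimal with respect to the rankings `1` and `2`
  have fact : ∀ v, v ≠ a → v ≠ x → (G.Adj a v ∨ G.Adj x v) → ∀ z, z ≠ a → z ≠ x → z ≠ v →
      r 1 v < r 1 z ∨ r 2 v < r 2 z := by
    intro v hva hvx hv z hza hzx hzv
    have := hr.edge a hax v hvx (hv.imp id fun h => .inl ⟨rfl, h⟩) z hzx hza hzv
    rw [exists_three] at this
    have := ha z hza hzx
    omega
  have hx : ∀ z, z ≠ a → z ≠ x → r 1 l < r 1 z ∨ r 2 ρ < r 2 z := by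
    intro z hza hzx
    by_cases hz : z = l
    · subst hz; exact .inr h2
    · have := fact l hl.1 hl.2.1 hl.2.2 z hza hzx hz
      omega
  -- doubling the old ranks makes room for the new rank of `x`
  let c : Fin 3 → ℕ := ![2 * r 0 a, 2 * r 1 l + 2, 2 * r 2 ρ + 2]
  let d : Fin 3 → ℕ := ![2 * r 0 a + 1, 0, 0]
  let o : Fin 3 → ℕ := ![0, 1, 1]
  obtain ⟨R, hRx, hRa, hRv⟩ : ∃ R : Fin 3 → V → ℕ, (∀ i, R i x = c i) ∧ (∀ i, R i a = d i) ∧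
      ∀ i v, v ≠ a → v ≠ x → R i v = 2 * r i v + o i :=
    ⟨fun i v => if v = x then c i else if v = a then d i else 2 * r i v + o i,
      fun i => by simp, fun i => by simp [hax], fun i v h1 h2 => by simp [h1, h2]⟩
  have hRx0 : R 0 x = 2 * r 0 a := hRx 0
  have hRx1 : R 1 x = 2 * r 1 l + 2 := hRx 1
  have hRx2 : R 2 x = 2 * r 2 ρ + 2 := hRx 2
  have hRa0 : R 0 a = 2 * r 0 a + 1 := hRa 0
  have hRa1 : R 1 a = 0 := hRa 1
  have hRa2 : R 2 a = 0 := hRa 2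
  have hR0 : ∀ v, v ≠ a → v ≠ x → R 0 v = 2 * r 0 v := hRv 0
  have hR1 : ∀ v, v ≠ a → v ≠ x → R 1 v = 2 * r 1 v + 1 := hRv 1
  have hR2 : ∀ v, v ≠ a → v ≠ x → R 2 v = 2 * r 2 v + 1 := hRv 2
  clear_value c d o
  have cases3 : ∀ v, v = a ∨ v = x ∨ (v ≠ a ∧ v ≠ x) := fun v => by tauto
  have top : ∀ v, v ≠ a → R 0 v < R 0 a := by
    intro v hva
    rcases cases3 v with rfl | rfl | ⟨_, hvx⟩
    · exact absurd rfl hva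
    · omega
    · have := ha v hva hvx
      rw [hR0 v hva hvx]
      omega
  have edge : ∀ u v, G.Adj u v → ∀ z, z ≠ u → z ≠ v → (u = a ∨ u = x ∧ v ≠ a ∨ u ≠ a ∧ u ≠ x ∧
      v ≠ a ∧ v ≠ x) → ∃ i, R i u < R i z ∧ R i v < R i z := by
    rintro u v huv z hzu hzv (rfl | ⟨rfl, hva⟩ | ⟨hua, hux, hva, hvx⟩)
    · rw [exists_three]
      rcases cases3 v with rfl | rfl | ⟨hva, hvx⟩
      · exact absurd rfl huv.ne
      · have := hx z hzu hzv
        have := hR1 z hzu hzv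
        have := hR2 z hzu hzv
        omega
      · have := hR1 v hva hvx
        have := hR2 v hva hvx
        rcases cases3 z with rfl | rfl | ⟨hza, hzx⟩
        · exact absurd rfl hzu
        · have := hA v hvx huv
          omega
        · have := fact v hva hvx (.inl huv) z hza hzx hzv
          have := hR1 z hza hzx
          have := hR2 z hza hzx
          omega
    · rcases cases3 z with rfl | rfl | ⟨hza, hzx⟩
      · exact ⟨0, top _ hzu.symm, top _ hzv.symm⟩
      · exact absurd rfl hzu
      · have hvx := huv.ne'
        rw [exists_three]
        have := hB v hva huv
        have := hR1 v hva hvx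
        have := hR2 v hva hvx
        have := fact v hva hvx (.inr huv) z hza hzx hzv
        have := hR1 z hza hzx
        have := hR2 z hza hzx
        omega
    · rcases cases3 z with rfl | rfl | ⟨hza, hzx⟩
      · exact ⟨0, top _ hzu.symm, top _ hzv.symm⟩
      · refine ⟨0, ?_, ?_⟩
        · rw [hR0 u hua hux, hRx0]
          have := ha u hua hux
          omega
        · rw [hR0 v hva hvx, hRx0]
          have := ha v hva hvx
          omega
      · obtain ⟨i, hi1, hi2⟩ := hr.edge u hux v hvx (.inl huv) z hzx hzu hzv
        refine ⟨i, ?_⟩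
        rw [hRv i u hua hux, hRv i v hva hvx, hRv i z hza hzx]
        omega
  refine ⟨R, ⟨?_, ?_, ?_⟩, top, ?_⟩
  · have inj : ∀ u v, u ≠ v → (u = a ∨ u = x ∧ v ≠ a ∨ u ≠ a ∧ u ≠ x ∧ v ≠ a ∧ v ≠ x) →
        ∀ i, R i u ≠ R i v := by
      rintro u v huv (rfl | ⟨rfl, hva⟩ | ⟨hua, hux, hva, hvx⟩) i
      · rcases cases3 v with rfl | rfl | ⟨hva, hvx⟩
        · exact absurd rfl huv
        · fin_cases i <;> simp only [Fin.zero_eta, Fin.mk_one, Fin.reduceFinMk] <;> omega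
        · have := hR0 v hva hvx
          have := hR1 v hva hvx
          have := hR2 v hva hvx
          fin_cases i <;> simp only [Fin.zero_eta, Fin.mk_one, Fin.reduceFinMk] <;> omega
      · have hvx := huv.symm
        have := hR0 v hva hvx
        have := hR1 v hva hvx
        have := hR2 v hva hvx
        have := ha v hva hvx
        fin_cases i <;> simp only [Fin.zero_eta, Fin.mk_one, Fin.reduceFinMk] <;> omega
      · rw [hRv i u hua hux, hRv i v hva hvx]
        have : r i u ≠ r i v := fun h => huv (hr.inj i u hux v hvx h)
        omega
    intro i u _ v _ h
    by_contra hne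
    by_cases hc : u = a ∨ u = x ∧ v ≠ a ∨ u ≠ a ∧ u ≠ x ∧ v ≠ a ∧ v ≠ x
    · exact inj u v hne hc i h
    · exact inj v u (Ne.symm hne) (by tauto) i h.symm
  · intro u _ v _ huv z _ hzu hzv
    by_cases hc : u = a ∨ u = x ∧ v ≠ a ∨ u ≠ a ∧ u ≠ x ∧ v ≠ a ∧ v ≠ x
    · exact edge u v huv z hzu hzv hc
    · obtain ⟨i, hi⟩ := edge v u huv.symm z hzv hzu (by tauto)
      exact ⟨i, hi.2, hi.1⟩
  · intro u _ z _ hzu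
    rcases cases3 z with rfl | rfl | ⟨hza, hzx⟩
    · exact ⟨0, top _ hzu.symm⟩
    · rcases cases3 u with rfl | rfl | ⟨hua, hux⟩
      · exact ⟨1, by omega⟩
      · exact absurd rfl hzu
      · refine ⟨0, ?_⟩
        rw [hR0 u hua hux, hRx0]
        have := ha u hua hux
        omega
    · rcases cases3 u with rfl | rfl | ⟨hua, hux⟩
      · exact ⟨1, by rw [hR1 z hza hzx]; omega⟩
      · rw [exists_three]
        have := hx z hza hzx
        have := hR1 z hza hzx
        have := hR2 z hza hzx
        omega
      · obtain ⟨i, hi⟩ := hr.anti u hux z hzx hzu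
        refine ⟨i, ?_⟩
        rw [hRv i u hua hux, hRv i z hza hzx]
        omega
  · intro i hi e hex hea hmax v hve
    have hle : i = 1 → l ≠ e := by
      rintro rfl rfl
      exact absurd (hmax ρ (fun h => by rw [h] at h1; omega) hρ.2.1) (by omega)
    have hρe : i = 2 → ρ ≠ e := by
      rintro rfl rfl
      exact absurd (hmax l (fun h => by rw [h] at h1; omega) hl.2.1) (by omega)
    rcases cases3 v with rfl | rfl | ⟨hva, hvx⟩
    · fin_cases i <;> simp only [Fin.zero_eta, Fin.mk_one, Fin.reduceFinMk] at hi ⊢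
      · exact absurd rfl hi
      · rw [hR1 e hea hex]; omega
      · rw [hR2 e hea hex]; omega
    · fin_cases i <;> simp only [Fin.zero_eta, Fin.mk_one, Fin.reduceFinMk] at hi hmax ⊢
      · exact absurd rfl hi
      · have := hmax l (hle rfl) hl.2.1
        rw [hR1 e hea hex]; omega
      · have := hmax ρ (hρe rfl) hρ.2.1
        rw [hR2 e hea hex]; omega
    · rw [hRv i v hva hvx, hRv i e hea hex]
      have := hmax v hve hvx
      omega

end Split

/-! ### Gluing along at most three vertices -/

section Glue
variable {V : Type} {G : SimpleGraph V}

/-- Rankings `r₁` of the complement of `K` and `r₂` of `K` and its attachments `X` combine to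
rankings of the whole graph: `K`, ranked by `r₂`, is inserted as a block at position `c i` of the
`i`-th ranking. An attachment `p` is above this block in the ranking `o p` only (`c1`, `c2`). Every
vertex off `K ∪ X` is above the block and above `X` in some ranking (`c3`), and for every edge, or
vertex, off `K` the block is above it in some ranking (`c4`, `c4'`). The top vertices of the outer
rankings remain on top. -/
lemma glue [Finite V] {K X : Set V}
    (hbd : ∀ u ∈ K, ∀ v, v ∉ K → G.Adj u v → v ∈ X)
    {o : V → Fin 3} (ho : ∀ p ∈ X, ∀ q ∈ X, o p = o q → p = q) {c : Fin 3 → ℕ}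
    {r₁ r₂ : Fin 3 → V → ℕ} (h₁ : ValidOn Kᶜ G.Adj r₁) (h₂ : ValidOn (K ∪ X) G.Adj r₂)
    (hmax : ∀ p ∈ X, ∀ v ∈ K ∪ X, v ≠ p → r₂ (o p) v < r₂ (o p) p)
    (c1 : ∀ p ∈ X, c (o p) ≤ r₁ (o p) p) (c2 : ∀ p ∈ X, ∀ i, i ≠ o p → r₁ i p < c i)
    (c3 : ∀ v, v ∉ K → v ∉ X → ∃ i, c i ≤ r₁ i v ∧ ∀ p ∈ X, r₁ i p < r₁ i v)
    (c4 : ∀ u, u ∉ K → ∀ v, v ∉ K → G.Adj u v → ∃ i, r₁ i u < c i ∧ r₁ i v < c i)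
    (c4' : ∀ v, v ∉ K → ∃ i, r₁ i v < c i) :
    ∃ R : Fin 3 → V → ℕ, ValidOn Set.univ G.Adj R ∧
      ∀ i e, e ∉ K → c i ≤ r₁ i e → (∀ v, v ∉ K → v ≠ e → r₁ i v < r₁ i e) →
        ∀ v, v ≠ e → R i v < R i e := by
  classical
  obtain ⟨N, hN⟩ : ∃ N, ∀ i v, r₂ i v < N := by
    obtain ⟨M, hM⟩ := (Set.finite_range fun p : Fin 3 × V => r₂ p.1 p.2).bddAbove
    exact ⟨M + 1, fun i v => Nat.lt_succ_of_le (hM ⟨(i, v), rfl⟩)⟩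
  obtain ⟨R, hRK, hRlt, hRge⟩ : ∃ R : Fin 3 → V → ℕ, (∀ i, ∀ v ∈ K, R i v = c i + r₂ i v) ∧
      (∀ i v, v ∉ K → r₁ i v < c i → R i v = r₁ i v) ∧
      (∀ i v, v ∉ K → c i ≤ r₁ i v → R i v = r₁ i v + N) :=
    ⟨fun i v => if v ∈ K then c i + r₂ i v else if r₁ i v < c i then r₁ i v else r₁ i v + N,
      fun i v h => by simp [h], fun i v h h' => by simp [h, h'],
      fun i v h h' => by simp [h, Nat.not_lt.2 h']⟩
  have out : ∀ i u v, u ∉ K → v ∉ K → (R i u < R i v ↔ r₁ i u < r₁ i v) := by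
    intro i u v hu hv
    rcases lt_or_ge (r₁ i u) (c i) with h | h <;> rcases lt_or_ge (r₁ i v) (c i) with h' | h'
    · rw [hRlt i u hu h, hRlt i v hv h']
    · rw [hRlt i u hu h, hRge i v hv h']; omega
    · rw [hRge i u hu h, hRlt i v hv h']; omega
    · rw [hRge i u hu h, hRge i v hv h']; omega
  have inn : ∀ i u v, u ∈ K → v ∈ K → (R i u < R i v ↔ r₂ i u < r₂ i v) := by
    intro i u v hu hv
    rw [hRK i u hu, hRK i v hv]; omega
  have up : ∀ i w v, w ∈ K → v ∉ K → c i ≤ r₁ i v → R i w < R i v := by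
    intro i w v hw hv h
    have := hN i w
    rw [hRK i w hw, hRge i v hv h]; omega
  have down : ∀ i w v, w ∈ K → v ∉ K → r₁ i v < c i → R i v < R i w := by
    intro i w v hw hv h
    rw [hRK i w hw, hRlt i v hv h]; omega
  have above : ∀ z, z ∉ K → ∃ i, c i ≤ r₁ i z ∧ ∀ p ∈ X, p ≠ z → r₁ i p < r₁ i z := by
    intro z hz
    by_cases hzX : z ∈ X
    · exact ⟨o z, c1 z hzX, fun p hp hpz =>
        (c2 p hp _ fun h => hpz (ho p hp z hzX h.symm)).trans_le (c1 z hzX)⟩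
    · obtain ⟨i, h, h'⟩ := c3 z hz hzX
      exact ⟨i, h, fun p hp _ => h' p hp⟩
  have mixed : ∀ u ∈ K, ∀ v, v ∉ K → G.Adj u v → ∀ z, z ≠ u → z ≠ v →
      ∃ i, R i u < R i z ∧ R i v < R i z := by
    intro u hu v hv huv z hzu hzv
    have hvX := hbd u hu v hv huv
    by_cases hz : z ∈ K
    · obtain ⟨i, h, h'⟩ := h₂.edge u (.inl hu) v (.inr hvX) huv z (.inl hz) hzu hzv
      refine ⟨i, (inn i u z hu hz).2 h, down i z v hz hv (c2 v hvX i ?_)⟩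
      rintro rfl
      exact absurd (hmax v hvX z (.inl hz) hzv) (by omega)
    · obtain ⟨i, h, h'⟩ := above z hz
      exact ⟨i, up i u z hu hz h, (out i v z hv hz).2 (h' v hvX hzv.symm)⟩
  refine ⟨R, ⟨?_, ?_, ?_⟩, ?_⟩
  · have ne : ∀ i u v, u ∈ K → v ∉ K → R i u ≠ R i v := by
      intro i u v hu hv
      rcases lt_or_ge (r₁ i v) (c i) with h | h
      · exact (down i u v hu hv h).ne'
      · exact (up i u v hu hv h).ne
    intro i u _ v _ huv
    by_cases hu : u ∈ K <;> by_cases hv : v ∈ K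
    · rw [hRK i u hu, hRK i v hv] at huv
      exact h₂.inj i u (.inl hu) v (.inl hv) (by omega)
    · exact absurd huv (ne i u v hu hv)
    · exact absurd huv.symm (ne i v u hv hu)
    · have a1 := out i u v hu hv
      have a2 := out i v u hv hu
      exact h₁.inj i u hu v hv (by omega)
  · intro u _ v _ huv z _ hzu hzv
    by_cases hu : u ∈ K <;> by_cases hv : v ∈ K
    · by_cases hz : z ∈ K
      · obtain ⟨i, h, h'⟩ := h₂.edge u (.inl hu) v (.inl hv) huv z (.inl hz) hzu hzv
        exact ⟨i, (inn i u z hu hz).2 h, (inn i v z hv hz).2 h'⟩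
      · obtain ⟨i, h, _⟩ := above z hz
        exact ⟨i, up i u z hu hz h, up i v z hv hz h⟩
    · exact mixed u hu v hv huv z hzu hzv
    · obtain ⟨i, h⟩ := mixed v hv u hu huv.symm z hzv hzu
      exact ⟨i, h.2, h.1⟩
    · by_cases hz : z ∈ K
      · obtain ⟨i, h, h'⟩ := c4 u hu v hv huv
        exact ⟨i, down i z u hz hu h, down i z v hz hv h'⟩
      · obtain ⟨i, h, h'⟩ := h₁.edge u hu v hv huv z hz hzu hzv
        exact ⟨i, (out i u z hu hz).2 h, (out i v z hv hz).2 h'⟩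
  · intro u _ z _ hzu
    by_cases hz : z ∈ K
    · by_cases hu : u ∈ K
      · obtain ⟨i, h⟩ := h₂.anti u (.inl hu) z (.inl hz) hzu
        exact ⟨i, (inn i u z hu hz).2 h⟩
      · obtain ⟨i, h⟩ := c4' u hu
        exact ⟨i, down i z u hz hu h⟩
    · by_cases hu : u ∈ K
      · obtain ⟨i, h, _⟩ := above z hz
        exact ⟨i, up i u z hu hz h⟩
      · obtain ⟨i, h⟩ := h₁.anti u hu z hz hzu
        exact ⟨i, (out i u z hu hz).2 h⟩
  · intro i e he hce hm v hve
    by_cases hv : v ∈ K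
    · exact up i v e hv he hce
    · exact (out i v e hv he).2 (hm v hv hve)

end Glue

/-! ### Rooted instances -/

section Inst
variable {V : Type} {G : SimpleGraph V}

/-- A rooted instance: a graph without forbidden minors, with two adjacent roots or with three pairwise adjacent roots
whose removal leaves a connected graph. The set `I` of root indices is `{0, 1}` or everything; in
the first case `e 2` repeats one of the two roots. -/
structure Inst (G : SimpleGraph V) (I : Set (Fin 3)) (e : Fin 3 → V) : Prop where
  good : Good G
  idx : I = {0, 1} ∨ I = Set.univ
  rng : ∀ i, ∃ j ∈ I, e j = e i
  adj : ∀ i ∈ I, ∀ j ∈ I, i ≠ j → G.Adj (e i) (e j)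
  pre : I = Set.univ → Pre G (Set.range e)ᶜ

/-- `G` has a valid triple of rankings in which the roots are the top vertices. -/
def Solved (G : SimpleGraph V) (I : Set (Fin 3)) (e : Fin 3 → V) : Prop :=
  ∃ r, ValidOn Set.univ G.Adj r ∧ ∀ i ∈ I, ∀ v, v ≠ e i → r i v < r i (e i)

/-- All rooted instances with fewer than `n` vertices are solved. -/
def SolvedBelow (n : ℕ) : Prop := ∀ (V : Type) [Finite V] (G : SimpleGraph V) (I : Set (Fin 3))
  (e : Fin 3 → V), Nat.card V < n → Inst G I e → Solved G I e

lemma Inst.zero_mem {I e} (h : Inst G I e) : (0 : Fin 3) ∈ I := by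
  rcases h.idx with h | h <;> simp [h]

lemma Inst.one_mem {I e} (h : Inst G I e) : (1 : Fin 3) ∈ I := by
  rcases h.idx with h | h <;> simp [h]

lemma Inst.inj {I e} (h : Inst G I e) {i j : Fin 3} (hi : i ∈ I) (hj : j ∈ I) (he : e i = e j) :
    i = j := by
  by_contra hij
  exact (h.adj i hi j hj hij).ne he

lemma ValidOn.mono {S : Set V} {E E' : V → V → Prop} {r} (h : ValidOn S E r)
    (hE : ∀ u v, E' u v → E u v) : ValidOn S E' r :=
  ⟨h.inj, fun u hu v hv huv => h.edge u hu v hv (hE u v huv), h.anti⟩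

/-- Rankings of a graph on the subtype `S` as rankings of the type, with arbitrary values off `S`. -/
lemma ValidOn.extend_of {S : Set V} {H : SimpleGraph S} {r' : Fin 3 → S → ℕ}
    (h : ValidOn Set.univ H.Adj r') {E : V → V → Prop}
    (hE : ∀ u v : S, u ≠ v → E u v → H.Adj u v) : ∃ r : Fin 3 → V → ℕ,
      (∀ i (v : S), r i v = r' i v) ∧ ValidOn S E r := by
  classical
  obtain ⟨r, hr⟩ : ∃ r : Fin 3 → V → ℕ, ∀ i (v : S), r i v = r' i v :=
    ⟨fun i v => if h : v ∈ S then r' i ⟨v, h⟩ else 0, fun i v => by simp⟩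
  refine ⟨r, hr, fun i u hu v hv huv => ?_, fun u hu v hv huv z hz hzu hzv => ?_,
    fun u hu z hz hzu => ?_⟩
  · rw [hr i ⟨u, hu⟩, hr i ⟨v, hv⟩] at huv
    exact congrArg Subtype.val (h.inj i _ trivial _ trivial huv)
  · have hzu' : (⟨z, hz⟩ : S) ≠ ⟨u, hu⟩ := fun h => hzu (congrArg Subtype.val h)
    have hzv' : (⟨z, hz⟩ : S) ≠ ⟨v, hv⟩ := fun h => hzv (congrArg Subtype.val h)
    by_cases he : u = v
    · subst he
      obtain ⟨i, hi⟩ := h.anti ⟨u, hu⟩ trivial ⟨z, hz⟩ trivial hzu'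
      rw [← hr, ← hr] at hi
      exact ⟨i, hi, hi⟩
    · obtain ⟨i, hi⟩ := h.edge ⟨u, hu⟩ trivial ⟨v, hv⟩ trivial
        (hE _ _ (fun h => he (congrArg Subtype.val h)) huv) ⟨z, hz⟩ trivial hzu' hzv'
      rw [← hr, ← hr, ← hr] at hi
      exact ⟨i, hi⟩
  · obtain ⟨i, hi⟩ := h.anti ⟨u, hu⟩ trivial ⟨z, hz⟩ trivial
      fun h => hzu (congrArg Subtype.val h)
    rw [← hr, ← hr] at hi
    exact ⟨i, hi⟩

lemma ValidOn.extend {S N : Set V} {r' : Fin 3 → S → ℕ}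
    (h : ValidOn Set.univ (torso G S N).Adj r') : ∃ r : Fin 3 → V → ℕ,
      (∀ i (v : S), r i v = r' i v) ∧ ValidOn S (fun u v => G.Adj u v ∨ u ∈ N ∧ v ∈ N) r :=
  h.extend_of fun _ _ hne h => ⟨hne, h⟩

lemma fin3_third : ∀ α β : Fin 3, ∃ γ : Fin 3, α ≠ γ ∧ β ≠ γ := by decide

lemma fin3_cover : ∀ α β γ : Fin 3, α ≠ β → α ≠ γ → β ≠ γ → ∀ i, i = α ∨ i = β ∨ i = γ := by decide

lemma exists_perm {α β : Fin 3} (h : α ≠ β) :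
    ∃ σ : Equiv.Perm (Fin 3), σ α = 0 ∧ σ β = 1 := by
  revert α β; decide

lemma ValidOn.perm {S : Set V} {E : V → V → Prop} {r} (h : ValidOn S E r)
    (σ : Equiv.Perm (Fin 3)) : ValidOn S E (fun i => r (σ i)) := by
  refine ⟨fun i => h.inj (σ i), fun u hu v hv huv z hz h1 h2 => ?_, fun u hu z hz hzu => ?_⟩
  · obtain ⟨i, hi⟩ := h.edge u hu v hv huv z hz h1 h2
    exact ⟨σ.symm i, by simpa using hi⟩
  · obtain ⟨i, hi⟩ := h.anti u hu z hz hzu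
    exact ⟨σ.symm i, by simpa using hi⟩

lemma inst_two (hG : Good G) {p q : V} (h : G.Adj p q) : Inst G {0, 1} ![p, q, p] where
  good := hG
  idx := .inl rfl
  rng i := by
    fin_cases i
    exacts [⟨0, by simp, rfl⟩, ⟨1, by simp, rfl⟩, ⟨0, by simp, rfl⟩]
  adj := by
    rintro i (rfl | rfl) j (rfl | rfl) hij
    exacts [absurd rfl hij, h, h.symm, absurd rfl hij]
  pre h := by
    have : (2 : Fin 3) ∈ ({0, 1} : Set (Fin 3)) := h ▸ trivial
    simp at this

lemma solved_two {p q : V} (h : ∀ I e, Inst G I e → Solved G I e) (hG : Good G) (hpq : G.Adj p q)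
    {α β : Fin 3} (hαβ : α ≠ β) : ∃ r, ValidOn Set.univ G.Adj r ∧ (∀ v, v ≠ p → r α v < r α p) ∧
      ∀ v, v ≠ q → r β v < r β q := by
  obtain ⟨r, hr, hm⟩ := h _ _ (inst_two hG hpq)
  obtain ⟨σ, h0, h1⟩ := exists_perm hαβ
  refine ⟨fun i => r (σ i), hr.perm σ, ?_, ?_⟩
  · show ∀ v, v ≠ p → r (σ α) v < r (σ α) p
    rw [h0]
    exact hm 0 (by simp)
  · show ∀ v, v ≠ q → r (σ β) v < r (σ β) q
    rw [h1]
    exact hm 1 (by simp)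

/-- Rankings of a graph that may have no edge, and hence no roots. -/
lemma solved_any [Finite V] (h : ∀ I e, Inst G I e → Solved G I e) (hG : Good G) :
    ∃ r, ValidOn Set.univ G.Adj r := by
  by_cases he : ∃ p q, G.Adj p q
  · obtain ⟨p, q, hpq⟩ := he
    obtain ⟨r, hr, _⟩ := solved_two h hG hpq (α := 0) (β := 1) (by decide)
    exact ⟨r, hr⟩
  · push Not at he
    obtain ⟨n, ⟨f⟩⟩ := Finite.exists_equiv_fin V
    have hf : ∀ u v, u ≠ v → (f u).val ≠ (f v).val := fun u v h h' =>
      h (f.injective (Fin.ext h'))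
    refine ⟨![fun v => f v, fun v => n - f v, fun v => f v], ?_, ?_, ?_⟩
    · intro i u _ v _ huv
      by_contra hne
      have h1 := hf u v hne
      have h2 := (f u).isLt
      have h3 := (f v).isLt
      fin_cases i <;> simp at huv <;> omega
    · intro u _ v _ huv
      exact absurd huv (he u v)
    · intro u _ z _ hzu
      have h1 := hf z u hzu
      have h2 := (f u).isLt
      have h3 := (f z).isLt
      rw [exists_three]
      simp
      omega

end Inst

section Pair
variable {V : Type} {G : SimpleGraph V} [Finite V]

/-- Rankings of two sides can be glued along one or two attachments (or none). -/
lemma glue_pair {K X : Set V} {p q : V} (hpK : p ∉ K) (hqK : q ∉ K) (hpq : p ≠ q)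
    (hX : ∀ v ∈ X, v = p ∨ v = q) (hbd : ∀ u ∈ K, ∀ v, v ∉ K → G.Adj u v → v ∈ X)
    {I : Set (Fin 3)} {e : Fin 3 → V} (heK : ∀ i, e i ∉ K)
    (he : ∀ i ∈ I, ∀ j ∈ I, e i = e j → i = j) {E : V → V → Prop} (hE : ∀ u v, G.Adj u v → E u v)
    (hEpq : E p q) {r₁ : Fin 3 → V → ℕ} (h₁ : ValidOn Kᶜ E r₁)
    (hm : ∀ i ∈ I, ∀ v, v ∉ K → v ≠ e i → r₁ i v < r₁ i (e i))
    (h₂ : ∀ α β : Fin 3, α ≠ β → ∃ r₂, ValidOn (K ∪ X) G.Adj r₂ ∧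
      (p ∈ X → ∀ v ∈ K ∪ X, v ≠ p → r₂ α v < r₂ α p) ∧
      (q ∈ X → ∀ v ∈ K ∪ X, v ≠ q → r₂ β v < r₂ β q)) : Solved G I e := by
  classical
  -- `γ` is a ranking in which no root is `p` or `q`
  obtain ⟨α, β, γ, hαβ, hαγ, hβγ, hα, hβ, hγ⟩ : ∃ α β γ : Fin 3, α ≠ β ∧ α ≠ γ ∧ β ≠ γ ∧
      r₁ α q < r₁ α p ∧ r₁ β p < r₁ β q ∧ (γ ∈ I → e γ ≠ p ∧ e γ ≠ q) := by
    obtain ⟨α, hα⟩ := h₁.anti q hqK p hpK hpq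
    obtain ⟨β, hβ⟩ := h₁.anti p hpK q hqK hpq.symm
    have hαβ : α ≠ β := by rintro rfl; omega
    obtain ⟨γ, hαγ, hβγ⟩ := fin3_third α β
    by_cases hγ : γ ∈ I → e γ ≠ p ∧ e γ ≠ q
    · exact ⟨α, β, γ, hαβ, hαγ, hβγ, hα, hβ, hγ⟩
    have hγI : γ ∈ I := by tauto
    by_cases hγp : e γ = p
    · refine ⟨γ, β, α, hβγ.symm, hαγ.symm, hαβ.symm, ?_, hβ, fun hαI => ⟨fun h => ?_, fun h => ?_⟩⟩
      · rw [← hγp]; exact hm γ hγI q hqK (by rw [hγp]; exact hpq.symm)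
      · exact hαγ (he α hαI γ hγI (h.trans hγp.symm))
      · have := hm α hαI p hpK (by rw [h]; exact hpq)
        rw [h] at this; omega
    · have hγq : e γ = q := by tauto
      refine ⟨α, γ, β, hαγ, hαβ, hβγ.symm, hα, ?_, fun hβI => ⟨fun h => ?_, fun h => ?_⟩⟩
      · rw [← hγq]; exact hm γ hγI p hpK (by rw [hγq]; exact hpq)
      · have := hm β hβI q hqK (by rw [h]; exact hpq.symm)
        rw [h] at this; omega
      · exact hβγ (he β hβI γ hγI (h.trans hγq.symm))
  obtain ⟨r₂, hr₂, hp, hq⟩ := h₂ α β hαβ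
  have hcov := fin3_cover α β γ hαβ hαγ hβγ
  have hex : ∀ {P : Fin 3 → Prop}, (P α ∨ P β ∨ P γ) → ∃ i, P i := by
    rintro P (h | h | h)
    exacts [⟨_, h⟩, ⟨_, h⟩, ⟨_, h⟩]
  have hex' : ∀ {P : Fin 3 → Prop}, (∃ i, P i) → (P α ∨ P β ∨ P γ) := by
    rintro P ⟨i, h⟩
    rcases hcov i with rfl | rfl | rfl <;> tauto
  obtain ⟨c, cα, cβ, cγ⟩ : ∃ c : Fin 3 → ℕ, c α = r₁ α p ∧ c β = r₁ β q ∧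
      c γ = max (r₁ γ p) (r₁ γ q) + 1 :=
    ⟨fun i => if i = α then r₁ α p else if i = β then r₁ β q else max (r₁ γ p) (r₁ γ q) + 1,
      by simp, by simp [hαβ.symm], by simp [hαγ.symm, hβγ.symm]⟩
  obtain ⟨o, op, oq⟩ : ∃ o : V → Fin 3, o p = α ∧ o q = β :=
    ⟨fun v => if v = p then α else β, by simp, by simp [hpq.symm]⟩
  have hlt : ∀ u v, ((∃ i, r₁ i u < r₁ i p ∧ r₁ i v < r₁ i p) ∨
      (∃ i, r₁ i u < r₁ i q ∧ r₁ i v < r₁ i q)) → ∃ i, r₁ i u < c i ∧ r₁ i v < c i := by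
    rintro u v (h | h) <;>
    · have := hex' h
      apply hex
      omega
  have hpq' : ∀ u, u = p ∨ u = q → r₁ γ u < c γ := by
    rintro u (rfl | rfl) <;> omega
  have ho : ∀ u ∈ X, ∀ v ∈ X, o u = o v → u = v := by
    intro u hu v hv huv
    rcases hX u hu with h | h <;> rcases hX v hv with h' | h' <;> rw [h, h'] at huv ⊢
    · exact absurd (op.symm.trans (huv.trans oq)) hαβ
    · exact absurd (op.symm.trans (huv.symm.trans oq)) hαβ
  have hmax : ∀ p ∈ X, ∀ v ∈ K ∪ X, v ≠ p → r₂ (o p) v < r₂ (o p) p := by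
    intro u hu
    rcases hX u hu with rfl | rfl
    · rw [op]; exact hp hu
    · rw [oq]; exact hq hu
  have c1 : ∀ p ∈ X, c (o p) ≤ r₁ (o p) p := by
    intro u hu
    rcases hX u hu with rfl | rfl
    · rw [op, cα]
    · rw [oq, cβ]
  have c2 : ∀ p ∈ X, ∀ i, i ≠ o p → r₁ i p < c i := by
    intro u hu i hi
    rcases hX u hu with rfl | rfl
    · rw [op] at hi
      rcases hcov i with rfl | rfl | rfl <;> first | exact absurd rfl hi | omega
    · rw [oq] at hi
      rcases hcov i with rfl | rfl | rfl <;> first | exact absurd rfl hi | omega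
  have c3 : ∀ v, v ∉ K → v ∉ X → ∃ i, c i ≤ r₁ i v ∧ ∀ p ∈ X, r₁ i p < r₁ i v := by
    intro v hv hvX
    by_cases hvp : v = p
    · refine ⟨α, by rw [cα, hvp], fun u hu => ?_⟩
      rcases hX u hu with rfl | rfl
      · exact absurd (hvp ▸ hu) hvX
      · rw [hvp]; exact hα
    by_cases hvq : v = q
    · refine ⟨β, by rw [cβ, hvq], fun u hu => ?_⟩
      rcases hX u hu with rfl | rfl
      · rw [hvq]; exact hβ
      · exact absurd (hvq ▸ hu) hvX
    obtain ⟨i, h, h'⟩ := h₁.edge p hpK q hqK hEpq v hv hvp hvq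
    refine ⟨i, ?_, fun u hu => ?_⟩
    · rcases hcov i with rfl | rfl | rfl <;> omega
    · rcases hX u hu with rfl | rfl <;> assumption
  have c4 : ∀ u, u ∉ K → ∀ v, v ∉ K → G.Adj u v → ∃ i, r₁ i u < c i ∧ r₁ i v < c i := by
    intro u hu v hv huv
    by_cases h1 : p = u ∨ p = v
    · by_cases h2 : q = u ∨ q = v
      · refine ⟨γ, hpq' u ?_, hpq' v ?_⟩
        · rcases h1 with h1 | h1 <;> rcases h2 with h2 | h2 <;> first
            | exact .inl h1.symm
            | exact .inr h2.symm
            | exact absurd (h1.trans h2.symm) hpq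
        · rcases h1 with h1 | h1 <;> rcases h2 with h2 | h2 <;> first
            | exact .inl h1.symm
            | exact .inr h2.symm
            | exact absurd (h1.trans h2.symm) hpq
      · push Not at h2
        exact hlt u v (.inr (h₁.edge u hu v hv (hE u v huv) q hqK h2.1 h2.2))
    · push Not at h1
      exact hlt u v (.inl (h₁.edge u hu v hv (hE u v huv) p hpK h1.1 h1.2))
  have c4' : ∀ v, v ∉ K → ∃ i, r₁ i v < c i := by
    intro v hv
    by_cases h1 : p = v
    · exact ⟨γ, hpq' v (.inl h1.symm)⟩
    · obtain ⟨i, hi⟩ := h₁.anti v hv p hpK h1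
      obtain ⟨j, hj, _⟩ := hlt v v (.inl ⟨i, hi, hi⟩)
      exact ⟨j, hj⟩
  obtain ⟨R, hR, hRm⟩ := glue hbd ho (h₁.mono hE) hr₂ hmax c1 c2 c3 c4 c4'
  refine ⟨R, hR, fun i hi => hRm i (e i) (heK i) ?_ (hm i hi)⟩
  rcases hcov i with rfl | rfl | rfl
  · rw [cα]
    by_cases h : p = e i
    · rw [← h]
    · exact (hm i hi p hpK h).le
  · rw [cβ]
    by_cases h : q = e i
    · rw [← h]
    · exact (hm i hi q hqK h).le
  · have h1 := hm i hi p hpK (hγ hi).1.symm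
    have h2 := hm i hi q hqK (hγ hi).2.symm
    omega

end Pair

/-! ### Reduction along small separations -/

section Red
variable {V : Type} {G : SimpleGraph V}

/-- A separation of order at most three along which a rooted instance can be split: `K` contains no
root, something lies outside `K` and its boundary, and if the boundary has three vertices then some
root is not among them. -/
structure Red (G : SimpleGraph V) (e : Fin 3 → V) (K : Set V) : Prop where
  ne : K.Nonempty
  root : ∀ i, e i ∉ K
  out : ∃ z, z ∉ K ∧ z ∉ bd G K
  card : (bd G K).ncard ≤ 2 ∨ (bd G K).ncard = 3 ∧ ∃ i, e i ∉ bd G K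

variable {I : Set (Fin 3)} {e : Fin 3 → V}

lemma injective_three {a b c : V} (hab : a ≠ b) (hac : a ≠ c) (hbc : b ≠ c) :
    Function.Injective ![a, b, c] := by
  intro i j hij
  fin_cases i <;> fin_cases j <;> simp_all

lemma Inst.adj_or (h : Inst G I e) (i j : Fin 3) : e i = e j ∨ G.Adj (e i) (e j) := by
  obtain ⟨i', hi', hi⟩ := h.rng i
  obtain ⟨j', hj', hj⟩ := h.rng j
  rw [← hi, ← hj]
  by_cases hij : i' = j'
  · exact .inl (by rw [hij])
  · exact .inr (h.adj i' hi' j' hj' hij)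

/-- The torso of the outer side of a separation inherits the roots. -/
lemma Inst.outer (hI : Inst G I e) {K : Set V} (root : ∀ i, e i ∉ K)
    (hg : Good (torso G Kᶜ (bd G K))) :
    Inst (torso G Kᶜ (bd G K)) I (fun i => ⟨e i, root i⟩) where
  good := hg
  idx := hI.idx
  rng i := by
    obtain ⟨j, hj, h⟩ := hI.rng i
    exact ⟨j, hj, Subtype.ext h⟩
  adj i hi j hj hij :=
    ⟨fun h => (hI.adj i hi j hj hij).ne (congrArg Subtype.val h), .inl (hI.adj i hi j hj hij)⟩
  pre hu := by
    intro A hA ⟨a, ha⟩ hcl v hv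
    have hsub : (Set.range e)ᶜ ⊆ {w | (∃ h : w ∈ Kᶜ, (⟨w, h⟩ : ↥Kᶜ) ∈ A) ∨
        w ∈ K ∧ ∃ p ∈ A, (p : V) ∈ bd G K} := by
      refine hI.pre hu _ ?_ ⟨a, .inl ⟨a.2, ha⟩⟩ ?_
      · rintro w (⟨h, hw⟩ | ⟨hw, _⟩) ⟨i, rfl⟩
        · exact hA hw ⟨i, rfl⟩
        · exact root i hw
      · rintro u hu v hv huv
        have hvr : ∀ h : v ∈ Kᶜ, (⟨v, h⟩ : ↥Kᶜ) ∈ (Set.range fun i => (⟨e i, root i⟩ : ↥Kᶜ))ᶜ := by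
          rintro h ⟨i, hi⟩
          exact hv ⟨i, congrArg Subtype.val hi⟩
        by_cases hvK : v ∈ K
        · refine .inr ⟨hvK, ?_⟩
          rcases hu with ⟨h, hu⟩ | ⟨_, hu⟩
          · exact ⟨_, hu, h, v, hvK, huv.symm⟩
          · exact hu
        · refine .inl ⟨hvK, ?_⟩
          rcases hu with ⟨h, hu⟩ | ⟨huK, p, hp, hpX⟩
          · exact hcl _ hu _ (hvr hvK) ⟨fun h => huv.ne (congrArg Subtype.val h), .inl huv⟩
          · by_cases hpv : p = ⟨v, hvK⟩
            · exact hpv ▸ hp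
            · exact hcl _ hp _ (hvr hvK) ⟨hpv, .inr ⟨hpX, hvK, u, huK, huv⟩⟩
    rcases hsub (a := (v : V)) (fun ⟨i, hi⟩ => hv ⟨i, Subtype.ext hi⟩) with ⟨_, h⟩ | ⟨h, _⟩
    · exact h
    · exact absurd h v.2

/-- For a separation of least order, some connected set on the outer side attaches to the whole
boundary. -/
lemma exists_full (hI : Inst G I e) {K : Set V} (hK : Red G e K)
    (hmin : ∀ K' : Set V, K'.Nonempty → (∀ i, e i ∉ K') → (∃ z, z ∉ K' ∧ z ∉ bd G K') →
      bd G K' ⊆ bd G K → bd G K ⊆ bd G K') :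
    ∃ W, SConn G W ∧ Disjoint W K ∧ Disjoint W (bd G K) ∧ bd G K ⊆ bd G W ∧
      ((bd G K).ncard = 3 → ∃ i, e i ∈ W) := by
  have key : ∀ z, z ∉ K → z ∉ bd G K → ∃ W, z ∈ W ∧ SConn G W ∧ Disjoint W K ∧
      Disjoint W (bd G K) ∧ bd G W ⊆ bd G K := by
    intro z hz hz'
    obtain ⟨W, hWS, hzW, hW, hcl⟩ := exists_comp G (S := (K ∪ bd G K)ᶜ) (z := z)
      (fun h => h.elim hz hz')
    refine ⟨W, hzW, hW, Set.disjoint_left.2 fun v hv h => hWS hv (.inl h),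
      Set.disjoint_left.2 fun v hv h => hWS hv (.inr h), ?_⟩
    rintro v ⟨hv, u, hu, huv⟩
    by_contra hvX
    refine hv (hcl u hu v ?_ huv)
    rintro (h | h)
    · exact hWS hu (.inr ⟨fun h' => hWS hu (.inl h'), v, h, huv.symm⟩)
    · exact hvX h
  by_cases hr : ∃ i, e i ∉ bd G K
  · obtain ⟨i, hi⟩ := hr
    obtain ⟨W, hiW, hW, hWK, hWX, hb⟩ := key _ (hK.root i) hi
    refine ⟨W, hW, hWK, hWX, ?_, fun _ => ⟨i, hiW⟩⟩
    -- otherwise everything beyond the boundary of `W` gives a smaller separation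
    have hsub : bd G (W ∪ bd G W)ᶜ ⊆ bd G W := by
      rintro v ⟨hv, u, hu, huv⟩
      have hv' : v ∈ W ∪ bd G W := not_not.1 hv
      refine hv'.resolve_left fun h => hu ?_
      by_cases huW : u ∈ W
      · exact .inl huW
      · exact .inr ⟨huW, v, h, huv.symm⟩
    refine (hmin (W ∪ bd G W)ᶜ ?_ ?_ ⟨e i, fun h => h (.inl hiW), ?_⟩
      (hsub.trans hb)).trans hsub
    · obtain ⟨k, hk⟩ := hK.ne
      exact ⟨k, fun h => h.elim (fun h => Set.disjoint_left.1 hWK h hk) fun h => (hb h).1 hk⟩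
    · intro j hj
      apply hj
      rcases hI.adj_or i j with h | h
      · exact .inl (h ▸ hiW)
      · by_cases hjW : e j ∈ W
        · exact .inl hjW
        · exact .inr ⟨hjW, _, hiW, h⟩
    · exact fun h => (hsub h).1 hiW
  · push Not at hr
    obtain ⟨z, hz, hz'⟩ := hK.out
    obtain ⟨W, hzW, hW, hWK, hWX, hb⟩ := key z hz hz'
    refine ⟨W, hW, hWK, hWX, hmin W ⟨z, hzW⟩ (fun i h => Set.disjoint_left.1 hWX h (hr i)) ?_ hb,
      fun h => ?_⟩
    · obtain ⟨k, hk⟩ := hK.ne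
      exact ⟨k, fun h => Set.disjoint_left.1 hWK h hk, fun h => (hb h).1 hk⟩
    · rcases hK.card with h' | ⟨_, i, hi⟩
      · omega
      · exact absurd (hr i) hi

variable [Finite V]

lemma Red.of_subset {K K' : Set V} (h : Red G e K) (ne : K'.Nonempty) (root : ∀ i, e i ∉ K')
    (out : ∃ z, z ∉ K' ∧ z ∉ bd G K') (hs : bd G K' ⊆ bd G K) : Red G e K' := by
  refine ⟨ne, root, out, ?_⟩
  have h1 := Set.ncard_le_ncard hs
  rcases h.card with h2 | ⟨h2, i, h3⟩
  · exact .inl (h1.trans h2)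
  · have h4 : e i ∉ bd G K' := fun h => h3 (hs h)
    have h5 : (bd G K').ncard ≤ 2 ∨ (bd G K').ncard = 3 := by omega
    exact h5.imp id fun h => ⟨h, i, h4⟩

/-- A reducing separation of least order, with connected inner side. -/
lemma exists_red_min {K : Set V} (hK : Red G e K) : ∃ K, Red G e K ∧ SConn G K ∧
    ∀ K' : Set V, K'.Nonempty → (∀ i, e i ∉ K') → (∃ z, z ∉ K' ∧ z ∉ bd G K') →
      bd G K' ⊆ bd G K → bd G K ⊆ bd G K' := by
  classical
  have hex : ∃ m K, Red G e K ∧ (bd G K).ncard = m := ⟨_, K, hK, rfl⟩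
  obtain ⟨K, hK, hm⟩ := Nat.find_spec hex
  have hmin : ∀ K', Red G e K' → (bd G K).ncard ≤ (bd G K').ncard := by
    intro K' h
    rw [hm]
    exact Nat.find_min' hex ⟨K', h, rfl⟩
  obtain ⟨z, hz⟩ := hK.ne
  obtain ⟨C, hCK, hzC, hC, hcl⟩ := exists_comp G hz
  have hsub : bd G C ⊆ bd G K := by
    rintro v ⟨hv, u, hu, huv⟩
    exact ⟨fun h => hv (hcl u hu v h huv), u, hCK hu, huv⟩
  have hRC : Red G e C := by
    refine hK.of_subset ⟨z, hzC⟩ (fun i h => hK.root i (hCK h)) ?_ hsub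
    obtain ⟨y, hy, hy'⟩ := hK.out
    exact ⟨y, fun h => hy (hCK h), fun h => hy' (hsub h)⟩
  refine ⟨C, hRC, hC, fun K' ne root out hs => ?_⟩
  have h1 := hmin K' (hRC.of_subset ne root out hs)
  have h2 := Set.ncard_le_ncard hsub
  exact (Set.eq_of_subset_of_ncard_le hs (h2.trans h1)).ge

lemma ncard_cover {X : Set V} (h : X.ncard ≤ 3) (v : V) : ∃ a b c, ∀ p ∈ X, p = a ∨ p = b ∨ p = c := by
  have h' : X.ncard = 0 ∨ X.ncard = 1 ∨ X.ncard = 2 ∨ X.ncard = 3 := by omega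
  rcases h' with h | h | h | h
  · rw [Set.ncard_eq_zero] at h
    exact ⟨v, v, v, by simp [h]⟩
  · obtain ⟨a, rfl⟩ := Set.ncard_eq_one.1 h
    exact ⟨a, a, a, by simp⟩
  · obtain ⟨a, b, _, rfl⟩ := Set.ncard_eq_two.1 h
    exact ⟨a, b, b, by simp⟩
  · obtain ⟨a, b, c, _, _, _, rfl⟩ := Set.ncard_eq_three.1 h
    exact ⟨a, b, c, by simp⟩

lemma card_coe_lt {S : Set V} {z : V} (hz : z ∉ S) : Nat.card S < Nat.card V := by
  rw [Nat.card_coe_set_eq]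
  exact Set.ncard_lt_card fun h => hz (h ▸ trivial)

/-- Reduction along a separation of order at most two. -/
lemma red_two (hb : SolvedBelow (Nat.card V)) (hI : Inst G I e) {K W : Set V} (hK : Red G e K)
    (hX : (bd G K).ncard ≤ 2) (hWK : Disjoint W K) (hWX : Disjoint W (bd G K))
    (hWb : bd G K ⊆ bd G W)
    (hg₂ : Good (torso G (K ∪ bd G K) (bd G K))) {r₁ : Fin 3 → V → ℕ}
    (h₁ : ValidOn Kᶜ (fun u v => G.Adj u v ∨ u ∈ bd G K ∧ v ∈ bd G K) r₁)
    (hm : ∀ i ∈ I, ∀ v, v ∉ K → v ≠ e i → r₁ i v < r₁ i (e i)) : Solved G I e := by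
  obtain ⟨z, hz, hz'⟩ := hK.out
  have h2 : ∀ J f, Inst (torso G (K ∪ bd G K) (bd G K)) J f → Solved (torso G (K ∪ bd G K) (bd G K)) J f :=
    fun J f => hb _ _ J f (card_coe_lt (fun h => h.elim hz hz'))
  have hbd : ∀ u ∈ K, ∀ v, v ∉ K → G.Adj u v → v ∈ bd G K := fun u hu v hv huv => ⟨hv, u, hu, huv⟩
  have hinj : ∀ i ∈ I, ∀ j ∈ I, e i = e j → i = j := fun i hi j hj h => hI.inj hi hj h
  -- rankings of the inner side for which `p` is on top of one ranking and `q` of another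
  have two : ∀ p q (hp : p ∈ K ∪ bd G K) (hq : q ∈ K ∪ bd G K),
      (torso G (K ∪ bd G K) (bd G K)).Adj ⟨p, hp⟩ ⟨q, hq⟩ → ∀ α β : Fin 3, α ≠ β →
      ∃ r₂, ValidOn (K ∪ bd G K) G.Adj r₂ ∧
      (∀ v ∈ K ∪ bd G K, v ≠ p → r₂ α v < r₂ α p) ∧
      (∀ v ∈ K ∪ bd G K, v ≠ q → r₂ β v < r₂ β q) := by
    intro p q hp hq hpq α β hαβ
    obtain ⟨r', hr', h1, h3⟩ := solved_two h2 hg₂ hpq hαβ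
    obtain ⟨r₂, hr, hr₂⟩ := hr'.extend
    refine ⟨r₂, hr₂.mono fun _ _ => .inl, fun v hv hvp => ?_, fun v hv hvq => ?_⟩
    · rw [hr α ⟨v, hv⟩, hr α ⟨p, hp⟩]
      exact h1 _ fun h => hvp (congrArg Subtype.val h)
    · rw [hr β ⟨v, hv⟩, hr β ⟨q, hq⟩]
      exact h3 _ fun h => hvq (congrArg Subtype.val h)
  have h' : (bd G K).ncard = 0 ∨ (bd G K).ncard = 1 ∨ (bd G K).ncard = 2 := by omega
  rcases h' with h | h | h
  · rw [Set.ncard_eq_zero] at h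
    have hadj := hI.adj 0 hI.zero_mem 1 hI.one_mem (by decide)
    refine glue_pair (hK.root 0) (hK.root 1) hadj.ne (by simp [h]) hbd hK.root hinj
      (fun _ _ => .inl) (.inl hadj) h₁ hm fun α β _ => ?_
    obtain ⟨r', hr'⟩ := solved_any h2 hg₂
    obtain ⟨r₂, hr, hr₂⟩ := hr'.extend
    exact ⟨r₂, hr₂.mono fun _ _ => .inl, fun h' => by simp [h] at h', fun h' => by simp [h] at h'⟩
  · obtain ⟨p, h⟩ := Set.ncard_eq_one.1 h
    have hp : p ∈ bd G K := h ▸ rfl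
    obtain ⟨b, hbK, hbp⟩ := hp.2
    obtain ⟨_, q, hqW, hqp⟩ := hWb hp
    have hqX : q ∉ bd G K := Set.disjoint_left.1 hWX hqW
    refine glue_pair hp.1 (Set.disjoint_left.1 hWK hqW) hqp.ne.symm
      (fun v hv => .inl (by rwa [h] at hv)) hbd hK.root hinj
      (fun _ _ => .inl) (.inl hqp.symm) h₁ hm fun α β hαβ => ?_
    obtain ⟨r₂, hr₂, h1, _⟩ := two p b (.inr hp) (.inl hbK)
      ⟨fun h => hbp.ne.symm (congrArg Subtype.val h), .inl hbp.symm⟩ α β hαβ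
    exact ⟨r₂, hr₂, fun _ => h1, fun h => absurd h hqX⟩
  · obtain ⟨p, q, hpq, h⟩ := Set.ncard_eq_two.1 h
    have hp : p ∈ bd G K := h ▸ .inl rfl
    have hq : q ∈ bd G K := h ▸ .inr rfl
    refine glue_pair hp.1 hq.1 hpq (fun v hv => by rwa [h] at hv) hbd hK.root hinj
      (fun _ _ => .inl) (.inr ⟨hp, hq⟩) h₁ hm fun α β hαβ => ?_
    obtain ⟨r₂, hr₂, h1, h3⟩ := two p q (.inr hp) (.inr hq)
      ⟨fun h => hpq (congrArg Subtype.val h), .inr ⟨hp, hq⟩⟩ α β hαβ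
    exact ⟨r₂, hr₂, fun _ => h1, fun _ => h3⟩

lemma fin3_others : ∀ i : Fin 3, ∃ j k : Fin 3, j ≠ i ∧ k ≠ i ∧ j ≠ k ∧
    ∀ l, l = i ∨ l = j ∨ l = k := by decide

/-- Reduction along a separation of order three. Each boundary vertex `f i` is the highest of the
three in one outer ranking `i`, and the inner side is inserted right below it in that ranking. -/
lemma red_three (hb : SolvedBelow (Nat.card V)) (hI : Inst G I e) {K W : Set V} (hK : Red G e K)
    (hKc : SConn G K)
    (hmin : ∀ K' : Set V, K'.Nonempty → (∀ i, e i ∉ K') → (∃ z, z ∉ K' ∧ z ∉ bd G K') →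
      bd G K' ⊆ bd G K → bd G K ⊆ bd G K')
    (hX : (bd G K).ncard = 3) (hW : SConn G W) (hWK : Disjoint W K) (hWX : Disjoint W (bd G K))
    (hWb : bd G K ⊆ bd G W) (hWe : ∃ i, e i ∈ W)
    (hg₂ : Good (torso G (K ∪ bd G K) (bd G K))) {r₁ : Fin 3 → V → ℕ}
    (h₁ : ValidOn Kᶜ (fun u v => G.Adj u v ∨ u ∈ bd G K ∧ v ∈ bd G K) r₁)
    (hm : ∀ i ∈ I, ∀ v, v ∉ K → v ≠ e i → r₁ i v < r₁ i (e i)) : Solved G I e := by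
  -- each of the three boundary vertices is the highest of them in one of the rankings
  obtain ⟨f, hf, hfX, hfm⟩ : ∃ f : Fin 3 → V, Function.Injective f ∧ Set.range f = bd G K ∧
      ∀ i k, k ≠ i → r₁ i (f k) < r₁ i (f i) := by
    obtain ⟨x, hx, hxX⟩ : ∃ x : Fin 3 → V, Function.Injective x ∧ Set.range x = bd G K := by
      obtain ⟨a, b, c, hab, hac, hbc, h⟩ := Set.ncard_eq_three.1 hX
      refine ⟨![a, b, c], injective_three hab hac hbc, ?_⟩
      rw [h]; ext v
      simp only [Set.mem_range, exists_three, Set.mem_insert_iff, Set.mem_singleton_iff,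
        Matrix.cons_val_zero, Matrix.cons_val_one, Matrix.cons_val, eq_comm]
    have hxm : ∀ i, x i ∈ bd G K := fun i => hxX ▸ ⟨i, rfl⟩
    have : ∀ j, ∃ i, ∀ k, k ≠ j → r₁ i (x k) < r₁ i (x j) := by
      intro j
      obtain ⟨k, l, hk, hl, _, hc⟩ := fin3_others j
      obtain ⟨i, h1, h2⟩ := h₁.edge _ (hxm k).1 _ (hxm l).1 (.inr ⟨hxm k, hxm l⟩) _ (hxm j).1
        (hx.ne hk.symm) (hx.ne hl.symm)
      refine ⟨i, fun m hmj => ?_⟩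
      rcases hc m with rfl | rfl | rfl
      exacts [absurd rfl hmj, h1, h2]
    choose σ hσ using this
    have hσi : Function.Injective σ := by
      intro j k hjk
      by_contra hne
      have h1 := hσ j k (Ne.symm hne)
      have h2 := hσ k j hne
      rw [hjk] at h1
      omega
    obtain ⟨τ, hτ⟩ : ∃ τ : Equiv.Perm (Fin 3), ∀ j, τ j = σ j :=
      ⟨Equiv.ofBijective σ (Finite.injective_iff_bijective.1 hσi), fun j => rfl⟩
    refine ⟨x ∘ τ.symm, hx.comp τ.symm.injective, ?_, fun i k hki => ?_⟩
    · rw [Set.range_comp, τ.symm.surjective.range_eq, Set.image_univ, hxX]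
    · have := hσ (τ.symm i) (τ.symm k) (τ.symm.injective.ne hki)
      rwa [← hτ, τ.apply_symm_apply] at this
  have hfm' : ∀ i, f i ∈ bd G K := fun i => hfX ▸ ⟨i, rfl⟩
  have hfle : ∀ i k, r₁ i (f k) ≤ r₁ i (f i) := by
    intro i k
    by_cases h : k = i
    · rw [h]
    · exact (hfm i k h).le
  have hXf : ∀ p ∈ bd G K, ∃ i, p = f i := by
    intro p hp
    rw [← hfX] at hp
    obtain ⟨i, rfl⟩ := hp
    exact ⟨i, rfl⟩
  obtain ⟨o, ho⟩ : ∃ o : V → Fin 3, ∀ i, o (f i) = i :=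
    ⟨Function.invFun f, Function.leftInverse_invFun hf⟩
  obtain ⟨z, hz, hz'⟩ := hK.out
  have hbd : ∀ u ∈ K, ∀ v, v ∉ K → G.Adj u v → v ∈ bd G K := fun u hu v hv huv => ⟨hv, u, hu, huv⟩
  -- the inner side, with the three boundary vertices as roots
  have hI₂ : Inst (torso G (K ∪ bd G K) (bd G K)) Set.univ (fun i => ⟨f i, .inr (hfm' i)⟩) := by
    refine ⟨hg₂, .inr rfl, fun i => ⟨i, trivial, rfl⟩, fun i _ j _ hij =>
      ⟨fun h => hf.ne hij (congrArg Subtype.val h), .inr ⟨hfm' i, hfm' j⟩⟩, fun _ => ?_⟩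
    have hK' : ∀ v : ↥(K ∪ bd G K),
        v ∈ (Set.range fun i => (⟨f i, .inr (hfm' i)⟩ : ↥(K ∪ bd G K)))ᶜ → (v : V) ∈ K := by
      rintro ⟨v, hv⟩ hvr
      refine hv.resolve_right fun h => hvr ?_
      obtain ⟨i, rfl⟩ := hXf v h
      exact ⟨i, rfl⟩
    intro A hA ⟨a, ha⟩ hcl v hv
    have := hKc.2 (Subtype.val '' A) (by rintro _ ⟨w, hw, rfl⟩; exact hK' w (hA hw))
      ⟨a, a, ha, rfl⟩ (by
        rintro _ ⟨u, hu, rfl⟩ w hw huw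
        refine ⟨⟨w, .inl hw⟩, hcl u hu _ ?_ ⟨fun h => huw.ne (congrArg Subtype.val h), .inl huw⟩, rfl⟩
        rintro ⟨i, hi⟩
        have h : f i = w := congrArg Subtype.val hi
        exact (hfm' i).1 (by rw [h]; exact hw))
    obtain ⟨w, hw, hwv⟩ := this (hK' v hv)
    exact Subtype.ext hwv ▸ hw
  obtain ⟨r', hr', hm'⟩ := hb _ _ _ _ (card_coe_lt (fun h => h.elim hz hz')) hI₂
  obtain ⟨r₂, hr, hr₂⟩ := hr'.extend
  -- no vertex lies below all three boundary vertices: such vertices would form a third part of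
  -- the separation, and there would be a `K₃,₃` minor
  have hJ : ∀ v, v ∉ K → v ∉ bd G K → ¬ ∀ i, r₁ i v < r₁ i (f i) := by
    intro v₀ hv₀ hv₀X hv₀J
    have hcl : ∀ u, (u ∉ K ∧ u ∉ bd G K ∧ ∀ i, r₁ i u < r₁ i (f i)) → ∀ v, v ∉ bd G K →
        G.Adj u v → (v ∉ K ∧ v ∉ bd G K ∧ ∀ i, r₁ i v < r₁ i (f i)) := by
      rintro u ⟨huK, huX, hu⟩ v hvX huv
      have hvK : v ∉ K := fun h => huX ⟨huK, v, h, huv.symm⟩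
      have hne : ∀ w, w ∉ bd G K → ∀ j, f j ≠ w := fun w hw j h => hw (h ▸ hfm' j)
      refine ⟨hvK, hvX, fun j => ?_⟩
      have habove : ∀ i k, k ≠ i → r₁ i (f k) < r₁ i u := by
        intro i k hki
        obtain ⟨k', l, hk', hl, _, hc⟩ := fin3_others i
        obtain ⟨i', h1, h2⟩ := h₁.edge _ (hfm' k').1 _ (hfm' l).1 (.inr ⟨hfm' k', hfm' l⟩) u huK
          (hne u huX k').symm (hne u huX l).symm
        have h3 := hu i'
        rcases hc i' with rfl | rfl | rfl
        · rcases hc k with rfl | rfl | rfl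
          exacts [absurd rfl hki, h1, h2]
        · omega
        · omega
      obtain ⟨i, h1, h2⟩ := h₁.edge u huK v hvK (.inl huv) (f j) (hfm' j).1 (hne u huX j)
        (hne v hvX j)
      by_cases hji : j = i
      · rw [hji] at h2 ⊢; exact h2
      · have := habove i j hji; omega
    obtain ⟨C, hCJ, hvC, hC, hCcl⟩ := exists_comp G
      (S := {u | u ∉ K ∧ u ∉ bd G K ∧ ∀ i, r₁ i u < r₁ i (f i)}) (z := v₀) ⟨hv₀, hv₀X, hv₀J⟩
    have hCcl' : ∀ u ∈ C, ∀ v, v ∉ bd G K → G.Adj u v → v ∈ C := fun u hu v hv huv =>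
      hCcl u hu v (hcl u (hCJ hu) v hv huv) huv
    have hCe : ∀ i, e i ∉ C := by
      intro i hi
      obtain ⟨j, hj, hji⟩ := hI.rng i
      rw [← hji] at hi
      obtain ⟨h1, h2, h3⟩ := hCJ hi
      have h4 := hm j hj (f j) (hfm' j).1 (fun h => h2 (h ▸ hfm' j))
      have h5 := h3 j
      omega
    have hCX : bd G C ⊆ bd G K := by
      rintro v ⟨hv, u, hu, huv⟩
      by_contra h
      exact hv (hCcl' u hu v h huv)
    have hXC : bd G K ⊆ bd G C := by
      refine hmin C ⟨v₀, hvC⟩ hCe ?_ hCX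
      obtain ⟨k, hk⟩ := hK.ne
      exact ⟨k, fun h => (hCJ h).1 hk, fun h => (hCX h).1 hk⟩
    have hWC : Disjoint W C := by
      rw [Set.disjoint_left]
      intro w hw hwC
      obtain ⟨i, hi⟩ := hWe
      have := hW.2 (W ∩ C) Set.inter_subset_left ⟨w, hw, hwC⟩ (fun u hu v hv huv =>
        ⟨hv, hCcl' u hu.2 v (Set.disjoint_left.1 hWX hv) huv⟩)
      exact hCe i (this hi).2
    have hKC : Disjoint K C := Set.disjoint_left.2 fun v hv h => (hCJ h).1 hv
    have hCdX : Disjoint C (bd G K) := Set.disjoint_left.2 fun v hv => (hCJ hv).2.1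
    have hKX : Disjoint K (bd G K) := Set.disjoint_left.2 fun v hv h => h.1 hv
    refine k33_of hI.good ![K, C, W] (fun i => {f i}) ?_ (fun i => sconn_singleton G _) ?_ ?_ ?_ ?_
    · intro i
      fin_cases i
      exacts [hKc, hC, hW]
    · intro i j hij
      fin_cases i <;> fin_cases j <;> first | exact absurd rfl hij | skip
      exacts [hKC, hWK.symm, hKC.symm, hWC.symm, hWK, hWC]
    · intro i j hij
      simpa using hf.ne hij
    · intro i j
      rw [Set.disjoint_singleton_right]
      fin_cases i
      · exact fun h => Set.disjoint_left.1 hKX h (hfm' j)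
      · exact fun h => Set.disjoint_left.1 hCdX h (hfm' j)
      · exact fun h => Set.disjoint_left.1 hWX h (hfm' j)
    · intro i j
      have : ∀ S, bd G K ⊆ bd G S → ∃ u ∈ S, ∃ v ∈ ({f j} : Set V), G.Adj u v := by
        intro S hS
        obtain ⟨_, u, hu, h⟩ := hS (hfm' j)
        exact ⟨u, hu, _, rfl, h⟩
      fin_cases i
      exacts [this K subset_rfl, this C hXC, this W hWb]
  obtain ⟨R, hR, hRm⟩ := glue (G := G) (K := K) (X := bd G K) hbd (o := o)
    (fun p hp q hq h => by
      obtain ⟨i, rfl⟩ := hXf p hp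
      obtain ⟨j, rfl⟩ := hXf q hq
      rw [ho, ho] at h; rw [h])
    (c := fun i => r₁ i (f i)) (h₁.mono fun _ _ => .inl) (hr₂.mono fun _ _ => .inl)
    (fun p hp v hv hvp => by
      obtain ⟨i, rfl⟩ := hXf p hp
      rw [ho, hr i ⟨v, hv⟩, hr i ⟨f i, .inr hp⟩]
      exact hm' i trivial _ fun h => hvp (congrArg Subtype.val h))
    (fun p hp => by
      obtain ⟨i, rfl⟩ := hXf p hp
      rw [ho])
    (fun p hp i hi => by
      obtain ⟨k, rfl⟩ := hXf p hp
      rw [ho] at hi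
      exact hfm i k hi.symm)
    (fun v hv hvX => by
      have := hJ v hv hvX
      push Not at this
      obtain ⟨i, hi⟩ := this
      have hne : r₁ i (f i) ≠ r₁ i v := fun h =>
        hvX (h₁.inj i _ (hfm' i).1 v hv h ▸ hfm' i)
      refine ⟨i, hi, fun p hp => ?_⟩
      obtain ⟨k, rfl⟩ := hXf p hp
      have := hfle i k
      omega)
    (fun u hu v hv huv => by
      obtain ⟨j, h1, h2⟩ : ∃ j, f j ≠ u ∧ f j ≠ v := by
        by_contra hno
        push Not at hno
        have e01 := hf.ne (show (0 : Fin 3) ≠ 1 by decide)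
        have e02 := hf.ne (show (0 : Fin 3) ≠ 2 by decide)
        have e12 := hf.ne (show (1 : Fin 3) ≠ 2 by decide)
        have h0 := hno 0
        have h1 := hno 1
        have h2 := hno 2
        grind
      obtain ⟨i, h3, h4⟩ := h₁.edge u hu v hv (.inl huv) (f j) (hfm' j).1 h1 h2
      exact ⟨i, h3.trans_le (hfle i j), h4.trans_le (hfle i j)⟩)
    (fun v hv => by
      obtain ⟨j, h1⟩ : ∃ j, f j ≠ v := by
        by_contra hno
        push Not at hno
        exact hf.ne (show (0 : Fin 3) ≠ 1 by decide) ((hno 0).trans (hno 1).symm)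
      obtain ⟨i, h3⟩ := h₁.anti v hv (f j) (hfm' j).1 h1
      exact ⟨i, h3.trans_le (hfle i j)⟩)
  refine ⟨R, hR, fun i hi => hRm i (e i) (hK.root i) ?_ (hm i hi)⟩
  by_cases h : f i = e i
  · show r₁ i (f i) ≤ _
    rw [h]
  · exact (hm i hi (f i) (hfm' i).1 h).le

/-- A rooted instance with a small separation is solved if all smaller ones are. -/
lemma Red.solved (hb : SolvedBelow (Nat.card V)) (hI : Inst G I e) {K : Set V} (hK : Red G e K) :
    Solved G I e := by
  obtain ⟨K, hK, hKc, hmin⟩ := exists_red_min hK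
  obtain ⟨W, hW, hWK, hWX, hWb, hWe⟩ := exists_full hI hK hmin
  obtain ⟨a, b, c, habc⟩ := ncard_cover (X := bd G K)
    (by rcases hK.card with h | ⟨h, _⟩ <;> omega) (e 0)
  have hg₁ : Good (torso G Kᶜ (bd G K)) := hI.good.torso hKc disjoint_compl_right
    (fun p hp => by obtain ⟨_, w, hw, h⟩ := hp; exact ⟨w, hw, h.symm⟩) habc
  have hg₂ : Good (torso G (K ∪ bd G K) (bd G K)) := hI.good.torso hW
    (Set.disjoint_union_right.2 ⟨hWK, hWX⟩)
    (fun p hp => by obtain ⟨_, w, hw, h⟩ := hWb hp; exact ⟨w, hw, h.symm⟩) habc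
  obtain ⟨k, hk⟩ := hK.ne
  obtain ⟨r', hr', hm'⟩ := hb _ _ _ _ (card_coe_lt (S := Kᶜ) (z := k) (fun h => h hk))
    (hI.outer hK.root hg₁)
  obtain ⟨r₁, hr, h₁⟩ := hr'.extend
  have hm : ∀ i ∈ I, ∀ v, v ∉ K → v ≠ e i → r₁ i v < r₁ i (e i) := by
    intro i hi v hv hve
    rw [hr i ⟨v, hv⟩, hr i ⟨e i, hK.root i⟩]
    exact hm' i hi _ fun h => hve (congrArg Subtype.val h)
  rcases hK.card with h | ⟨h, _⟩
  · exact red_two hb hI hK h hWK hWX hWb hg₂ h₁ hm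
  · exact red_three hb hI hK hKc hmin h hW hWK hWX hWb (hWe h) hg₂ h₁ hm

end Red

/-! ### Expanding a contracted edge -/

section Alternation
variable {V : Type} {G : SimpleGraph V}

lemma pre_induce {S T : Set V} (h : Pre G (S ∩ T)) : Pre (G.induce S) (Subtype.val ⁻¹' T) := by
  intro A hA ⟨a, ha⟩ hcl v hv
  have := h (Subtype.val '' A) (by rintro _ ⟨w, hw, rfl⟩; exact ⟨w.2, hA hw⟩) ⟨a, a, ha, rfl⟩ (by
    rintro _ ⟨u, hu, rfl⟩ w hw huw
    exact ⟨⟨w, hw.1⟩, hcl u hu _ hw.2 huw, rfl⟩)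
  obtain ⟨w, hw, hwv⟩ := this ⟨v.2, hv⟩
  exact Subtype.ext hwv ▸ hw

lemma pre_of_induce {S T : Set V} (h : Pre (G.induce S) (Subtype.val ⁻¹' T)) : Pre G (S ∩ T) := by
  intro A hA ⟨a, ha⟩ hcl v hv
  exact h (Subtype.val ⁻¹' A) (fun w hw => (hA hw).2) ⟨⟨a, (hA ha).1⟩, ha⟩
    (fun u hu w hw huw => hcl u hu w ⟨w.2, hw⟩ huw) (a := ⟨v, hv.1⟩) hv.2

lemma twoConn_induce {S : Set V} (h : ∀ c ∈ S, Pre G (S ∩ {c}ᶜ)) : TwoConn (G.induce S) := by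
  rintro ⟨c, hc⟩
  have := pre_induce (h c hc)
  convert this using 1
  ext v
  simp [Subtype.ext_iff]

variable [Finite V]

/-- The neighbours `s`, `s'` of `a` and `t`, `t'` of `x` do not alternate in the ranking `1`. The
graph without `a` and `x` is 2-connected, so it contains two disjoint connected sets that join `s`
to `s'` and `t` to `t'`, which must not cross, or four sets in cyclic order around `s`, `t`, `s'`,
`t'`, which form a `K₃,₃` with `a` and `x`. -/
lemma no_alternation (hG : Good G) {a x : V} (hax : G.Adj a x)
    (hD : ∀ c ∈ ({a, x} : Set V)ᶜ, Pre G ({a, x}ᶜ ∩ {c}ᶜ)) {r : Fin 3 → V → ℕ}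
    (hr : ValidOn {a, x}ᶜ G.Adj r)
    (hvis : ∀ v ∈ ({a, x} : Set V)ᶜ, G.Adj a v ∨ G.Adj x v → ∀ w ∈ ({a, x} : Set V)ᶜ, w ≠ v →
      r 1 v < r 1 w ∨ r 2 v < r 2 w)
    {s t s' t' : V} (hs : G.Adj a s) (hsx : s ≠ x) (hs' : G.Adj a s') (hsx' : s' ≠ x)
    (ht : G.Adj x t) (hta : t ≠ a) (ht' : G.Adj x t') (hta' : t' ≠ a)
    (h1 : r 1 s < r 1 t) (h2 : r 1 t < r 1 s') (h3 : r 1 s' < r 1 t') : False := by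
  have := Fintype.ofFinite ↥({a, x} : Set V)ᶜ
  have mem : ∀ {v}, v ≠ a → v ≠ x → v ∈ ({a, x} : Set V)ᶜ := by
    intro v h h'; simp [h, h']
  have ms := mem hs.ne.symm hsx
  have ms' := mem hs'.ne.symm hsx'
  have mt := mem hta ht.ne.symm
  have mt' := mem hta' ht'.ne.symm
  have hT := twoConn_induce hD
  have hinj : Function.Injective
      (![⟨s, ms⟩, ⟨t, mt⟩, ⟨s', ms'⟩, ⟨t', mt'⟩] : Fin 4 → ↥({a, x} : Set V)ᶜ) := by
    have key : ∀ u v : ↥({a, x} : Set V)ᶜ, r 1 u < r 1 v → u ≠ v := by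
      rintro u v h rfl; omega
    have e1 := key ⟨s, ms⟩ ⟨t, mt⟩ h1
    have e2 := key ⟨s, ms⟩ ⟨s', ms'⟩ (h1.trans h2)
    have e3 := key ⟨s, ms⟩ ⟨t', mt'⟩ (h1.trans (h2.trans h3))
    have e4 := key ⟨t, mt⟩ ⟨s', ms'⟩ h2
    have e5 := key ⟨t, mt⟩ ⟨t', mt'⟩ (h2.trans h3)
    have e6 := key ⟨s', ms'⟩ ⟨t', mt'⟩ h3
    intro i j hij
    fin_cases i <;> fin_cases j <;> first
      | rfl
      | exact absurd hij e1
      | exact absurd hij e2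
      | exact absurd hij e3
      | exact absurd hij e4
      | exact absurd hij e5
      | exact absurd hij e6
      | exact absurd hij.symm e1
      | exact absurd hij.symm e2
      | exact absurd hij.symm e3
      | exact absurd hij.symm e4
      | exact absurd hij.symm e5
      | exact absurd hij.symm e6
  obtain ⟨F, hF, hFc, hFd, hF'⟩ := hT.four hinj
  rcases hF' with ⟨⟨u, hu, v, hv, huv⟩, u', hu', v', hv', huv'⟩ | ⟨h01, h12, h23, h30⟩
  · have hr' : ValidOn Set.univ (G.induce ({a, x} : Set V)ᶜ).Adj fun i v => r i v := by
      refine ⟨fun i u _ v _ h => Subtype.ext (hr.inj i u u.2 v v.2 h), fun u _ v _ huv z _ h h' => ?_,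
        fun u _ z _ h => hr.anti u u.2 z z.2 fun h' => h (Subtype.ext h')⟩
      exact hr.edge u u.2 v v.2 huv z z.2 (fun h' => h (Subtype.ext h'))
        (fun h'' => h' (Subtype.ext h''))
    refine hr'.no_cross (P := F 0 ∪ F 2) (Q := F 1 ∪ F 3) (s := ⟨s, ms⟩) (s' := ⟨s', ms'⟩)
      (t := ⟨t, mt⟩) (t' := ⟨t', mt'⟩) ((hFc 0).union (hFc 2) hu hv huv)
      ((hFc 1).union (hFc 3) hu' hv' huv') ?_ (.inl (hF 0)) (.inr (hF 2)) (.inl (hF 1))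
      (.inr (hF 3)) ?_ h1 h2 h3
    · simp only [Set.disjoint_union_left, Set.disjoint_union_right]
      exact ⟨⟨hFd _ _ (by decide), hFd _ _ (by decide)⟩, hFd _ _ (by decide), hFd _ _ (by decide)⟩
    · intro v hv w hwv
      refine hvis v v.2 ?_ w w.2 fun h => hwv (Subtype.ext h)
      rcases hv with rfl | rfl | rfl | rfl
      exacts [.inl hs, .inl hs', .inr ht, .inr ht']
  · have hc : ∀ i, SConn G (Subtype.val '' F i) := fun i => sconn_induce (hFc i)
    have hd : ∀ i j, i ≠ j → Disjoint (Subtype.val '' F i) (Subtype.val '' F j) := fun i j h =>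
      (Set.disjoint_image_iff Subtype.val_injective).2 (hFd i j h)
    have hda : ∀ i, Disjoint (Subtype.val '' F i) {a} := by
      intro i
      rw [Set.disjoint_singleton_right]
      rintro ⟨v, _, hv⟩
      exact v.2 (.inl hv)
    have hdx : ∀ i, Disjoint (Subtype.val '' F i) {x} := by
      intro i
      rw [Set.disjoint_singleton_right]
      rintro ⟨v, _, hv⟩
      exact v.2 (.inr hv)
    have ad : ∀ {i j}, (∃ u ∈ F i, ∃ v ∈ F j, (G.induce ({a, x} : Set V)ᶜ).Adj u v) →
        (∃ u ∈ Subtype.val '' F i, ∃ v ∈ Subtype.val '' F j, G.Adj u v) := by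
      rintro i j ⟨u, hu, v, hv, huv⟩
      exact ⟨u, ⟨u, hu, rfl⟩, v, ⟨v, hv, rfl⟩, huv⟩
    have sw : ∀ {S T : Set V}, (∃ u ∈ S, ∃ v ∈ T, G.Adj u v) → ∃ u ∈ T, ∃ v ∈ S, G.Adj u v := by
      rintro S T ⟨u, hu, v, hv, h⟩
      exact ⟨v, hv, u, hu, h.symm⟩
    have dax : Disjoint ({x} : Set V) {a} := Set.disjoint_singleton.2 hax.ne.symm
    refine k33_of hG ![Subtype.val '' F 0, Subtype.val '' F 2, {x}]
      ![Subtype.val '' F 1, Subtype.val '' F 3, {a}] ?_ ?_ ?_ ?_ ?_ ?_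
    · intro i
      fin_cases i
      exacts [hc 0, hc 2, sconn_singleton G x]
    · intro i
      fin_cases i
      exacts [hc 1, hc 3, sconn_singleton G a]
    · intro i j hij
      fin_cases i <;> fin_cases j <;> first | exact absurd rfl hij | skip
      exacts [hd 0 2 (by decide), hdx 0, hd 2 0 (by decide), hdx 2, (hdx 0).symm, (hdx 2).symm]
    · intro i j hij
      fin_cases i <;> fin_cases j <;> first | exact absurd rfl hij | skip
      exacts [hd 1 3 (by decide), hda 1, hd 3 1 (by decide), hda 3, (hda 1).symm, (hda 3).symm]
    · intro i j
      fin_cases i <;> fin_cases j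
      exacts [hd 0 1 (by decide), hd 0 3 (by decide), hda 0, hd 2 1 (by decide),
        hd 2 3 (by decide), hda 2, (hdx 1).symm, (hdx 3).symm, dax]
    · intro i j
      fin_cases i <;> fin_cases j
      exacts [ad h01, sw (ad h30), ⟨s, ⟨_, hF 0, rfl⟩, a, rfl, hs.symm⟩, sw (ad h12), ad h23,
        ⟨s', ⟨_, hF 2, rfl⟩, a, rfl, hs'.symm⟩, ⟨x, rfl, t, ⟨_, hF 1, rfl⟩, ht⟩,
        ⟨x, rfl, t', ⟨_, hF 3, rfl⟩, ht'⟩, ⟨x, rfl, a, rfl, hax.symm⟩]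

/-- Two adjacent vertices do not have three common neighbours if their removal leaves a 2-connected
graph. -/
lemma no_three_common (hG : Good G) {a x : V} (hax : G.Adj a x)
    (hD : ∀ c ∈ ({a, x} : Set V)ᶜ, Pre G ({a, x}ᶜ ∩ {c}ᶜ)) {m : Fin 3 → V}
    (hm : Function.Injective m) (ha : ∀ i, G.Adj a (m i)) (hx : ∀ i, G.Adj x (m i)) : False := by
  have := Fintype.ofFinite ↥({a, x} : Set V)ᶜ
  have mem : ∀ i, m i ∈ ({a, x} : Set V)ᶜ := by
    intro i
    simp [(ha i).ne.symm, (hx i).ne.symm]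
  obtain ⟨F, hF, hFc, hFd, hFa⟩ := (twoConn_induce hD).three (s := fun i => ⟨m i, mem i⟩)
    fun i j h => hm (congrArg Subtype.val h)
  refine k5_of hG (fun i => Subtype.val '' F i) {a} {x} (fun i => sconn_induce (hFc i))
    (sconn_singleton G a) (sconn_singleton G x)
    (fun i j h => (Set.disjoint_image_iff Subtype.val_injective).2 (hFd i j h)) ?_ ?_
    (Set.disjoint_singleton.2 hax.ne) ?_ (fun i => ⟨m i, ⟨_, hF i, rfl⟩, a, rfl, (ha i).symm⟩)
    (fun i => ⟨m i, ⟨_, hF i, rfl⟩, x, rfl, (hx i).symm⟩) ⟨a, rfl, x, rfl, hax⟩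
  · intro i
    rw [Set.disjoint_singleton_right]
    rintro ⟨v, _, hv⟩
    exact v.2 (.inl hv)
  · intro i
    rw [Set.disjoint_singleton_right]
    rintro ⟨v, _, hv⟩
    exact v.2 (.inr hv)
  · intro i j hij
    obtain ⟨u, hu, v, hv, huv⟩ := hFa i j hij
    exact ⟨u, ⟨u, hu, rfl⟩, v, ⟨v, hv, rfl⟩, huv⟩

end Alternation

/-! ### Irreducible instances -/

section Contraction
variable {V : Type} {G : SimpleGraph V} {I : Set (Fin 3)} {e : Fin 3 → V}

lemma ncard_le_three (a b c : V) : ({a, b, c} : Set V).ncard ≤ 3 :=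
  (Set.ncard_insert_le _ _).trans (Nat.succ_le_succ (Set.ncard_insert_le _ _ |>.trans (by simp)))

variable [Finite V]

/-- In an irreducible instance no nonempty set without roots has a boundary of at most three
vertices that do not include all roots. -/
lemma no_small_bd (hR : ∀ K, ¬ Red G e K) {K : Set V} {a b c : V} (ne : K.Nonempty)
    (root : ∀ i, e i ∉ K) (hbd : bd G K ⊆ {a, b, c}) {i : Fin 3} (hi : e i ∉ ({a, b, c} : Set V)) :
    False := by
  have h : (bd G K).ncard ≤ 3 := (Set.ncard_le_ncard hbd).trans (ncard_le_three a b c)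
  have h' : (bd G K).ncard ≤ 2 ∨ (bd G K).ncard = 3 := by omega
  exact hR K ⟨ne, root, ⟨e i, root i, fun h => hi (hbd h)⟩,
    h'.imp id fun h => ⟨h, i, fun h => hi (hbd h)⟩⟩

/-- Removing at most three vertices that do not include all roots does not disconnect an
irreducible instance. -/
lemma pre_compl (hI : Inst G I e) (hR : ∀ K, ¬ Red G e K) {a b c : V} {i : Fin 3}
    (hi : e i ∉ ({a, b, c} : Set V)) : Pre G ({a, b, c} : Set V)ᶜ := by
  have key : ∀ A ⊆ ({a, b, c} : Set V)ᶜ, A.Nonempty →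
      (∀ u ∈ A, ∀ v ∈ ({a, b, c} : Set V)ᶜ, G.Adj u v → v ∈ A) → e i ∈ A := by
    intro A hA ne hcl
    by_contra hiA
    refine no_small_bd hR ne (fun j hj => hiA ?_) ?_ hi
    · rcases hI.adj_or i j with h | h
      · rw [h]; exact hj
      · exact hcl _ hj _ hi h.symm
    · rintro v ⟨hv, u, hu, huv⟩
      by_contra h
      exact hv (hcl u hu v h huv)
  intro A hA ne hcl v hv
  by_contra hvA
  have h1 := key A hA ne hcl
  have h2 := key ({a, b, c}ᶜ \ A) Set.sdiff_subset ⟨v, hv, hvA⟩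
    fun u hu w hw huw => ⟨hw, fun h => hu.2 (hcl w h u hu.1 huw.symm)⟩
  exact h2.2 h1

/-- Rankings of the graph obtained by contracting an edge at the root `e 0` can be expanded. The
hypotheses say that the graph without `e 0` and `x` is 2-connected, that the contracted graph is a
rooted instance, and that `x` has two neighbours besides `e 0`; in the case of two roots, `x` must
not be a neighbour of `e 1`. -/
lemma expand (hb : SolvedBelow (Nat.card V)) (hI : Inst G I e) {x : V} (hax : G.Adj (e 0) x)
    (hxe : ∀ i, e i ≠ x) (hD : ∀ c ∈ ({e 0, x} : Set V)ᶜ, Pre G ({e 0, x}ᶜ ∩ {c}ᶜ))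
    (hpre : I = Set.univ → Pre G (Set.range e ∪ {x})ᶜ)
    (hdeg : ∀ c, ∃ b, b ≠ e 0 ∧ b ≠ c ∧ G.Adj x b) (hx1 : I = Set.univ ∨ ¬ G.Adj x (e 1)) :
    Solved G I e := by
  have hne : e 0 ≠ x := hax.ne
  -- the contracted graph
  have hIH : Inst (quo G (contr hne)) I (fun i => ⟨e i, hxe i⟩) := by
    refine ⟨hI.good.quo (contr_sconn hne hax), hI.idx, fun i => ?_, fun i hi j hj hij => ?_,
      fun hu => quo_pre (contr_surj hne) ?_⟩
    · obtain ⟨j, hj, h⟩ := hI.rng i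
      exact ⟨j, hj, Subtype.ext h⟩
    · have h := hI.adj i hi j hj hij
      exact ⟨fun h' => h.ne (congrArg Subtype.val h'), e i, e j, contr_of_ne hne (hxe i),
        contr_of_ne hne (hxe j), h⟩
    · convert hpre hu using 1
      ext v
      by_cases hv : v = x
      · subst hv
        simp only [Set.mem_preimage, Set.mem_compl_iff, contr_self]
        exact iff_of_false (fun h => h ⟨0, rfl⟩) (fun h => h (.inr rfl))
      · simp [contr_of_ne hne hv, hv, Subtype.ext_iff]
  obtain ⟨r', hr', hm'⟩ := hb _ _ _ _ (card_coe_lt (S := {v | v ≠ x}) (z := x) (fun h => h rfl)) hIH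
  obtain ⟨r, hr, hrv⟩ := ValidOn.extend_of (S := {v | v ≠ x}) hr'
    (E := fun u v => G.Adj u v ∨ (u = e 0 ∧ G.Adj x v) ∨ (v = e 0 ∧ G.Adj u x)) (by
      rintro ⟨u, hu⟩ ⟨v, hv⟩ huv (h | ⟨rfl, h⟩ | ⟨rfl, h⟩)
      · exact ⟨huv, u, v, contr_of_ne hne hu, contr_of_ne hne hv, h⟩
      · exact ⟨huv, x, v, contr_self hne, contr_of_ne hne hv, h⟩
      · exact ⟨huv, u, x, contr_of_ne hne hu, contr_self hne, h⟩)
  have hm : ∀ i ∈ I, ∀ v, v ≠ e i → v ≠ x → r i v < r i (e i) := by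
    intro i hi v hve hvx
    rw [hr i ⟨v, hvx⟩, hr i ⟨e i, hxe i⟩]
    exact hm' i hi _ fun h => hve (congrArg Subtype.val h)
  have h10 : e 1 ≠ e 0 := (hI.adj 0 hI.zero_mem 1 hI.one_mem (by decide)).ne.symm
  have ha1 : G.Adj (e 0) (e 1) := hI.adj 0 hI.zero_mem 1 hI.one_mem (by decide)
  have ha := hm 0 hI.zero_mem
  have hvis : ∀ v, v ≠ e 0 → v ≠ x → G.Adj (e 0) v ∨ G.Adj x v → ∀ w, w ≠ e 0 → w ≠ x → w ≠ v →
      r 1 v < r 1 w ∨ r 2 v < r 2 w := by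
    intro v hva hvx hv w hwa hwx hwv
    have := hrv.edge (e 0) hne v hvx (hv.imp id fun h => .inl ⟨rfl, h⟩) w hwx hwa hwv
    rw [exists_three] at this
    have := ha w hwa hwx
    omega
  have hinj : ∀ i u v, u ≠ x → v ≠ x → r i u = r i v → u = v := fun i u v hu hv =>
    hrv.inj i u hu v hv
  have hrD : ValidOn ({e 0, x} : Set V)ᶜ G.Adj r := by
    have hsub : ∀ v ∈ ({e 0, x} : Set V)ᶜ, v ≠ x := fun v hv h => hv (.inr h)
    exact ⟨fun i u hu v hv => hrv.inj i u (hsub u hu) v (hsub v hv),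
      fun u hu v hv h z hz => hrv.edge u (hsub u hu) v (hsub v hv) (.inl h) z (hsub z hz),
      fun u hu z hz => hrv.anti u (hsub u hu) z (hsub z hz)⟩
  have hout : ∀ v ∈ ({e 0, x} : Set V)ᶜ, v ≠ e 0 ∧ v ≠ x := fun v hv =>
    ⟨fun h => hv (.inl h), fun h => hv (.inr h)⟩
  have hvisD : ∀ v ∈ ({e 0, x} : Set V)ᶜ, G.Adj (e 0) v ∨ G.Adj x v →
      ∀ w ∈ ({e 0, x} : Set V)ᶜ, w ≠ v → r 1 v < r 1 w ∨ r 2 v < r 2 w := fun v hv h w hw =>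
    hvis v (hout v hv).1 (hout v hv).2 h w (hout w hw).1 (hout w hw).2
  -- neighbours of `e 0` and of `x` cannot alternate
  have alt : ∀ s t s' t', G.Adj (e 0) s → s ≠ x → G.Adj x t → t ≠ e 0 → G.Adj (e 0) s' → s' ≠ x →
      G.Adj x t' → t' ≠ e 0 → r 1 s < r 1 t → r 1 t < r 1 s' → r 1 s' < r 1 t' → False :=
    fun s t s' t' h1 h2 h3 h4 h5 h6 h7 h8 =>
      no_alternation hI.good hax hD hrD hvisD h1 h2 h5 h6 h3 h4 h7 h8
  have alt' : ∀ s t s' t', G.Adj x s → s ≠ e 0 → G.Adj (e 0) t → t ≠ x → G.Adj x s' → s' ≠ e 0 →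
      G.Adj (e 0) t' → t' ≠ x → r 1 s < r 1 t → r 1 t < r 1 s' → r 1 s' < r 1 t' → False := by
    intro s t s' t' h1 h2 h3 h4 h5 h6 h7 h8
    rw [Set.pair_comm] at hD hrD hvisD
    exact no_alternation hI.good hax.symm hD hrD (fun v hv h => hvisD v hv h.symm)
      h1 h2 h5 h6 h3 h4 h7 h8
  -- the extreme neighbours of `x`
  have hBne : {b | b ≠ e 0 ∧ G.Adj x b}.Nonempty := by
    obtain ⟨b, h1, _, h2⟩ := hdeg x
    exact ⟨b, h1, h2⟩
  obtain ⟨l, ⟨hla, hxl⟩, hlmin⟩ := Set.exists_min_image _ (r 1) (Set.toFinite _) hBne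
  obtain ⟨ρ, ⟨hρa, hxρ⟩, hρmax⟩ := Set.exists_max_image _ (r 1) (Set.toFinite _) hBne
  have hlx := hxl.ne.symm
  have hρx := hxρ.ne.symm
  have hlρ : r 1 l < r 1 ρ := by
    obtain ⟨b, h1, h2, h3⟩ := hdeg l
    have h4 := hlmin b ⟨h1, h3⟩
    have h5 := hρmax b ⟨h1, h3⟩
    have h6 : r 1 l ≠ r 1 b := fun h => h2 (hinj 1 l b hlx h3.ne.symm h).symm
    omega
  have hlρ' : l ≠ ρ := by rintro h; rw [h] at hlρ; omega
  -- if a neighbour `m` of `e 0` lies between `l` and `ρ`, then `ρ = e 1`, and there are three roots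
  -- since `x` is adjacent to `e 1`; now `l = e 2`, and `x` has no neighbours other than the roots,
  -- so that these separate `x` from `m`
  have hno : ∀ m, m ≠ x → G.Adj (e 0) m → r 1 l < r 1 m → r 1 m < r 1 ρ → False := by
    intro m hmx ham h1 h2
    have hρ1 : r 1 ρ ≤ r 1 (e 1) := by
      by_cases h : ρ = e 1
      · rw [h]
      · exact (hm 1 hI.one_mem ρ h hρx).le
    have hρe : ρ = e 1 := by
      by_contra h
      exact alt' l m ρ (e 1) hxl hla ham hmx hxρ hρa ha1 (hxe 1) h1 h2
        (hm 1 hI.one_mem ρ h hρx)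
    rcases hx1 with hu | hx1
    swap
    · exact hx1 (hρe ▸ hxρ)
    have h2I : (2 : Fin 3) ∈ I := hu ▸ trivial
    have ha2 : G.Adj (e 0) (e 2) := hI.adj 0 hI.zero_mem 2 h2I (by decide)
    have hlow : ∀ w, w ≠ e 0 → w ≠ x → w ≠ e 2 → r 1 (e 2) < r 1 w := by
      intro w h3 h4 h5
      have := hvis (e 2) ha2.ne.symm (hxe 2) (.inl ha2) w h3 h4 h5
      have := hm 2 h2I w h5 h4
      omega
    have hle : l = e 2 := by
      by_contra h
      exact alt (e 2) l m ρ ha2 (hxe 2) hxl hla ham hmx hxρ hρa (hlow l hla hlx h) h1 h2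
    have hmxn : ¬ G.Adj x m := by
      intro hxm
      have n1 : m ≠ l := by rintro rfl; omega
      have n2 : m ≠ ρ := by rintro rfl; omega
      refine no_three_common hI.good hax hD (injective_three n1 n2 hlρ') ?_ ?_
      · intro i
        fin_cases i
        exacts [ham, hle ▸ ha2, hρe ▸ ha1]
      · intro i
        fin_cases i
        exacts [hxm, hxl, hxρ]
    have hB : ∀ b, b ≠ e 0 → G.Adj x b → b = l ∨ b = ρ := by
      intro b hba hxb
      by_contra h
      push Not at h
      have hbx := hxb.ne.symm
      have h3 := hlmin b ⟨hba, hxb⟩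
      have h4 := hρmax b ⟨hba, hxb⟩
      have h5 : r 1 l ≠ r 1 b := fun h' => h.1 (hinj 1 l b hlx hbx h').symm
      have h6 : r 1 b ≠ r 1 ρ := fun h' => h.2 (hinj 1 b ρ hbx hρx h')
      have h7 : r 1 b ≠ r 1 m := fun h' => hmxn (hinj 1 b m hbx hmx h' ▸ hxb)
      rcases lt_or_gt_of_ne h7 with h8 | h8
      · exact alt l b m ρ (hle ▸ ha2) hlx hxb hba ham hmx hxρ hρa (by omega) h8 h2
      · exact alt' l m b ρ hxl hla ham hmx hxb hba (hρe ▸ ha1) hρx h1 h8 (by omega)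
    have hInt := hI.pre hu {x} (by rintro _ rfl ⟨i, hi⟩; exact hxe i hi) ⟨x, rfl⟩ (by
      rintro u hux v hv huv
      rw [Set.mem_singleton_iff.1 hux] at huv
      exfalso
      by_cases hv0 : v = e 0
      · exact hv ⟨0, hv0.symm⟩
      · rcases hB v hv0 huv with h | h
        · exact hv ⟨2, (h.trans hle).symm⟩
        · exact hv ⟨1, (h.trans hρe).symm⟩)
    refine hmx (hInt (a := m) ?_)
    rintro ⟨i, hi⟩
    fin_cases i
    · exact ham.ne hi
    · have hi : e 1 = m := hi
      rw [← hi, ← hρe] at h2; omega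
    · have hi : e 2 = m := hi
      rw [← hi, ← hle] at h1; omega
  obtain ⟨R, hR, hR0, hRm⟩ := split (l := l) (ρ := ρ) hne hrv ha ⟨hla, hlx, .inr hxl⟩
    ⟨hρa, hρx, .inr hxρ⟩ hlρ
    (by have := hvis ρ hρa hρx (.inr hxρ) l hla hlx hlρ'; omega)
    (fun b hba hxb => by
      refine ⟨hlmin b ⟨hba, hxb⟩, ?_⟩
      by_cases hbρ : b = ρ
      · rw [hbρ]
      · have h1 := hvis ρ hρa hρx (.inr hxρ) b hba hxb.ne.symm hbρ
        have h2 := hρmax b ⟨hba, hxb⟩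
        omega)
    (fun b hbx hab => by
      by_contra h
      push Not at h
      have hbρ : ρ ≠ b := by rintro rfl; omega
      have h1 := hvis b hab.ne.symm hbx (.inl hab) ρ hρa hρx hbρ
      exact hno b hbx hab h.1 (by omega))
  refine ⟨R, hR, fun i hi => ?_⟩
  by_cases h0 : i = 0
  · subst h0; exact hR0
  · exact hRm i h0 (e i) (hxe i) (hI.adj i hi 0 hI.zero_mem h0).ne fun v hv hvx => hm i hi v hv hvx

end Contraction

/-! ### The induction -/

section Step
variable {V : Type} {G : SimpleGraph V}

lemma bd_singleton_subset {x : V} {S : Set V} (h : ∀ v, G.Adj x v → v ∈ S) : bd G {x} ⊆ S := by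
  rintro v ⟨_, u, hu, huv⟩
  rw [Set.mem_singleton_iff.1 hu] at huv
  exact h v huv

lemma compl_pair_inter (a b c : V) : ({a, b}ᶜ ∩ {c}ᶜ : Set V) = {a, b, c}ᶜ := by
  ext v
  simp only [Set.mem_inter_iff, Set.mem_compl_iff, Set.mem_insert_iff, Set.mem_singleton_iff]
  tauto

variable [Finite V] {I : Set (Fin 3)} {e : Fin 3 → V}

/-- If all vertices are roots, any rankings with the prescribed top vertices are valid. -/
lemma solved_of_all_roots (hI : Inst G I e) (h : ∀ v, ∃ i, v = e i) : Solved G I e := by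
  classical
  obtain ⟨n, ⟨f⟩⟩ := Finite.exists_equiv_fin V
  obtain ⟨r, hr1, hr2⟩ : ∃ r : Fin 3 → V → ℕ, (∀ i ∈ I, r i (e i) = n) ∧
      ∀ i v, ¬ (i ∈ I ∧ v = e i) → r i v = f v :=
    ⟨fun i v => if i ∈ I ∧ v = e i then n else f v, fun i hi => by simp [hi],
      fun i v h => by simp only [h, if_false]⟩
  have top : ∀ i ∈ I, ∀ v, v ≠ e i → r i v < r i (e i) := by
    intro i hi v hv
    rw [hr1 i hi, hr2 i v fun h => hv h.2]
    exact (f v).isLt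
  have hroot : ∀ v, ∃ i ∈ I, v = e i := by
    intro v
    obtain ⟨i, rfl⟩ := h v
    obtain ⟨j, hj, hji⟩ := hI.rng i
    exact ⟨j, hj, hji.symm⟩
  refine ⟨r, ⟨fun i u _ v _ huv => ?_, fun u _ v _ _ z _ hu hv => ?_, fun u _ z _ hz => ?_⟩, top⟩
  · by_contra hne
    by_cases hu : i ∈ I ∧ u = e i
    · have := top i hu.1 v fun h => hne (hu.2.trans h.symm)
      rw [← hu.2] at this; omega
    by_cases hv : i ∈ I ∧ v = e i
    · have := top i hv.1 u fun h => hne (h.trans hv.2.symm)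
      rw [← hv.2] at this; omega
    rw [hr2 i u hu, hr2 i v hv] at huv
    exact hne (f.injective (Fin.ext huv))
  · obtain ⟨i, hi, rfl⟩ := hroot z
    exact ⟨i, top i hi u hu.symm, top i hi v hv.symm⟩
  · obtain ⟨i, hi, rfl⟩ := hroot z
    exact ⟨i, top i hi u hz.symm⟩

/-- In an irreducible instance with three roots, removing the roots and one more vertex leaves a
connected graph: two components, the extra vertex and the roots would give a `K₅` minor. -/
lemma pre_roots_insert (hI : Inst G Set.univ e) (hR : ∀ K, ¬ Red G e K) {x : V}
    (hx : ∀ i, e i ≠ x) : Pre G (Set.range e ∪ {x})ᶜ := by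
  have key : ∀ A ⊆ (Set.range e ∪ {x})ᶜ, A.Nonempty →
      (∀ u ∈ A, ∀ v ∈ (Set.range e ∪ {x})ᶜ, G.Adj u v → v ∈ A) →
      ∃ K ⊆ A, SConn G K ∧ (∀ i, e i ∈ bd G K) ∧ x ∈ bd G K := by
    intro A hA ⟨a, ha⟩ hcl
    obtain ⟨K, hKA, haK, hK, hKcl⟩ := exists_comp G ha
    have hKcl' : ∀ u ∈ K, ∀ v ∈ (Set.range e ∪ {x})ᶜ, G.Adj u v → v ∈ K := fun u hu v hv huv =>
      hKcl u hu v (hcl u (hKA hu) v hv huv) huv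
    have hKe : ∀ i, e i ∉ K := fun i h => hA (hKA h) (.inl ⟨i, rfl⟩)
    have hKx : x ∉ K := fun h => hA (hKA h) (.inr rfl)
    have hb : bd G K ⊆ Set.range e ∪ {x} := by
      rintro v ⟨hv, u, hu, huv⟩
      by_contra h
      exact hv (hKcl' u hu v h huv)
    refine ⟨K, hKA, hK, fun i => ?_, ?_⟩
    · by_contra hi
      obtain ⟨j, k, hj, hk, _, hc⟩ := fin3_others i
      refine no_small_bd hR (a := e j) (b := e k) (c := x) (i := i) ⟨a, haK⟩ hKe ?_ ?_
      · intro v hv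
        rcases hb hv with ⟨l, rfl⟩ | rfl
        · rcases hc l with rfl | rfl | rfl
          exacts [absurd hv hi, .inl rfl, .inr (.inl rfl)]
        · exact .inr (.inr rfl)
      · rintro (h | h | h)
        exacts [hj (hI.inj trivial trivial h).symm, hk (hI.inj trivial trivial h).symm, hx i h]
    · by_contra h
      have := hI.pre rfl K (fun v hv hr => hA (hKA hv) (.inl hr)) ⟨a, haK⟩ (by
        intro u hu v hv huv
        by_cases hvx : v = x
        · subst hvx; exact absurd ⟨hKx, u, hu, huv⟩ h
        · exact hKcl' u hu v (fun h => h.elim hv hvx) huv)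
      exact hKx (this fun ⟨i, hi⟩ => hx i hi)
  intro A hA ne hcl v hv
  by_contra hvA
  obtain ⟨K, hKA, hK, hKe, hKx⟩ := key A hA ne hcl
  obtain ⟨L, hLA, hL, hLe, hLx⟩ := key ((Set.range e ∪ {x})ᶜ \ A) Set.sdiff_subset ⟨v, hv, hvA⟩
    fun u hu w hw huw => ⟨hw, fun h => hu.2 (hcl w h u hu.1 huw.symm)⟩
  have hadj : ∀ {p : V} {S : Set V}, p ∈ bd G S → ∃ u ∈ S, G.Adj p u := by
    rintro p S ⟨_, u, hu, h⟩
    exact ⟨u, hu, h.symm⟩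
  obtain ⟨k, hk, hxk⟩ := hadj hKx
  obtain ⟨m, hm, hxm⟩ := hadj hLx
  refine k5_of hI.good (fun i => {e i}) (K ∪ {x}) L (fun i => sconn_singleton G _)
    (hK.union (sconn_singleton G x) hk rfl hxk.symm) hL ?_ ?_ ?_ ?_ ?_ ?_ ?_
    ⟨x, .inr rfl, m, hm, hxm⟩
  · intro i j hij
    exact Set.disjoint_singleton.2 fun h => hij (hI.inj trivial trivial h)
  · intro i
    rw [Set.disjoint_singleton_left]
    rintro (h | h)
    exacts [(hKe i).1 h, hx i h]
  · intro i
    rw [Set.disjoint_singleton_left]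
    exact (hLe i).1
  · rw [Set.disjoint_left]
    rintro w (h | rfl) h'
    exacts [(hLA h').2 (hKA h), hLx.1 h']
  · intro i j hij
    exact ⟨_, rfl, _, rfl, hI.adj i trivial j trivial hij⟩
  · intro i
    obtain ⟨u, hu, h⟩ := hadj (hKe i)
    exact ⟨_, rfl, u, .inl hu, h⟩
  · intro i
    obtain ⟨u, hu, h⟩ := hadj (hLe i)
    exact ⟨_, rfl, u, hu, h⟩

/-- Irreducible instances with three roots: any neighbour of `e 0` other than the roots may be
contracted into `e 0`. -/
lemma solved_three (hb : SolvedBelow (Nat.card V)) (hI : Inst G Set.univ e)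
    (hR : ∀ K, ¬ Red G e K) (hv : ∃ v, ∀ i, v ≠ e i) : Solved G Set.univ e := by
  have h01 := hI.adj 0 trivial 1 trivial (by decide)
  have h02 := hI.adj 0 trivial 2 trivial (by decide)
  have h12 := hI.adj 1 trivial 2 trivial (by decide)
  have other : ∀ c, ∃ i, e i ≠ e 0 ∧ e i ≠ c := by
    intro c
    by_cases h : e 1 = c
    · exact ⟨2, h02.ne.symm, fun h' => h12.ne (h.trans h'.symm)⟩
    · exact ⟨1, h01.ne.symm, h⟩
  obtain ⟨x, hxe, hax⟩ : ∃ x, (∀ i, e i ≠ x) ∧ G.Adj (e 0) x := by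
    by_contra hno
    push Not at hno
    obtain ⟨v, hv⟩ := hv
    refine no_small_bd hR (K := (Set.range e)ᶜ) (a := e 1) (b := e 2) (c := e 2) (i := 0)
      ⟨v, fun ⟨i, hi⟩ => hv i hi.symm⟩ (fun i h => h ⟨i, rfl⟩) ?_ (by simp [h01.ne, h02.ne])
    rintro w ⟨hw, u, hu, huw⟩
    obtain ⟨i, rfl⟩ := not_not.1 hw
    fin_cases i
    exacts [absurd huw.symm (hno u fun i hi => hu ⟨i, hi⟩), .inl rfl, .inr (.inl rfl)]
  refine expand hb hI hax hxe (fun c _ => ?_) (fun _ => pre_roots_insert hI hR hxe) (fun c => ?_)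
    (.inl rfl)
  · rw [compl_pair_inter]
    obtain ⟨i, h1, h2⟩ := other c
    exact pre_compl hI hR (i := i) (by simp [h1, h2, hxe i])
  · by_contra hno
    push Not at hno
    obtain ⟨i, h1, h2⟩ := other c
    refine no_small_bd hR (K := {x}) (a := e 0) (b := c) (c := c) (i := i) ⟨x, rfl⟩ hxe
      (bd_singleton_subset fun v hv => ?_) (by simp [h1, h2])
    by_contra h
    simp only [Set.mem_insert_iff, Set.mem_singleton_iff, or_self, not_or] at h
    exact hno v h.1 h.2 hv

lemma pre_compl_pair (hI : Inst G I e) (hR : ∀ K, ¬ Red G e K) (a b : V) : Pre G {a, b}ᶜ := by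
  by_cases h : ∃ i, e i ∉ ({a, b} : Set V)
  · obtain ⟨i, hi⟩ := h
    have := pre_compl hI hR (a := a) (b := b) (c := b) (i := i) (by simpa using hi)
    simpa using this
  · push Not at h
    intro A hA ne hcl v hv
    by_contra hvA
    have hsub : bd G A ⊆ {a, b} := by
      rintro w ⟨hw, u, hu, huw⟩
      by_contra h
      exact hw (hcl u hu w h huw)
    exact hR A ⟨ne, fun i hi => hA hi (h i), ⟨v, hvA, fun h => hv (hsub h)⟩,
      .inl ((Set.ncard_le_ncard hsub).trans ((Set.ncard_insert_le _ _).trans (by simp)))⟩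

/-- Irreducible instances with two roots. The neighbour `x` to be contracted into `e 0` is chosen
such that `e 0`, `x` and `e 1` do not separate the graph. If `x` is adjacent to `e 1`, then it may
serve as a third root instead. -/
lemma solved_pair (hb : SolvedBelow (Nat.card V)) (hI : Inst G {0, 1} e)
    (hR : ∀ K, ¬ Red G e K) (h3 : ∀ e', Inst G Set.univ e' → Solved G Set.univ e')
    (hv : ∃ v, ∀ i, v ≠ e i) : Solved G {0, 1} e := by
  have h01 := hI.adj 0 hI.zero_mem 1 hI.one_mem (by decide)
  have hroot : ∀ v, (∀ i, e i ≠ v) ↔ v ≠ e 0 ∧ v ≠ e 1 := by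
    intro v
    refine ⟨fun h => ⟨(h 0).symm, (h 1).symm⟩, fun h i => ?_⟩
    obtain ⟨j, rfl | rfl, hj⟩ := hI.rng i
    · rw [← hj]; exact h.1.symm
    · rw [← hj]; exact h.2.symm
  obtain ⟨x, hax, hx1, hpx⟩ : ∃ x, G.Adj (e 0) x ∧ x ≠ e 1 ∧ Pre G {e 0, x, e 1}ᶜ := by
    obtain ⟨v, hv⟩ := hv
    obtain ⟨hv0, hv1⟩ := (hroot v).1 fun i => (hv i).symm
    by_cases hw : ∃ w, w ≠ v ∧ w ≠ e 0 ∧ w ≠ e 1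
    · obtain ⟨w, hwv, hw0, hw1⟩ := hw
      have := Fintype.ofFinite ↥({e 1} : Set V)ᶜ
      have hT : TwoConn (G.induce ({e 1} : Set V)ᶜ) := twoConn_induce fun c _ => by
        have := pre_compl_pair hI hR (e 1) c
        rwa [← Set.compl_union, Set.singleton_union]
      obtain ⟨y, hy, hp⟩ := hT.exists_contractible ⟨e 0, h01.ne⟩
        ⟨⟨v, hv1⟩, ⟨w, hw1⟩, fun h => hv0 (congrArg Subtype.val h),
          fun h => hw0 (congrArg Subtype.val h), fun h => hwv (congrArg Subtype.val h).symm⟩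
      refine ⟨y, hy, y.2, ?_⟩
      rw [← compl_pair_inter, Set.inter_comm]
      refine pre_of_induce ?_
      convert hp using 1
      ext u
      simp [Subtype.ext_iff]
    -- the graph has only three vertices
    · push Not at hw
      refine ⟨v, ?_, hv1, ?_⟩
      · by_contra hno
        refine no_small_bd hR (K := {v}) (a := e 1) (b := e 1) (c := e 1) (i := 0) ⟨v, rfl⟩
          (fun i h => hv i h.symm) (bd_singleton_subset fun u hu => ?_) (by simp [h01.ne])
        by_cases hu0 : u = e 0
        · exact absurd (hu0 ▸ hu.symm) hno
        · exact .inl (hw u hu.ne.symm hu0)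
      · rintro A hA ⟨a, ha⟩
        have h := hA ha
        simp only [Set.mem_compl_iff, Set.mem_insert_iff, Set.mem_singleton_iff, not_or] at h
        exact absurd (hw a h.2.1 h.1) h.2.2
  have hxe := (hroot x).2 ⟨hax.ne.symm, hx1⟩
  by_cases hx : G.Adj x (e 1)
  · have hI' : Inst G Set.univ ![e 0, e 1, x] := by
      refine ⟨hI.good, .inr rfl, fun i => ⟨i, trivial, rfl⟩, fun i _ j _ hij => ?_, fun _ => ?_⟩
      · fin_cases i <;> fin_cases j <;> first | exact absurd rfl hij | skip
        exacts [h01, hax, h01.symm, hx.symm, hax.symm, hx]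
      · convert hpx using 2
        ext v
        simp only [Set.mem_range, exists_three, Set.mem_insert_iff, Set.mem_singleton_iff,
          Matrix.cons_val_zero, Matrix.cons_val_one, Matrix.cons_val, eq_comm]
        tauto
    obtain ⟨r, hr, hm⟩ := h3 _ hI'
    refine ⟨r, hr, ?_⟩
    rintro i (rfl | rfl)
    exacts [hm 0 trivial, hm 1 trivial]
  · refine expand hb hI hax hxe (fun c hc => ?_) (fun h => ?_) (fun c => ?_) (.inr hx)
    · rw [compl_pair_inter]
      by_cases hc1 : e 1 = c
      · exact hc1 ▸ hpx
      · exact pre_compl hI hR (i := 1) (by simp [h01.ne.symm, hx1.symm, hc1])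
    · have : (2 : Fin 3) ∈ ({0, 1} : Set (Fin 3)) := h ▸ trivial
      simp at this
    · by_contra hno
      push Not at hno
      by_cases hc1 : e 1 = c
      · refine no_small_bd hR (K := {x}) (a := e 0) (b := e 0) (c := e 0) (i := 1) ⟨x, rfl⟩ hxe
          (bd_singleton_subset fun v hv => ?_) (by simp [h01.ne.symm])
        by_contra h
        simp only [Set.mem_insert_iff, Set.mem_singleton_iff, or_self] at h
        exact hno v h (fun h' => hx (hc1 ▸ h' ▸ hv)) hv
      · refine no_small_bd hR (K := {x}) (a := e 0) (b := c) (c := c) (i := 1) ⟨x, rfl⟩ hxe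
          (bd_singleton_subset fun v hv => ?_) (by simp [h01.ne.symm, hc1])
        by_contra h
        simp only [Set.mem_insert_iff, Set.mem_singleton_iff, or_self, not_or] at h
        exact hno v h.1 h.2 hv

end Step

/-- Every rooted instance is solved. -/
lemma solvedBelow (n : ℕ) : SolvedBelow n := by
  induction n with
  | zero => exact fun V _ G I e h => absurd h (Nat.not_lt_zero _)
  | succ n ih =>
    intro V _ G I e hn hI
    have hb : SolvedBelow (Nat.card V) := fun W _ G' I' e' h =>
      ih W G' I' e' (by omega)
    have h3 : ∀ e', Inst G Set.univ e' → Solved G Set.univ e' := by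
      intro e' hI'
      by_cases hR : ∃ K, Red G e' K
      · obtain ⟨K, hK⟩ := hR
        exact hK.solved hb hI'
      push Not at hR
      by_cases hv : ∃ v, ∀ i, v ≠ e' i
      · exact solved_three hb hI' hR hv
      · push Not at hv
        exact solved_of_all_roots hI' hv
    rcases hI.idx with rfl | rfl
    · by_cases hR : ∃ K, Red G e K
      · obtain ⟨K, hK⟩ := hR
        exact hK.solved hb hI
      push Not at hR
      by_cases hv : ∃ v, ∀ i, v ≠ e i
      · exact solved_pair hb hI hR h3 hv
      · push Not at hv
        exact solved_of_all_roots hI hv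
    · exact h3 e hI

lemma Good.isPlanar {V : Type} [Finite V] {G : SimpleGraph V} (hG : Good G) : IsPlanar G := by
  obtain ⟨r, hr⟩ := solved_any (fun I e => solvedBelow _ V G I e (Nat.lt_succ_self _)) hG
  exact hr.isPlanar

end Wagner

/-- Wagner's theorem (one direction): a simple graph with no `K₅` minor and no
`K₃,₃` minor is planar. -/
theorem wagner {V : Type} [Fintype V] (G : SimpleGraph V)
    (h5 : ¬ (⊤ : SimpleGraph (Fin 5)).IsMinor G)
    (h33 : ¬ (completeBipartiteGraph (Fin 3) (Fin 3)).IsMinor G) :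
    IsPlanar G :=
  Wagner.Good.isPlanar ⟨h5, h33⟩
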